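/- arXiv:2208.10699 — 3 statements merged into one kernel-verified Lean document; each statement's English description precedes it below -/
import Mathlib

section
/- Let F be a finite field with q = |F| elements and n ≥ 2. The number of transvections in GL_n(F) satisfies (q − 1) · |𝒯_{n,q}| = (qⁿ − 1)(q^{n−1} − 1); that is, |𝒯_{n,q}| = (qⁿ − 1)(q^{n−1} − 1)/(q − 1). -/
/-- The set of transvections: matrices of the form `I + v aᵀ` with `a, v` nonzero vectors
satisfying `aᵀ v = 0`. -/
def transvections (n : ℕ) (F : Type*) [Field F] : Set (Matrix (Fin n) (Fin n) F) :=
  {M | ∃ a v : Fin n → F, a ≠ 0 ∧ v ≠ 0 ∧ (∑ i, a i * v i) = 0 ∧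
    M = 1 + Matrix.vecMulVec v a}

theorem exists_unit_smul_eq_of_vecMulVec_eq {F m k : Type*} [Field F] {a b : k → F} {v w : m → F}
    (ha : a ≠ 0) (hv : v ≠ 0) (h : Matrix.vecMulVec v a = Matrix.vecMulVec w b) :
    ∃ c : Fˣ, c • b = a ∧ c⁻¹ • w = v := by
  have h' : ∀ i j, v i * a j = w i * b j := fun i j ↦ congrFun (congrFun h i) j
  obtain ⟨i, hi⟩ := Function.ne_iff.mp hv
  obtain ⟨j, hj⟩ := Function.ne_iff.mp ha
  simp only [Pi.zero_apply] at hi hj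
  have hij : w i * b j ≠ 0 := h' i j ▸ mul_ne_zero hi hj
  have hwi := left_ne_zero_of_mul hij
  have hbj := right_ne_zero_of_mul hij
  refine ⟨Units.mk0 (w i / v i) (div_ne_zero hwi hi), ?_, ?_⟩
  · ext l
    simp only [Pi.smul_apply, Units.smul_def, Units.val_mk0, smul_eq_mul]
    field_simp
    exact (h' i l).symm
  · ext l
    simp only [Pi.smul_apply, Units.smul_def, Units.val_inv_eq_inv_val, Units.val_mk0, smul_eq_mul]
    field_simp
    refine mul_right_cancel₀ hbj (mul_right_cancel₀ hj ?_)
    linear_combination (b j * w l) * h' i j - (w i * b j) * h' l j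

/-- The pairs of nonzero vectors `a`, `v` with `aᵀ v = 0`. -/
abbrev TransvectionPair (n : ℕ) (F : Type*) [Field F] : Type _ :=
  {p : (Fin n → F) × (Fin n → F) // p.1 ≠ 0 ∧ p.2 ≠ 0 ∧ p.1 ⬝ᵥ p.2 = 0}

theorem card_transvectionPair_eq_card_units_mul (F : Type*) [Field F] (n : ℕ) :
    Nat.card (TransvectionPair n F) = Nat.card Fˣ * Nat.card (transvections n F) := by
  rw [← Nat.card_prod]
  choose a v ha hv hav hM using fun M : transvections n F ↦ M.2
  let f : Fˣ × transvections n F → TransvectionPair n F := fun x ↦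
    ⟨(x.1 • a x.2, x.1⁻¹ • v x.2), (smul_ne_zero_iff_ne x.1).mpr (ha x.2),
      (smul_ne_zero_iff_ne x.1⁻¹).mpr (hv x.2), by
        rw [smul_dotProduct, dotProduct_smul, smul_inv_smul]
        exact hav x.2⟩
  have hf : ∀ x, (x.2 : Matrix (Fin n) (Fin n) F) =
      1 + Matrix.vecMulVec (f x).1.2 (f x).1.1 := by
    intro x
    rw [hM x.2]
    simp only [f, Matrix.vecMulVec_smul, Matrix.smul_vecMulVec, smul_inv_smul]
  refine (Nat.card_eq_of_bijective f ⟨?_, ?_⟩).symm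
  · rintro ⟨c, M⟩ ⟨d, N⟩ h
    obtain rfl : M = N := Subtype.ext <| (hf (c, M)).trans <| by rw [h]; exact (hf (d, N)).symm
    have h1 : c • a M = d • a M := congrArg (fun p ↦ p.1.1) h
    obtain ⟨j, hj⟩ := Function.ne_iff.mp (ha M)
    have h2 := congrFun h1 j
    simp only [Pi.smul_apply, Units.smul_def, smul_eq_mul] at h2
    rw [Units.ext (mul_right_cancel₀ hj h2)]
  · rintro ⟨⟨b, w⟩, hb, hw, hbw⟩
    let M : transvections n F := ⟨1 + Matrix.vecMulVec w b, b, w, hb, hw, hbw, rfl⟩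
    obtain ⟨c, hc, hc'⟩ := exists_unit_smul_eq_of_vecMulVec_eq hb hw (add_left_cancel (hM M))
    exact ⟨(c, M), Subtype.ext (Prod.ext hc hc')⟩

theorem card_ne_zero_and_dotProduct_eq_zero {F : Type*} [Field F] [Fintype F] {n : ℕ}
    {a : Fin n → F} (ha : a ≠ 0) :
    Nat.card {v : Fin n → F // v ≠ 0 ∧ a ⬝ᵥ v = 0} = Fintype.card F ^ (n - 1) - 1 := by
  classical
  let φ : Module.Dual F (Fin n → F) := dotProductEquiv F (Fin n) a
  have hφ : φ ≠ 0 := (dotProductEquiv F (Fin n)).map_ne_zero_iff.mpr ha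
  have hrank : Module.finrank F (LinearMap.ker φ) = n - 1 := by
    have := Module.Dual.finrank_ker_add_one_of_ne_zero hφ
    rw [Module.finrank_fin_fun] at this
    omega
  let e : {v : Fin n → F // v ≠ 0 ∧ a ⬝ᵥ v = 0} ≃ {v : LinearMap.ker φ // v ≠ 0} :=
    { toFun v := ⟨⟨v.1, v.2.2⟩, fun h ↦ v.2.1 (congrArg Subtype.val h)⟩
      invFun v := ⟨v.1.1, fun h ↦ v.2 (Subtype.ext h), v.1.2⟩
      left_inv _ := rfl
      right_inv _ := rfl }
  rw [Nat.card_congr e, Nat.card_eq_fintype_card, Fintype.card_subtype_compl,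
    Fintype.card_subtype_eq, Module.card_eq_pow_finrank (K := F), hrank]

theorem card_transvectionPair (F : Type*) [Field F] [Fintype F] (n : ℕ) :
    Nat.card (TransvectionPair n F) =
      (Fintype.card F ^ n - 1) * (Fintype.card F ^ (n - 1) - 1) := by
  classical
  let e : TransvectionPair n F ≃
      Σ a : {a : Fin n → F // a ≠ 0}, {v : Fin n → F // v ≠ 0 ∧ a.1 ⬝ᵥ v = 0} :=
    { toFun p := ⟨⟨p.1.1, p.2.1⟩, p.1.2, p.2.2⟩
      invFun s := ⟨(s.1.1, s.2.1), s.1.2, s.2.2⟩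
      left_inv _ := rfl
      right_inv _ := rfl }
  rw [Nat.card_congr e, Nat.card_sigma,
    Finset.sum_congr rfl fun a _ ↦ card_ne_zero_and_dotProduct_eq_zero a.2, Finset.sum_const,
    Finset.card_univ, Fintype.card_subtype_compl, Fintype.card_subtype_eq, Fintype.card_fun,
    Fintype.card_fin, smul_eq_mul]


/-- Let `F` be a finite field with `q` elements and `n ≥ 2`.  Then
`(q − 1) · |𝒯_{n,q}| = (qⁿ − 1)(q^{n−1} − 1)`, i.e.
`|𝒯_{n,q}| = (qⁿ − 1)(q^{n−1} − 1)/(q − 1)`. -/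
theorem card_transvections
    (F : Type*) [Field F] [Fintype F] (n : ℕ) (hn : 2 ≤ n) :
    (Fintype.card F - 1) * Nat.card (transvections n F)
      = (Fintype.card F ^ n - 1) * (Fintype.card F ^ (n - 1) - 1) := by
  classical
  rw [← card_transvectionPair, card_transvectionPair_eq_card_units_mul,
    Nat.card_eq_fintype_card (α := Fˣ), Fintype.card_units]
end

section
/- Let F be a finite field with q = |F| elements and n ≥ 2. (i) Let a, v ∈ Fⁿ be nonzero with aᵀv = 0, and suppose the index j of the last nonzero entry of v is strictly smaller than the index i of the first nonzero entry of a. Then the transvection I + v aᵀ is upper triangular with all diagonal entries equal to 1, so I + v aᵀ ∈ B. (ii) The number of transvections lying in B is |𝒯_{n,q} ∩ B| = (n − 1) q^{n−1} − [n−1]_q. -/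
/-- The Borel subgroup of `GL_n(F)`, viewed as the set of invertible upper-triangular
`n × n` matrices. -/
def borelSubgroup (n : ℕ) (F : Type*) [Field F] : Set (Matrix (Fin n) (Fin n) F) :=
  {M | M.BlockTriangular id ∧ IsUnit M.det}

section Transvections

open Matrix

variable {F : Type*} [Field F] {n : ℕ}

/-- The vector with entries `x` before position `j`, entry `1` at `j`, and zeros after `j`. -/
def leadVec (j : Fin n) (x : Set.Iio j → F) (k : Fin n) : F :=
  if h : k < j then x ⟨k, h⟩ else if k = j then 1 else 0

/-- The vector with entries `y` after position `j`, and zeros up to `j`. -/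
def tailVec (j : Fin n) (y : Set.Ioi j → F) (k : Fin n) : F :=
  if h : j < k then y ⟨k, h⟩ else 0

lemma leadVec_self (j : Fin n) (x : Set.Iio j → F) : leadVec j x j = 1 := by
  simp [leadVec]

lemma leadVec_of_gt {j k : Fin n} (x : Set.Iio j → F) (h : j < k) : leadVec j x k = 0 := by
  simp [leadVec, h.not_gt, h.ne']

lemma tailVec_of_le {j k : Fin n} (y : Set.Ioi j → F) (h : k ≤ j) : tailVec j y k = 0 := by
  simp [tailVec, h.not_gt]

lemma leadVec_injective (j : Fin n) : Function.Injective (leadVec (F := F) j) := by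
  intro x x' h
  ext ⟨k, hk⟩
  have hk' : k < j := hk
  simpa [leadVec, hk'] using congrFun h k

lemma tailVec_injective (j : Fin n) : Function.Injective (tailVec (F := F) j) := by
  intro y y' h
  ext ⟨k, hk⟩
  have hk' : j < k := hk
  simpa [tailVec, hk'] using congrFun h k

lemma tailVec_ne_zero {j : Fin n} {y : Set.Ioi j → F} (hy : y ≠ 0) : tailVec j y ≠ 0 := by
  intro h
  refine hy (tailVec_injective j (h.trans ?_))
  ext k
  simp [tailVec]

lemma exists_leadVec_eq {j : Fin n} {w : Fin n → F} (hj : w j = 1)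
    (hw : ∀ k, j < k → w k = 0) : ∃ x, leadVec j x = w := by
  refine ⟨fun k => w k, ?_⟩
  ext k
  rcases lt_trichotomy k j with h | rfl | h
  · simp [leadVec, h]
  · rw [leadVec_self, hj]
  · rw [leadVec_of_gt _ h, hw k h]

lemma exists_tailVec_eq {j : Fin n} {a : Fin n → F} (ha : a ≠ 0)
    (hz : ∀ k, k ≤ j → a k = 0) : ∃ y, y ≠ 0 ∧ tailVec j y = a := by
  have h : tailVec j (fun k => a k) = a := by
    ext k
    rcases le_or_gt k j with h | h
    · rw [tailVec_of_le _ h, hz k h]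
    · simp [tailVec, h]
  refine ⟨fun k => a k, ?_, h⟩
  intro h0
  apply ha
  rw [← h, h0]
  ext k
  simp [tailVec]

lemma vecMulVec_apply_eq_zero {a v : Fin n → F} {j k l : Fin n} (ha : ∀ k, k ≤ j → a k = 0)
    (hv : ∀ k, j < k → v k = 0) (h : l ≤ k) : vecMulVec v a k l = 0 := by
  rw [vecMulVec_apply]
  rcases le_or_gt l j with hl | hl
  · rw [ha l hl, mul_zero]
  · rw [hv k (hl.trans_le h), zero_mul]

lemma one_add_vecMulVec_unitriangular {a v : Fin n → F} {j : Fin n}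
    (ha : ∀ k, k ≤ j → a k = 0) (hv : ∀ k, j < k → v k = 0) :
    (1 + vecMulVec v a).BlockTriangular id ∧ (∀ k, (1 + vecMulVec v a) k k = 1) ∧
      (1 + vecMulVec v a) ∈ borelSubgroup n F := by
  have hT : (1 + vecMulVec v a).BlockTriangular id := by
    intro k l hkl
    have hkl' : l < k := hkl
    rw [Matrix.add_apply, vecMulVec_apply_eq_zero ha hv hkl'.le, Matrix.one_apply_ne hkl'.ne',
      add_zero]
  have hd : ∀ k, (1 + vecMulVec v a) k k = 1 := by
    intro k
    rw [Matrix.add_apply, vecMulVec_apply_eq_zero ha hv le_rfl, Matrix.one_apply_eq, add_zero]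
  refine ⟨hT, hd, hT, ?_⟩
  rw [Matrix.det_of_isUpperTriangular hT]
  simp only [hd, Finset.prod_const_one, isUnit_one]

lemma sum_mul_eq_zero_of_support {a v : Fin n → F} {j : Fin n}
    (ha : ∀ k, k ≤ j → a k = 0) (hv : ∀ k, j < k → v k = 0) : ∑ k, a k * v k = 0 := by
  refine Finset.sum_eq_zero fun k _ => ?_
  rcases le_or_gt k j with h | h
  · rw [ha k h, zero_mul]
  · rw [hv k h, mul_zero]

lemma exists_last_ne_zero {v : Fin n → F} (hv : v ≠ 0) :
    ∃ j, v j ≠ 0 ∧ ∀ k, j < k → v k = 0 := by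
  classical
  obtain ⟨i, hi⟩ := Function.ne_iff.mp hv
  obtain ⟨j, hj, hmax⟩ := (Finset.univ.filter fun k => v k ≠ 0).exists_max_image id
    ⟨i, by simpa using hi⟩
  refine ⟨j, by simpa using hj, fun k hk => ?_⟩
  by_contra hne
  exact (hmax k (by simpa using hne)).not_gt hk

/-- If `1 + v aᵀ` is an upper triangular transvection, then `a` vanishes up to the position of the
last nonzero entry of `v`. -/
lemma eq_zero_of_le_of_blockTriangular {a v : Fin n → F} {j : Fin n}
    (hav : ∑ k, a k * v k = 0) (hT : (1 + vecMulVec v a).BlockTriangular id)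
    (hj : v j ≠ 0) (hv : ∀ k, j < k → v k = 0) (k : Fin n) (hk : k ≤ j) : a k = 0 := by
  have hlt : ∀ k, k < j → a k = 0 := by
    intro k hk
    have h : (1 + vecMulVec v a) j k = 0 := hT hk
    rw [Matrix.add_apply, Matrix.one_apply_ne hk.ne', zero_add, vecMulVec_apply] at h
    exact (mul_eq_zero.mp h).resolve_left hj
  rcases hk.lt_or_eq with h | rfl
  · exact hlt k h
  · rw [Finset.sum_eq_single k] at hav
    · exact (mul_eq_zero.mp hav).resolve_right hj
    · intro l _ hl
      rcases lt_or_gt_of_ne hl with h | h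
      · rw [hlt l h, zero_mul]
      · rw [hv l h, mul_zero]
    · simp

/-- Upper triangular transvections are parametrized by the position `j` of the last nonzero entry
of `v`, normalized to `1`, the entries of `v` before `j`, and the entries of `a` after `j`. -/
def transvectionOfData
    (p : Σ j : Fin n, (Set.Iio j → F) × {y : Set.Ioi j → F // y ≠ 0}) :
    ↥(transvections n F ∩ borelSubgroup n F) :=
  ⟨1 + vecMulVec (leadVec p.1 p.2.1) (tailVec p.1 p.2.2.1),
    ⟨tailVec p.1 p.2.2.1, leadVec p.1 p.2.1, tailVec_ne_zero p.2.2.2,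
      fun h => one_ne_zero ((leadVec_self p.1 p.2.1).symm.trans (congrFun h p.1)),
      sum_mul_eq_zero_of_support (fun _ => tailVec_of_le _) (fun _ => leadVec_of_gt _), rfl⟩,
    (one_add_vecMulVec_unitriangular (fun _ => tailVec_of_le _)
      (fun _ => leadVec_of_gt _)).2.2⟩

lemma le_of_vecMulVec_leadVec_eq {j j' : Fin n} {x : Set.Iio j → F} {x' : Set.Iio j' → F}
    {a a' : Fin n → F} (ha' : a' ≠ 0)
    (h : vecMulVec (leadVec j x) a = vecMulVec (leadVec j' x') a') : j' ≤ j := by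
  by_contra! hlt
  apply ha'
  ext l
  have := congrFun (congrFun h j') l
  rw [vecMulVec_apply, vecMulVec_apply, leadVec_of_gt x hlt, leadVec_self, zero_mul,
    one_mul] at this
  exact this.symm

lemma transvectionOfData_bijective :
    Function.Bijective (transvectionOfData (F := F) (n := n)) := by
  constructor
  · rintro ⟨j, x, y, hy⟩ ⟨j', x', y', hy'⟩ h
    have h : vecMulVec (leadVec j x) (tailVec j y) = vecMulVec (leadVec j' x') (tailVec j' y') :=
      add_left_cancel (congrArg Subtype.val h)
    obtain rfl : j = j' := le_antisymm
      (le_of_vecMulVec_leadVec_eq (tailVec_ne_zero hy) h.symm)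
      (le_of_vecMulVec_leadVec_eq (tailVec_ne_zero hy') h)
    obtain rfl : y = y' := by
      apply tailVec_injective j
      ext l
      have := congrFun (congrFun h j) l
      rwa [vecMulVec_apply, vecMulVec_apply, leadVec_self, leadVec_self, one_mul,
        one_mul] at this
    obtain rfl : x = x' := by
      apply leadVec_injective j
      obtain ⟨l, hl⟩ := Function.ne_iff.mp (tailVec_ne_zero hy)
      ext k
      exact mul_right_cancel₀ hl (congrFun (congrFun h k) l)
    rfl
  · rintro ⟨_, ⟨a, v, ha, hv, hav, rfl⟩, hT, hdet⟩
    obtain ⟨j, hj, hlast⟩ := exists_last_ne_zero hv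
    have hz := eq_zero_of_le_of_blockTriangular hav hT hj hlast
    obtain ⟨x, hx⟩ := exists_leadVec_eq (j := j) (w := (v j)⁻¹ • v) (by simp [hj])
      (fun k hk => by simp [hlast k hk])
    obtain ⟨y, hy, hya⟩ := exists_tailVec_eq (j := j) (a := v j • a) (smul_ne_zero hj ha)
      (fun k hk => by simp [hz k hk])
    refine ⟨⟨j, x, y, hy⟩, Subtype.ext ?_⟩
    simp only [transvectionOfData, hx, hya]
    congr 1
    ext k l
    simp only [vecMulVec_apply, Pi.smul_apply, smul_eq_mul]
    field_simp

lemma natCard_ne_zero_subtype {ι : Type*} [Fintype ι] [Fintype F] :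
    (Nat.card {y : ι → F // y ≠ 0} : ℤ) = (Fintype.card F : ℤ) ^ Fintype.card ι - 1 := by
  classical
  rw [Nat.card_eq_fintype_card, Fintype.card_subtype_compl, Fintype.card_subtype_eq,
    Fintype.card_fun, Nat.cast_sub (Nat.one_le_pow _ _ Fintype.card_pos)]
  push_cast
  rfl

lemma natCard_transvections_inter_borelSubgroup [Fintype F] :
    (Nat.card ↥(transvections n F ∩ borelSubgroup n F) : ℤ)
      = ∑ j : Fin n, (Fintype.card F : ℤ) ^ (j : ℕ) *
          ((Fintype.card F : ℤ) ^ (n - 1 - j) - 1) := by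
  rw [← Nat.card_eq_of_bijective _ transvectionOfData_bijective, Nat.card_sigma, Nat.cast_sum]
  refine Finset.sum_congr rfl fun j _ => ?_
  rw [Nat.card_prod, Nat.cast_mul, natCard_ne_zero_subtype]
  simp

end Transvections

/-- Let `F` be a finite field with `q` elements and `n ≥ 2`.
(i) If `a, v` are nonzero with `aᵀv = 0` and the index `j` of the last nonzero entry of `v`
is strictly smaller than the index `i` of the first nonzero entry of `a`, then `I + v aᵀ`
is upper triangular with all diagonal entries `1`, so it lies in the Borel subgroup `B`.
(ii) The number of transvections lying in `B` is `(n − 1) q^{n−1} − [n−1]_q`. -/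
theorem transvections_in_borel
    (F : Type*) [Field F] [Fintype F] (n : ℕ) (hn : 2 ≤ n) :
    (∀ a v : Fin n → F, ∀ i j : Fin n, (∑ k, a k * v k) = 0 →
      a i ≠ 0 → (∀ k, k < i → a k = 0) → v j ≠ 0 → (∀ k, j < k → v k = 0) → j < i →
      ((1 + Matrix.vecMulVec v a).BlockTriangular id ∧
        (∀ k, (1 + Matrix.vecMulVec v a) k k = 1) ∧
        (1 + Matrix.vecMulVec v a) ∈ borelSubgroup n F)) ∧
    (Nat.card ↥(transvections n F ∩ borelSubgroup n F) : ℤ)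
      = ((n : ℤ) - 1) * (Fintype.card F : ℤ) ^ (n - 1)
        - ∑ k ∈ Finset.range (n - 1), (Fintype.card F : ℤ) ^ k := by
  refine ⟨fun a v i j _ _ ha _ hv hji =>
    one_add_vecMulVec_unitriangular (fun k hk => ha k (hk.trans_lt hji)) hv, ?_⟩
  obtain ⟨m, rfl⟩ : ∃ m, n = m + 1 := ⟨n - 1, by omega⟩
  rw [natCard_transvections_inter_borelSubgroup,
    Fin.sum_univ_eq_sum_range (fun j => (Fintype.card F : ℤ) ^ j *
      ((Fintype.card F : ℤ) ^ (m + 1 - 1 - j) - 1)),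
    Finset.sum_congr rfl (g := fun j => (Fintype.card F : ℤ) ^ m - (Fintype.card F : ℤ) ^ j)]
  · rw [Finset.sum_sub_distrib, Finset.sum_const, Finset.card_range, Finset.sum_range_succ]
    simp only [nsmul_eq_mul, Nat.add_sub_cancel]
    push_cast
    ring
  · intro j hj
    rw [mul_sub, mul_one, ← pow_add, Nat.add_sub_cancel,
      Nat.add_sub_cancel' (Finset.mem_range_succ_iff.mp hj)]
end

section
/- Let F be a finite field with q = |F| elements, n ≥ 2, and suppose log(q) > 6/n. For any c > 0 and any integer ℓ ≥ (log(n) + c)/(log(q) − 6/n), the lumped transvection chain P on S_n satisfies ∑_{x ∈ S_n} π_q(x) · χ²_x(ℓ) ≤ (e^{e^{−c}} − 1) + e^{−2c}. -/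
/-- The Bruhat double coset `B ω B` associated to the permutation `ω ∈ S_n`. -/
def bruhatCell (n : ℕ) (F : Type*) [Field F] (ω : Equiv.Perm (Fin n)) :
    Set (Matrix (Fin n) (Fin n) F) :=
  {M | ∃ b₁ ∈ borelSubgroup n F, ∃ b₂ ∈ borelSubgroup n F, M = b₁ * ω.permMatrix F * b₂}

/-- `I(ω)`: the number of inversions of the permutation `ω ∈ S_n`. -/
def inversions (n : ℕ) (ω : Equiv.Perm (Fin n)) : ℕ :=
  (Finset.univ.filter fun p : Fin n × Fin n => p.1 < p.2 ∧ ω p.2 < ω p.1).card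

/-- `[n]_q! = [1]_q [2]_q ⋯ [n]_q` where `[m]_q = 1 + q + ⋯ + q^{m−1}`. -/
def qFactorial (q n : ℕ) : ℕ :=
  ∏ k ∈ Finset.range n, ∑ i ∈ Finset.range (k + 1), q ^ i

/-- The Mallows measure `π_q(σ) = q^{I(σ)}/[n]_q!` on `S_n`. -/
noncomputable def mallows (q n : ℕ) (σ : Equiv.Perm (Fin n)) : ℝ :=
  (q : ℝ) ^ inversions n σ / (qFactorial q n : ℝ)

/-- The transition matrix of the lumped transvection chain on `S_n`:
`P(σ, τ) = |{T ∈ 𝒯 : Tσ ∈ BτB}| / |𝒯|`. -/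
noncomputable def transChain (n : ℕ) (F : Type*) [Field F] [Fintype F] :
    Matrix (Equiv.Perm (Fin n)) (Equiv.Perm (Fin n)) ℝ :=
  Matrix.of fun σ τ =>
    (Nat.card {T | T ∈ transvections n F ∧ T * σ.permMatrix F ∈ bruhatCell n F τ} : ℝ)
      / (Nat.card (transvections n F) : ℝ)

/-- The chi-square distance to stationarity after `ℓ` steps, started from `x ∈ S_n`:
`χ²_x(ℓ) = ∑_τ (P^ℓ(x,τ) − π_q(τ))² / π_q(τ)`. -/
noncomputable def chiSq (n : ℕ) (F : Type*) [Field F] [Fintype F] (ℓ : ℕ)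
    (x : Equiv.Perm (Fin n)) : ℝ :=
  ∑ τ : Equiv.Perm (Fin n),
    ((transChain n F ^ ℓ) x τ - mallows (Fintype.card F) n τ) ^ 2
      / mallows (Fintype.card F) n τ

namespace TransvectionChain

section JucysMurphy

variable {A : Type*} [Ring A] [Algebra ℝ A]

/-- The (multiplicative) Jucys–Murphy elements `L₀ = 1`, `L_{k+1} = c • T_k L_k T_k`. -/
def jucysMurphy (T : ℕ → A) (c : ℝ) : ℕ → A
  | 0 => 1
  | k + 1 => c • (T k * jucysMurphy T c k * T k)

variable {T : ℕ → A} {c : ℝ}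

theorem commute_jucysMurphy_of_lt (hfar : ∀ i j, i + 1 < j → Commute (T i) (T j)) {i j : ℕ}
    (h : i < j) : Commute (T j) (jucysMurphy T c i) := by
  induction i with
  | zero => exact Commute.one_right _
  | succ i ih =>
    have h1 := (hfar i j h).symm
    exact ((h1.mul_right (ih (by omega))).mul_right h1).smul_right c

theorem commute_jucysMurphy_of_gt (hfar : ∀ i j, i + 1 < j → Commute (T i) (T j))
    (hbraid : ∀ i, T i * T (i + 1) * T i = T (i + 1) * T i * T (i + 1)) {i j : ℕ}
    (h : i + 1 < j) : Commute (T i) (jucysMurphy T c j) := by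
  induction j with
  | zero => omega
  | succ j ih =>
    rcases Nat.lt_or_ge (i + 1) j with h1 | h1
    · have h2 := hfar i j h1
      exact ((h2.mul_right (ih h1)).mul_right h2).smul_right c
    · obtain rfl : j = i + 1 := by omega
      refine Commute.smul_right ?_ c
      have hc : Commute (T (i + 1)) (jucysMurphy T c i) := commute_jucysMurphy_of_lt hfar (by omega)
      have hb := hbraid i
      simp only [jucysMurphy, mul_smul_comm, smul_mul_assoc]
      refine Commute.smul_right ?_ c
      generalize jucysMurphy T c i = L at hc
      generalize T i = x at *
      generalize T (i + 1) = y at *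
      have hc' : y * L = L * y := hc
      change x * (y * (x * L * x) * y) = y * (x * L * x) * y * x
      calc x * (y * (x * L * x) * y) = (x * y * x) * L * x * y := by noncomm_ring
        _ = y * x * (y * L) * x * y := by rw [hb]; noncomm_ring
        _ = y * x * L * (y * x * y) := by rw [hc']; noncomm_ring
        _ = y * (x * L * x) * y * x := by rw [← hb]; noncomm_ring

theorem commute_jucysMurphy_jucysMurphy (hfar : ∀ i j, i + 1 < j → Commute (T i) (T j))
    (hbraid : ∀ i, T i * T (i + 1) * T i = T (i + 1) * T i * T (i + 1)) (i j : ℕ) :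
    Commute (jucysMurphy T c i) (jucysMurphy T c j) := by
  have key : ∀ i j, i < j → Commute (jucysMurphy T c i) (jucysMurphy T c j) := by
    intro i j
    induction i with
    | zero => intro _; exact Commute.one_left _
    | succ i ih =>
      intro h
      have h1 : Commute (T i) (jucysMurphy T c j) := commute_jucysMurphy_of_gt hfar hbraid h
      exact ((h1.mul_left (ih (by omega))).mul_left h1).smul_left c
  rcases lt_trichotomy i j with h | rfl | h
  · exact key i j h
  · exact Commute.refl _
  · exact (key j i h).symm

end JucysMurphy

section LocalAnalysis

variable {E : Type*} [NormedAddCommGroup E] [InnerProductSpace ℝ E]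
  {T L L' : Module.End ℝ E} {q a b : ℝ} {v : E}

theorem hecke_injective (hq : q ≠ 0) (hT : T * T = (q - 1) • T + q • 1) : Function.Injective T := by
  rw [injective_iff_map_eq_zero]
  intro v hv
  have h := congrArg (fun S : Module.End ℝ E => S v) hT
  simpa [hv, hq] using h.symm

theorem hecke_apply_apply (hT : T * T = (q - 1) • T + q • 1) (v : E) :
    T (T v) = (q - 1) • T v + q • v := by
  simpa using congrArg (fun S : Module.End ℝ E => S v) hT

theorem next_apply_hecke (hq : q ≠ 0) (hT : T * T = (q - 1) • T + q • 1)
    (hL : L' = q⁻¹ • (T * L * T)) (ha : L v = a • v) (hb : L' v = b • v) :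
    L' (T v) = a • T v + ((q - 1) * b) • v := by
  have h : L' (T v) = (q - 1) • L' v + T (L v) := by
    simp only [hL, LinearMap.smul_apply, Module.End.mul_apply, hecke_apply_apply hT v, map_add,
      map_smul]
    match_scalars <;> field_simp
  rw [h, ha, hb, map_smul]
  module

theorem prev_apply_hecke (hq : q ≠ 0) (hT : T * T = (q - 1) • T + q • 1)
    (hL : L' = q⁻¹ • (T * L * T)) (hb : L' v = b • v) :
    L (T v) = b • T v - ((q - 1) * b) • v := by
  have h : T (L' v) = (q - 1) • L' v + L (T v) := by
    simp only [hL, LinearMap.smul_apply, Module.End.mul_apply, map_smul, hecke_apply_apply hT]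
    match_scalars <;> field_simp
  rw [hb, map_smul] at h
  rw [eq_sub_iff_add_eq, h]
  module

theorem eigenvalue_ne_of_symmetric (hq : 1 < q) (hT : T * T = (q - 1) • T + q • 1)
    (hL : L' = q⁻¹ • (T * L * T)) (hs : L'.IsSymmetric) (ha0 : a ≠ 0) (hv : v ≠ 0)
    (ha : L v = a • v) (hb : L' v = b • v) : a ≠ b := by
  rintro rfl
  have h1 := next_apply_hecke (by linarith) hT hL ha hb
  have h2 := hs (T v) v
  rw [h1, hb, inner_add_left, inner_smul_left, inner_smul_left, inner_smul_right] at h2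
  have h3 : ((q - 1) * a) * inner ℝ v v = 0 := by simpa using h2
  have h4 : inner ℝ v v ≠ 0 := inner_self_ne_zero.mpr hv
  have : q - 1 ≠ 0 := by linarith
  simp_all

theorem intertwiner_prev (hq : q ≠ 0) (hT : T * T = (q - 1) • T + q • 1)
    (hL : L' = q⁻¹ • (T * L * T)) (hab : a ≠ b) (ha : L v = a • v) (hb : L' v = b • v) :
    L (T v - ((q - 1) * b / (b - a)) • v) = b • (T v - ((q - 1) * b / (b - a)) • v) := by
  have : b - a ≠ 0 := sub_ne_zero.mpr hab.symm
  rw [map_sub, map_smul, ha, prev_apply_hecke hq hT hL hb]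
  match_scalars
  · rfl
  · field_simp
    ring

theorem intertwiner_next (hq : q ≠ 0) (hT : T * T = (q - 1) • T + q • 1)
    (hL : L' = q⁻¹ • (T * L * T)) (hab : a ≠ b) (ha : L v = a • v) (hb : L' v = b • v) :
    L' (T v - ((q - 1) * b / (b - a)) • v) = a • (T v - ((q - 1) * b / (b - a)) • v) := by
  have : b - a ≠ 0 := sub_ne_zero.mpr hab.symm
  rw [map_sub, map_smul, hb, next_apply_hecke hq hT hL ha hb]
  match_scalars
  · rfl
  · field_simp
    ring

theorem eq_or_eq_of_hecke_eigenvector (hT : T * T = (q - 1) • T + q • 1)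
    (hab : a ≠ b) (hv : v ≠ 0) (h : T v = ((q - 1) * b / (b - a)) • v) :
    b = q * a ∨ a = q * b := by
  have hba : b - a ≠ 0 := sub_ne_zero.mpr hab.symm
  have h1 := hecke_apply_apply hT v
  rw [h, map_smul, h, smul_smul, smul_smul, ← add_smul] at h1
  have h2 := smul_left_injective ℝ hv h1
  field_simp at h2
  have h3 : (b - q * a) * (a - q * b) = 0 := by linarith
  rcases mul_eq_zero.mp h3 with h | h
  · left; linarith
  · right; linarith

theorem hecke_apply_of_adjacent (hq : q ≠ 0) (hT : T * T = (q - 1) • T + q • 1)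
    (hL : L' = q⁻¹ • (T * L * T)) (hTs : T.IsSymmetric) (hLs : L.IsSymmetric) (hab : a ≠ b)
    (ha : L v = a • v) (hb : L' v = b • v) {κ : ℝ} (hκ : κ = (q - 1) * b / (b - a))
    (hκ2 : κ * κ = (q - 1) * κ + q) : T v = κ • v := by
  have h1 := intertwiner_prev hq hT hL hab ha hb
  rw [← hκ] at h1
  set θ := T v - κ • v with hθ
  have hTv : T v = θ + κ • v := by rw [hθ]; abel
  have horth : inner ℝ v θ = 0 := by
    have h2 := hLs v θ
    rw [ha, h1, inner_smul_left, inner_smul_right] at h2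
    have h3 : (a - b) * inner ℝ v θ = 0 := by
      simp only [conj_trivial] at h2; linarith
    exact (mul_eq_zero.mp h3).resolve_left (sub_ne_zero.mpr hab)
  have hTθ : T θ = (q - 1 - κ) • θ := by
    have h5 : T θ = (q - 1 - κ) • T v + q • v := by
      rw [hθ, map_sub, map_smul, hecke_apply_apply hT]; module
    rw [h5, hTv, smul_add, smul_smul, add_assoc, ← add_smul]
    have : (q - 1 - κ) * κ + q = 0 := by linarith
    rw [this, zero_smul, add_zero]
  have h6 : inner ℝ θ θ = 0 := by
    calc inner ℝ θ θ = inner ℝ (T v) θ - κ * inner ℝ v θ := by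
          rw [hTv, inner_add_left, inner_smul_left]; simp
      _ = inner ℝ v (T θ) := by rw [hTs v θ, horth]; ring
      _ = 0 := by rw [hTθ, inner_smul_right, horth, mul_zero]
  rw [inner_self_eq_zero] at h6
  rw [hTv, h6, zero_add]

end LocalAnalysis

section HeckeOperators

open Equiv

variable {n : ℕ}

/-- The symmetrized Hecke operator attached to the transposition of positions `i`, `j`. -/
noncomputable def heckeOp (s : ℝ) (i j : Fin n) :
    Module.End ℝ (EuclideanSpace ℝ (Perm (Fin n))) where
  toFun f := WithLp.toLp 2 fun p =>
    s * f (p * swap i j) + if p j < p i then (s ^ 2 - 1) * f p else 0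
  map_add' f g := by
    ext p
    simp only [PiLp.add_apply]
    split_ifs <;> ring
  map_smul' r f := by
    ext p
    simp only [PiLp.smul_apply, smul_eq_mul, RingHom.id_apply]
    split_ifs <;> ring

theorem heckeOp_apply (s : ℝ) (i j : Fin n) (f : EuclideanSpace ℝ (Perm (Fin n)))
    (p : Perm (Fin n)) : heckeOp s i j f p =
      s * f (p * swap i j) + if p j < p i then (s ^ 2 - 1) * f p else 0 := rfl

theorem heckeOp_mul_self (s : ℝ) {i j : Fin n} (hij : i ≠ j) :
    heckeOp s i j * heckeOp s i j = (s ^ 2 - 1) • heckeOp s i j + (s ^ 2) • 1 := by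
  ext f p
  have hp : p i ≠ p j := fun h => hij (p.injective h)
  simp only [Module.End.mul_apply, heckeOp_apply, LinearMap.add_apply, LinearMap.smul_apply,
    Module.End.one_apply, PiLp.add_apply, PiLp.smul_apply, smul_eq_mul, mul_assoc, swap_mul_self,
    mul_one, Perm.mul_apply, swap_apply_left, swap_apply_right]
  rcases lt_or_gt_of_ne hp with h | h
  · simp only [h, h.not_gt, if_true, if_false]; ring
  · simp only [h, h.not_gt, if_true, if_false]; ring

theorem heckeOp_commute (s : ℝ) {i j k l : Fin n} (hik : i ≠ k) (hil : i ≠ l) (hjk : j ≠ k)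
    (hjl : j ≠ l) : Commute (heckeOp s i j) (heckeOp s k l) := by
  ext f p
  have hc : swap i j * swap k l = swap k l * swap i j := by
    refine (Perm.Disjoint.commute ?_).eq
    intro x
    simp only [swap_apply_def]
    by_cases h1 : x = i <;> by_cases h2 : x = j <;> simp_all
  simp only [Module.End.mul_apply, heckeOp_apply, mul_assoc, hc, Perm.mul_apply,
    swap_apply_of_ne_of_ne hik hil, swap_apply_of_ne_of_ne hjk hjl,
    swap_apply_of_ne_of_ne hik.symm hjk.symm, swap_apply_of_ne_of_ne hil.symm hjl.symm]
  split_ifs <;> ring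

theorem heckeOp_braid (s : ℝ) {i j k : Fin n} (hij : i ≠ j) (hjk : j ≠ k) (hik : i ≠ k) :
    heckeOp s i j * heckeOp s j k * heckeOp s i j =
      heckeOp s j k * heckeOp s i j * heckeOp s j k := by
  ext f p
  have hc : swap i j * (swap j k * swap i j) = swap j k * (swap i j * swap j k) := by
    have h := swap_mul_swap_mul_swap hjk.symm hik.symm
    rw [swap_comm j i, swap_comm k j] at h
    rw [← mul_assoc, ← mul_assoc, h, swap_mul_swap_mul_swap hij hik, swap_comm]
  have h1 : p i ≠ p j := fun h => hij (p.injective h)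
  have h2 : p j ≠ p k := fun h => hjk (p.injective h)
  have h3 : p i ≠ p k := fun h => hik (p.injective h)
  simp only [Module.End.mul_apply, heckeOp_apply, mul_assoc, hc, Perm.mul_apply,
    swap_apply_left, swap_apply_right, swap_mul_self, mul_one,
    swap_apply_of_ne_of_ne hij hik, swap_apply_of_ne_of_ne hik.symm hjk.symm]
  rcases lt_or_gt_of_ne h1 with a | a <;> rcases lt_or_gt_of_ne h2 with b | b <;>
    rcases lt_or_gt_of_ne h3 with c | c <;>
    first
    | (exfalso; order)
    | (simp only [a, b, c, a.not_gt, b.not_gt, c.not_gt, if_true, if_false] <;> ring)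

theorem heckeOp_isSymmetric (s : ℝ) (i j : Fin n) : (heckeOp s i j).IsSymmetric := by
  intro f g
  simp only [PiLp.inner_apply, heckeOp_apply, RCLike.inner_apply, conj_trivial, mul_add, add_mul,
    Finset.sum_add_distrib]
  congr 1
  · refine Fintype.sum_equiv (Equiv.mulRight (swap i j)) _ _ fun p => ?_
    simp only [coe_mulRight, mul_assoc, swap_mul_self, mul_one]
    ring
  · refine Finset.sum_congr rfl fun p _ => ?_
    split_ifs <;> ring

/-- The symmetrized Hecke generator `T_k`, set to zero when out of range. -/
noncomputable def heckeGen (n : ℕ) (s : ℝ) (k : ℕ) :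
    Module.End ℝ (EuclideanSpace ℝ (Perm (Fin n))) :=
  if h : k + 1 < n then heckeOp s ⟨k, by omega⟩ ⟨k + 1, h⟩ else 0

theorem heckeGen_of_lt (s : ℝ) {k : ℕ} (h : k + 1 < n) :
    heckeGen n s k = heckeOp s ⟨k, by omega⟩ ⟨k + 1, h⟩ := dif_pos h

theorem heckeGen_mul_self (s : ℝ) {k : ℕ} (h : k + 1 < n) :
    heckeGen n s k * heckeGen n s k = (s ^ 2 - 1) • heckeGen n s k + (s ^ 2) • 1 := by
  rw [heckeGen_of_lt s h]
  exact heckeOp_mul_self s (by simp)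

theorem heckeGen_commute (s : ℝ) (i j : ℕ) (h : i + 1 < j) :
    Commute (heckeGen n s i) (heckeGen n s j) := by
  unfold heckeGen
  split_ifs
  · apply heckeOp_commute <;> simp only [ne_eq, Fin.mk.injEq] <;> omega
  all_goals simp

theorem heckeGen_braid (s : ℝ) (i : ℕ) :
    heckeGen n s i * heckeGen n s (i + 1) * heckeGen n s i =
      heckeGen n s (i + 1) * heckeGen n s i * heckeGen n s (i + 1) := by
  by_cases h : i + 1 + 1 < n
  · rw [heckeGen_of_lt s h, heckeGen_of_lt s (by omega)]
    apply heckeOp_braid <;> simp only [ne_eq, Fin.mk.injEq] <;> omega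
  · simp [heckeGen, h]

theorem heckeGen_isSymmetric (s : ℝ) (k : ℕ) : (heckeGen n s k).IsSymmetric := by
  unfold heckeGen
  split_ifs
  · exact heckeOp_isSymmetric _ _ _
  · exact LinearMap.IsSymmetric.zero

/-- The Jucys–Murphy operators on functions on permutations. -/
noncomputable def jmOp (n : ℕ) (s : ℝ) (k : ℕ) :
    Module.End ℝ (EuclideanSpace ℝ (Perm (Fin n))) :=
  jucysMurphy (heckeGen n s) (s ^ 2)⁻¹ k

theorem jmOp_succ (s : ℝ) (k : ℕ) :
    jmOp n s (k + 1) = (s ^ 2)⁻¹ • (heckeGen n s k * jmOp n s k * heckeGen n s k) := rfl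

theorem jmOp_isSymmetric (s : ℝ) (k : ℕ) : (jmOp n s k).IsSymmetric := by
  induction k with
  | zero => exact LinearMap.IsSymmetric.one
  | succ k ih =>
    intro f g
    have hT := heckeGen_isSymmetric (n := n) s k
    simp only [jmOp_succ, LinearMap.smul_apply, Module.End.mul_apply, inner_smul_left,
      inner_smul_right, hT _ _, ih _ _, conj_trivial]

theorem jmOp_injective {s : ℝ} (hs : s ≠ 0) {k : ℕ} (hk : k < n) :
    Function.Injective (jmOp n s k) := by
  induction k with
  | zero => exact Function.injective_id
  | succ k ih =>
    have hT := hecke_injective (pow_ne_zero 2 hs) (heckeGen_mul_self s hk)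
    intro f g h
    simp only [jmOp_succ, LinearMap.smul_apply, Module.End.mul_apply] at h
    exact hT (ih (by omega) (hT (smul_right_injective _ (inv_ne_zero (pow_ne_zero 2 hs)) h)))

theorem jmOp_commute (s : ℝ) (i j : ℕ) : Commute (jmOp n s i) (jmOp n s j) :=
  commute_jucysMurphy_jucysMurphy (heckeGen_commute s) (heckeGen_braid s) i j

theorem heckeGen_commute_jmOp (s : ℝ) {i j : ℕ} (h1 : j ≠ i) (h2 : j ≠ i + 1) :
    Commute (heckeGen n s i) (jmOp n s j) := by
  rcases Nat.lt_or_ge j i with h | h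
  · exact commute_jucysMurphy_of_lt (heckeGen_commute s) h
  · exact commute_jucysMurphy_of_gt (heckeGen_commute s) (heckeGen_braid s) (by omega)

end HeckeOperators

section JointEigenspaces

open Equiv

variable {n : ℕ} {s : ℝ} {w : Fin n → ℝ}

/-- The simultaneous eigenspace of the Jucys–Murphy operators with eigenvalues `w`. -/
noncomputable def jmSpace (n : ℕ) (s : ℝ) (w : Fin n → ℝ) :
    Submodule ℝ (EuclideanSpace ℝ (Perm (Fin n))) :=
  ⨅ k : Fin n, Module.End.eigenspace (jmOp n s k) (w k)

theorem mem_jmSpace {v : EuclideanSpace ℝ (Perm (Fin n))} :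
    v ∈ jmSpace n s w ↔ ∀ k : Fin n, jmOp n s k v = w k • v := by
  simp [jmSpace, Submodule.mem_iInf]

theorem jmSpace_apply_zero (h : jmSpace n s w ≠ ⊥) (h0 : 0 < n) : w ⟨0, h0⟩ = 1 := by
  obtain ⟨v, hv, hv0⟩ := Submodule.exists_mem_ne_zero_of_ne_bot h
  have h1 := mem_jmSpace.mp hv ⟨0, h0⟩
  have h2 : (1 : ℝ) • v = w ⟨0, h0⟩ • v := by rw [one_smul]; exact h1
  exact (smul_left_injective ℝ hv0 h2).symm

theorem jmSpace_apply_ne_zero (hs : s ≠ 0) (h : jmSpace n s w ≠ ⊥) (k : Fin n) : w k ≠ 0 := by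
  obtain ⟨v, hv, hv0⟩ := Submodule.exists_mem_ne_zero_of_ne_bot h
  intro hk
  have h1 := mem_jmSpace.mp hv k
  rw [hk, zero_smul] at h1
  exact hv0 (jmOp_injective hs k.2 (h1.trans (map_zero _).symm))

theorem jmSpace_apply_ne_next (hs : 1 < s) (h : jmSpace n s w ≠ ⊥) {i : ℕ} (hi : i + 1 < n) :
    w ⟨i, by omega⟩ ≠ w ⟨i + 1, hi⟩ := by
  obtain ⟨v, hv, hv0⟩ := Submodule.exists_mem_ne_zero_of_ne_bot h
  exact eigenvalue_ne_of_symmetric (by nlinarith) (heckeGen_mul_self s hi) (jmOp_succ s i)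
    (jmOp_isSymmetric s _) (jmSpace_apply_ne_zero (by linarith) h _) hv0
    (mem_jmSpace.mp hv ⟨i, by omega⟩) (mem_jmSpace.mp hv ⟨i + 1, hi⟩)

theorem intertwiner_mem_jmSpace (hs : s ≠ 0) {i : ℕ} (hi : i + 1 < n)
    (hw : w ⟨i, by omega⟩ ≠ w ⟨i + 1, hi⟩) {v : EuclideanSpace ℝ (Perm (Fin n))}
    (hv : v ∈ jmSpace n s w) :
    heckeGen n s i v - ((s ^ 2 - 1) * w ⟨i + 1, hi⟩ / (w ⟨i + 1, hi⟩ - w ⟨i, by omega⟩)) • v ∈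
      jmSpace n s (w ∘ swap ⟨i, by omega⟩ ⟨i + 1, hi⟩) := by
  rw [mem_jmSpace] at hv ⊢
  have hq := pow_ne_zero 2 hs
  intro k
  rw [Function.comp_apply]
  by_cases h1 : k = ⟨i, by omega⟩
  · subst h1
    rw [swap_apply_left]
    exact intertwiner_prev hq (heckeGen_mul_self s hi) (jmOp_succ s i) hw (hv ⟨i, by omega⟩)
      (hv ⟨i + 1, hi⟩)
  by_cases h2 : k = ⟨i + 1, hi⟩
  · subst h2
    rw [swap_apply_right]
    exact intertwiner_next hq (heckeGen_mul_self s hi) (jmOp_succ s i) hw (hv ⟨i, by omega⟩)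
      (hv ⟨i + 1, hi⟩)
  · rw [swap_apply_of_ne_of_ne h1 h2, map_sub, map_smul, hv k]
    have hc := heckeGen_commute_jmOp (n := n) s (i := i) (j := k) (fun h => h1 (Fin.ext h))
      (fun h => h2 (Fin.ext h))
    have h3 : jmOp n s k (heckeGen n s i v) = heckeGen n s i (jmOp n s k v) := by
      rw [← Module.End.mul_apply, ← hc.eq, Module.End.mul_apply]
    rw [h3, hv k, map_smul]
    module

theorem finrank_jmSpace_le_swap (hs : 1 < s) {i : ℕ} (hi : i + 1 < n)
    (h1 : w ⟨i + 1, hi⟩ ≠ s ^ 2 * w ⟨i, by omega⟩) (h2 : w ⟨i, by omega⟩ ≠ s ^ 2 * w ⟨i + 1, hi⟩) :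
    Module.finrank ℝ (jmSpace n s w) ≤
      Module.finrank ℝ (jmSpace n s (w ∘ swap ⟨i, by omega⟩ ⟨i + 1, hi⟩)) := by
  by_cases h : jmSpace n s w = ⊥
  · rw [h, finrank_bot]; exact Nat.zero_le _
  have hw := jmSpace_apply_ne_next hs h hi
  let κ := (s ^ 2 - 1) * w ⟨i + 1, hi⟩ / (w ⟨i + 1, hi⟩ - w ⟨i, by omega⟩)
  let θ : jmSpace n s w →ₗ[ℝ] jmSpace n s (w ∘ swap ⟨i, by omega⟩ ⟨i + 1, hi⟩) :=
    LinearMap.restrict (heckeGen n s i - κ • 1) fun v hv =>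
      intertwiner_mem_jmSpace (by linarith) hi hw hv
  refine LinearMap.finrank_le_finrank_of_injective (f := θ) ?_
  rw [injective_iff_map_eq_zero]
  intro v hv
  by_contra hv0
  have h3 : heckeGen n s i v - κ • (v : EuclideanSpace ℝ (Perm (Fin n))) = 0 :=
    congrArg Subtype.val hv
  rcases eq_or_eq_of_hecke_eigenvector (heckeGen_mul_self s hi) hw
    (fun h => hv0 (Subtype.ext h)) (sub_eq_zero.mp h3) with h | h
  exacts [h1 h, h2 h]

theorem heckeGen_apply_of_next_eq (hs : 1 < s) {i : ℕ} (hi : i + 1 < n)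
    (h : w ⟨i + 1, hi⟩ = s ^ 2 * w ⟨i, by omega⟩) {v : EuclideanSpace ℝ (Perm (Fin n))}
    (hv : v ∈ jmSpace n s w) : heckeGen n s i v = (s ^ 2) • v := by
  rcases eq_or_ne v 0 with rfl | hv0
  · simp
  have hb : jmSpace n s w ≠ ⊥ := fun h => hv0 ((Submodule.eq_bot_iff _).mp h v hv)
  have ha := jmSpace_apply_ne_zero (by linarith) hb ⟨i, by omega⟩
  have hq : s ^ 2 - 1 ≠ 0 := by nlinarith
  refine hecke_apply_of_adjacent (by positivity) (heckeGen_mul_self s hi) (jmOp_succ s i)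
    (heckeGen_isSymmetric s i) (jmOp_isSymmetric s i) (jmSpace_apply_ne_next hs hb hi)
    (mem_jmSpace.mp hv ⟨i, by omega⟩) (mem_jmSpace.mp hv ⟨i + 1, hi⟩) ?_ (by ring)
  rw [h, ← sub_one_mul]
  field_simp

theorem heckeGen_apply_of_eq_next (hs : 1 < s) {i : ℕ} (hi : i + 1 < n)
    (h : w ⟨i, by omega⟩ = s ^ 2 * w ⟨i + 1, hi⟩) {v : EuclideanSpace ℝ (Perm (Fin n))}
    (hv : v ∈ jmSpace n s w) : heckeGen n s i v = (-1 : ℝ) • v := by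
  rcases eq_or_ne v 0 with rfl | hv0
  · simp
  have hb : jmSpace n s w ≠ ⊥ := fun h => hv0 ((Submodule.eq_bot_iff _).mp h v hv)
  have ha := jmSpace_apply_ne_zero (by linarith) hb ⟨i + 1, hi⟩
  have hq : 1 - s ^ 2 ≠ 0 := by nlinarith
  refine hecke_apply_of_adjacent (by positivity) (heckeGen_mul_self s hi) (jmOp_succ s i)
    (heckeGen_isSymmetric s i) (jmOp_isSymmetric s i) (jmSpace_apply_ne_next hs hb hi)
    (mem_jmSpace.mp hv ⟨i, by omega⟩) (mem_jmSpace.mp hv ⟨i + 1, hi⟩) ?_ (by ring)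
  rw [h, ← one_sub_mul]
  field_simp
  ring

theorem not_zigzag_of_jmSpace_ne_bot (hs : 1 < s) (h : jmSpace n s w ≠ ⊥) {i : ℕ}
    (hi : i + 2 < n) (h1 : w ⟨i, by omega⟩ = w ⟨i + 2, hi⟩)
    (h2 : w ⟨i + 1, by omega⟩ = s ^ 2 * w ⟨i, by omega⟩ ∨
      w ⟨i, by omega⟩ = s ^ 2 * w ⟨i + 1, by omega⟩) : False := by
  obtain ⟨v, hv, hv0⟩ := Submodule.exists_mem_ne_zero_of_ne_bot h
  have hb := congrArg (fun S : Module.End ℝ _ => S v) (heckeGen_braid (n := n) s i)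
  simp only [Module.End.mul_apply] at hb
  rcases h2 with h2 | h2
  · rw [heckeGen_apply_of_next_eq hs (by omega) h2 hv,
      heckeGen_apply_of_eq_next hs hi (by rw [h2, h1]) hv] at hb
    simp only [map_smul, heckeGen_apply_of_next_eq hs (by omega) h2 hv,
      heckeGen_apply_of_eq_next hs hi (by rw [h2, h1]) hv, smul_smul] at hb
    have := smul_left_injective ℝ hv0 hb
    nlinarith
  · rw [heckeGen_apply_of_eq_next hs (by omega) h2 hv,
      heckeGen_apply_of_next_eq hs hi (by rw [← h1, h2]) hv] at hb
    simp only [map_smul, heckeGen_apply_of_eq_next hs (by omega) h2 hv,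
      heckeGen_apply_of_next_eq hs hi (by rw [← h1, h2]) hv, smul_smul] at hb
    have := smul_left_injective ℝ hv0 hb
    nlinarith

theorem jmSpace_swap_ne_bot (hs : 1 < s) (h : jmSpace n s w ≠ ⊥) {i : ℕ} (hi : i + 1 < n)
    (h1 : w ⟨i + 1, hi⟩ ≠ s ^ 2 * w ⟨i, by omega⟩) (h2 : w ⟨i, by omega⟩ ≠ s ^ 2 * w ⟨i + 1, hi⟩) :
    jmSpace n s (w ∘ swap ⟨i, by omega⟩ ⟨i + 1, hi⟩) ≠ ⊥ := by
  have h3 := finrank_jmSpace_le_swap hs hi h1 h2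
  intro h4
  rw [h4, finrank_bot, Nat.le_zero, Submodule.finrank_eq_zero] at h3
  exact h h3

theorem exists_lt_adjacent_of_jmSpace_ne_bot (hs : 1 < s) (k : ℕ) (hk : k + 1 < n)
    (h : jmSpace n s w ≠ ⊥) : ∃ i : Fin n, (i : ℕ) < k + 1 ∧
      (w ⟨k + 1, hk⟩ = s ^ 2 * w i ∨ w i = s ^ 2 * w ⟨k + 1, hk⟩) := by
  induction k generalizing w with
  | zero =>
    by_contra! hc
    obtain ⟨h1, h2⟩ := hc ⟨0, by omega⟩ (by simp)
    have h3 := jmSpace_apply_zero (jmSpace_swap_ne_bot hs h hk h1 h2) (by omega)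
    rw [Function.comp_apply, swap_apply_left] at h3
    exact jmSpace_apply_ne_next hs h hk ((jmSpace_apply_zero h (by omega)).trans h3.symm)
  | succ k ih =>
    by_contra! hc
    obtain ⟨h1, h2⟩ := hc ⟨k + 1, by omega⟩ (by simp)
    obtain ⟨i, hi, h3⟩ := ih (by omega) (jmSpace_swap_ne_bot hs h hk h1 h2)
    have hi1 : i ≠ ⟨k + 1, by omega⟩ := fun e => by simp [e] at hi
    have hi2 : i ≠ ⟨k + 1 + 1, hk⟩ := fun e => by simp [e] at hi
    rw [Function.comp_apply, Function.comp_apply, swap_apply_left,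
      swap_apply_of_ne_of_ne hi1 hi2] at h3
    have := hc i (by omega)
    tauto

theorem exists_eq_zpow_of_jmSpace_ne_bot (hs : 1 < s) (h : jmSpace n s w ≠ ⊥) :
    ∃ c : Fin n → ℤ, w = fun k => (s ^ 2) ^ c k := by
  suffices ∀ k : Fin n, ∃ c : ℤ, w k = (s ^ 2) ^ c by
    choose c hc using this
    exact ⟨c, funext hc⟩
  have hq : s ^ 2 ≠ 0 := by positivity
  intro k
  induction k using WellFoundedLT.induction with
  | ind k ih =>
    obtain ⟨k, hk⟩ := k
    cases k with
    | zero => exact ⟨0, by rw [jmSpace_apply_zero h hk, zpow_zero]⟩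
    | succ k =>
      obtain ⟨i, hi, h1⟩ := exists_lt_adjacent_of_jmSpace_ne_bot hs k hk h
      obtain ⟨c, hc⟩ := ih i (by simpa [Fin.lt_def] using hi)
      rcases h1 with h1 | h1
      · exact ⟨c + 1, by rw [h1, hc, zpow_add_one₀ hq, mul_comm]⟩
      · refine ⟨c - 1, ?_⟩
        rw [zpow_sub_one₀ hq, ← hc, h1]
        field_simp

end JointEigenspaces

section Inversions

open Equiv

variable {n : ℕ}

theorem swap_next_lt_swap_next {k : ℕ} (hk : k + 1 < n) {a b : Fin n} (hab : a < b)
    (h : ¬(a = ⟨k, by omega⟩ ∧ b = ⟨k + 1, hk⟩)) :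
    swap ⟨k, by omega⟩ ⟨k + 1, hk⟩ a < swap (⟨k, by omega⟩ : Fin n) ⟨k + 1, hk⟩ b := by
  obtain ⟨a, ha⟩ := a
  obtain ⟨b, hb⟩ := b
  simp only [swap_apply_def, Fin.mk.injEq] at h ⊢
  rw [Fin.mk_lt_mk] at hab
  split_ifs <;> simp only [Fin.mk_lt_mk] <;> omega

/-- Multiplying by an adjacent transposition at an ascent adds one inversion. -/
theorem inversions_mul_swap_of_lt (p : Perm (Fin n)) {k : ℕ} (hk : k + 1 < n)
    (h : p ⟨k, by omega⟩ < p ⟨k + 1, hk⟩) :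
    inversions n (p * swap ⟨k, by omega⟩ ⟨k + 1, hk⟩) = inversions n p + 1 := by
  set σ : Perm (Fin n) := swap ⟨k, by omega⟩ ⟨k + 1, hk⟩ with hσ
  have hσσ : ∀ a, σ (σ a) = a := fun a => by rw [hσ, swap_apply_self]
  have hmem : (⟨⟨k, by omega⟩, ⟨k + 1, hk⟩⟩ : Fin n × Fin n) ∈
      Finset.univ.filter fun x : Fin n × Fin n => x.1 < x.2 ∧ (p * σ) x.2 < (p * σ) x.1 := by
    simp [hσ, h]
  unfold inversions
  rw [← Finset.card_erase_add_one hmem]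
  congr 1
  refine Finset.card_nbij' (Prod.map σ σ) (Prod.map σ σ) ?_ ?_ ?_ ?_
  · rintro ⟨a, b⟩ hx
    simp only [Finset.mem_coe, Finset.mem_erase, Finset.mem_filter, Finset.mem_univ, true_and,
      ne_eq, Prod.mk.injEq] at hx
    simp only [Finset.mem_coe, Finset.mem_filter, Finset.mem_univ, true_and, Prod.map]
    exact ⟨swap_next_lt_swap_next hk hx.2.1 hx.1, hx.2.2⟩
  · rintro ⟨a, b⟩ hx
    simp only [Finset.mem_coe, Finset.mem_filter, Finset.mem_univ, true_and] at hx
    simp only [Finset.mem_coe, Finset.mem_erase, Finset.mem_filter, Finset.mem_univ, true_and,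
      ne_eq, Prod.mk.injEq, Prod.map]
    have hne : ¬(a = ⟨k, by omega⟩ ∧ b = ⟨k + 1, hk⟩) := fun e => by
      rw [e.1, e.2] at hx
      exact h.not_gt hx.2
    refine ⟨?_, swap_next_lt_swap_next hk hx.1 hne, by
      simpa only [Perm.mul_apply, hσσ] using hx.2⟩
    rintro ⟨h1, h2⟩
    have h3 : a = ⟨k + 1, hk⟩ := by rw [← hσσ a, h1, hσ, swap_apply_left]
    have h4 : b = ⟨k, by omega⟩ := by rw [← hσσ b, h2, hσ, swap_apply_right]
    rw [h3, h4, Fin.mk_lt_mk] at hx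
    omega
  · rintro ⟨a, b⟩ -
    simp [hσσ]
  · rintro ⟨a, b⟩ -
    simp [hσσ]

theorem inversions_mul_swap_of_gt (p : Perm (Fin n)) {k : ℕ} (hk : k + 1 < n)
    (h : p ⟨k + 1, hk⟩ < p ⟨k, by omega⟩) :
    inversions n (p * swap ⟨k, by omega⟩ ⟨k + 1, hk⟩) + 1 = inversions n p := by
  have h1 := inversions_mul_swap_of_lt (p * swap ⟨k, Nat.lt_of_succ_lt hk⟩ ⟨k + 1, hk⟩) hk
    (by simpa using h)
  rw [mul_assoc, swap_mul_self, mul_one] at h1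
  exact h1.symm

/-- If a permutation is not increasing on `{0, …, m - 1}`, it has a descent there. -/
theorem exists_descent {p : Perm (Fin n)} {m : ℕ} {a b : Fin n} (hab : a < b) (hb : b < m)
    (h : p b < p a) : ∃ (k : ℕ) (hk : k + 1 < n), k + 1 < m ∧ p ⟨k + 1, hk⟩ < p ⟨k, by omega⟩ := by
  by_contra! hc
  have key : ∀ (d : ℕ) (hd : a + d < n), (a : ℕ) + d < m → p a ≤ p ⟨a + d, hd⟩ := by
    intro d
    induction d with
    | zero => intros; exact le_rfl
    | succ d ih =>
      intro hd hm
      exact (ih (by omega) (by omega)).trans (hc (a + d) hd hm)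
  have h1 := key (b - a) (by omega) (by omega)
  have h2 : (⟨a + (b - a : ℕ), by omega⟩ : Fin n) = b := by
    ext
    simp only
    omega
  rw [h2] at h1
  exact h1.not_gt h

/-- A permutation listing the elements of `I` in increasing order, followed by the elements of
its complement in increasing order. -/
theorem exists_shuffle (I : Finset (Fin n)) : ∃ ρ : Perm (Fin n),
    (∀ a, ρ a ∈ I ↔ (a : ℕ) < I.card) ∧ ∀ a b, a < b → ρ b < ρ a → ρ a ∈ I ∧ ρ b ∉ I := by
  let key : Fin n → ℕ := fun i => if i ∈ I then i else n + i
  have hkey : ∀ i, key i = if i ∈ I then (i : ℕ) else n + i := fun _ => rfl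
  have hmono := Tuple.monotone_sort key
  set ρ := Tuple.sort key with hρ
  have hmono' : ∀ a b, a ≤ b → key (ρ a) ≤ key (ρ b) := fun a b h => hmono h
  have hdown : ∀ a b, a ≤ b → ρ b ∈ I → ρ a ∈ I := by
    intro a b hab hb
    by_contra ha
    have := hmono' a b hab
    rw [hkey, hkey, if_neg ha, if_pos hb] at this
    omega
  have hcard : (Finset.univ.filter fun a => ρ a ∈ I).card = I.card := by
    refine Finset.card_nbij' ρ ρ.symm ?_ ?_ ?_ ?_ <;> intro a ha <;> simp_all
  refine ⟨ρ, fun a => ⟨fun ha => ?_, fun ha => ?_⟩, fun a b hab h => ?_⟩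
  · rw [← hcard]
    have : Finset.Iic a ⊆ Finset.univ.filter fun a => ρ a ∈ I := fun b hb => by
      simpa using hdown b a (Finset.mem_Iic.mp hb) ha
    have := Finset.card_le_card this
    rw [Fin.card_Iic] at this
    omega
  · by_contra hn
    have : (Finset.univ.filter fun a => ρ a ∈ I) ⊆ Finset.Iio a := fun b hb => by
      rw [Finset.mem_Iio]
      by_contra hab
      exact hn (hdown a b (not_lt.mp hab) (by simpa using hb))
    have := Finset.card_le_card this
    rw [Fin.card_Iio] at this
    omega
  · have h1 := hmono' a b hab.le
    rw [hkey, hkey] at h1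
    rw [Fin.lt_def] at h
    split_ifs at h1 with h2 h3 h3
    · omega
    · exact ⟨h2, h3⟩
    · omega
    · omega

end Inversions

section ContentWords

open Equiv

variable {n : ℕ} {s : ℝ} {c : Fin n → ℤ}

/-- The simultaneous eigenspace of the Jucys–Murphy operators with eigenvalues `q ^ c k`,
where `q = s ^ 2`. -/
noncomputable def contentSpace (n : ℕ) (s : ℝ) (c : Fin n → ℤ) :
    Submodule ℝ (EuclideanSpace ℝ (Perm (Fin n))) :=
  jmSpace n s fun k => (s ^ 2) ^ c k

theorem zpow_eq_mul_zpow_iff (hs : 1 < s) (a b : ℤ) :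
    (s ^ 2) ^ a = s ^ 2 * (s ^ 2) ^ b ↔ a = b + 1 := by
  have h1 : 1 < s ^ 2 := by nlinarith
  rw [mul_comm, ← zpow_add_one₀ (by positivity)]
  exact zpow_right_inj₀ (by positivity) h1.ne'

theorem finrank_contentSpace_le_swap (hs : 1 < s) {i : ℕ} (hi : i + 1 < n)
    (h1 : c ⟨i + 1, hi⟩ ≠ c ⟨i, by omega⟩ + 1) (h2 : c ⟨i, by omega⟩ ≠ c ⟨i + 1, hi⟩ + 1) :
    Module.finrank ℝ (contentSpace n s c) ≤
      Module.finrank ℝ (contentSpace n s (c ∘ swap ⟨i, by omega⟩ ⟨i + 1, hi⟩)) :=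
  finrank_jmSpace_le_swap hs hi (fun h => h1 ((zpow_eq_mul_zpow_iff hs _ _).mp h))
    fun h => h2 ((zpow_eq_mul_zpow_iff hs _ _).mp h)

theorem contentSpace_swap_ne_bot (hs : 1 < s) (h : contentSpace n s c ≠ ⊥) {i : ℕ}
    (hi : i + 1 < n) (h1 : c ⟨i + 1, hi⟩ ≠ c ⟨i, by omega⟩ + 1)
    (h2 : c ⟨i, by omega⟩ ≠ c ⟨i + 1, hi⟩ + 1) :
    contentSpace n s (c ∘ swap ⟨i, by omega⟩ ⟨i + 1, hi⟩) ≠ ⊥ :=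
  jmSpace_swap_ne_bot hs h hi (fun h => h1 ((zpow_eq_mul_zpow_iff hs _ _).mp h))
    fun h => h2 ((zpow_eq_mul_zpow_iff hs _ _).mp h)

theorem content_zero (hs : 1 < s) (h : contentSpace n s c ≠ ⊥) (h0 : 0 < n) : c ⟨0, h0⟩ = 0 := by
  have h1 : 1 < s ^ 2 := by nlinarith
  exact zpow_right_injective₀ (by positivity) h1.ne'
    ((jmSpace_apply_zero h h0).trans (zpow_zero _).symm)

theorem content_ne_next (hs : 1 < s) (h : contentSpace n s c ≠ ⊥) {i : ℕ} (hi : i + 1 < n) :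
    c ⟨i, by omega⟩ ≠ c ⟨i + 1, hi⟩ :=
  fun e => jmSpace_apply_ne_next hs h hi (by simp only [e])

theorem content_not_zigzag (hs : 1 < s) (h : contentSpace n s c ≠ ⊥) {i : ℕ}
    (hi : i + 2 < n) (h1 : c ⟨i, by omega⟩ = c ⟨i + 2, hi⟩)
    (h2 : c ⟨i + 1, by omega⟩ = c ⟨i, by omega⟩ + 1 ∨
      c ⟨i, by omega⟩ = c ⟨i + 1, by omega⟩ + 1) : False :=
  not_zigzag_of_jmSpace_ne_bot hs h hi (by simp only [h1])
    (h2.imp (zpow_eq_mul_zpow_iff hs _ _).mpr (zpow_eq_mul_zpow_iff hs _ _).mpr)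

theorem exists_lt_adjacent_content (hs : 1 < s) (h : contentSpace n s c ≠ ⊥) {k : Fin n}
    (hk : 0 < (k : ℕ)) : ∃ i < k, c k = c i + 1 ∨ c i = c k + 1 := by
  obtain ⟨k, hk'⟩ := k
  cases k with
  | zero => simp at hk
  | succ k =>
    obtain ⟨i, hi, h1⟩ := exists_lt_adjacent_of_jmSpace_ne_bot hs k hk' h
    exact ⟨i, hi, h1.imp (zpow_eq_mul_zpow_iff hs _ _).mp (zpow_eq_mul_zpow_iff hs _ _).mp⟩

/-- Between two equal contents, both neighbouring contents occur. -/
theorem exists_content_between (hs : 1 < s) {ε : ℤ} (hε : ε = 1 ∨ ε = -1) (d : ℕ)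
    (h : contentSpace n s c ≠ ⊥) (p : ℕ) (hr : p + d + 1 < n)
    (hc : c ⟨p + d + 1, hr⟩ = c ⟨p, by omega⟩) :
    ∃ (t : ℕ) (ht : t < n), p < t ∧ t < p + d + 1 ∧ c ⟨t, ht⟩ = c ⟨p, by omega⟩ + ε := by
  induction d using Nat.strong_induction_on generalizing c p with
  | _ d ih =>
  rcases d with _ | d
  · exact absurd hc.symm (content_ne_next hs h hr)
  have key : ∀ {c : Fin n → ℤ} (h : contentSpace n s c ≠ ⊥) (p r : ℕ) (hp : p < n) (hr : r < n),
      p < r → r - p ≤ d + 1 → c ⟨r, hr⟩ = c ⟨p, hp⟩ →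
      ∃ (t : ℕ) (ht : t < n), p < t ∧ t < r ∧ c ⟨t, ht⟩ = c ⟨p, hp⟩ + ε := by
    intro c h p r hp hr hpr hd hc
    obtain ⟨e, rfl⟩ : ∃ e, r = p + e + 1 := ⟨r - p - 1, by omega⟩
    exact ih e (by omega) h p hr hc
  have hn1 := content_ne_next hs h hr
  have hn2 := content_ne_next hs h (i := p) (by omega)
  by_cases h1 : c ⟨p + (d + 1), by omega⟩ = c ⟨p, by omega⟩ + ε
  · exact ⟨p + (d + 1), by omega, by omega, by omega, h1⟩
  by_cases h2 : c ⟨p + 1, by omega⟩ = c ⟨p, by omega⟩ + ε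
  · exact ⟨p + 1, by omega, by omega, by omega, h2⟩
  by_cases h3 : c ⟨p + (d + 1), by omega⟩ = c ⟨p, by omega⟩ - ε
  · by_cases h4 : c ⟨p + 1, by omega⟩ = c ⟨p, by omega⟩ - ε
    · rcases d with _ | d
      · exact (content_not_zigzag hs h hr hc.symm (by
          rw [h4]; rcases hε with rfl | rfl
          · right; ring
          · left; ring)).elim
      · obtain ⟨t, ht, ht1, ht2, ht3⟩ := key h (p + 1) (p + (d + 1 + 1)) (by omega) (by omega)
          (by omega) (by omega) (by rw [h3, h4])
        obtain ⟨u, hu, hu1, hu2, hu3⟩ := key h p t (by omega) ht (by omega) (by omega)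
          (by rw [ht3, h4]; ring)
        exact ⟨u, hu, hu1, by omega, hu3⟩
    · have hsw := contentSpace_swap_ne_bot hs h (i := p) (by omega)
        (by rcases hε with rfl | rfl <;> omega) (by rcases hε with rfl | rfl <;> omega)
      obtain ⟨t, ht, ht1, ht2, ht3⟩ := key hsw (p + 1) (p + (d + 1) + 1) (by omega) hr
        (by omega) (by omega) (by
          simp only [Function.comp_apply, swap_apply_right]
          rw [swap_apply_of_ne_of_ne, hc] <;> simp only [ne_eq, Fin.mk.injEq] <;> omega)
      refine ⟨t, ht, by omega, ht2, ?_⟩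
      simp only [Function.comp_apply, swap_apply_right] at ht3
      rwa [swap_apply_of_ne_of_ne] at ht3 <;> simp only [ne_eq, Fin.mk.injEq] <;> omega
  · have hsw := contentSpace_swap_ne_bot hs h hr
      (by rcases hε with rfl | rfl <;> omega) (by rcases hε with rfl | rfl <;> omega)
    have hp : swap (⟨p + (d + 1), by omega⟩ : Fin n) ⟨p + (d + 1) + 1, hr⟩ ⟨p, by omega⟩ =
        ⟨p, by omega⟩ := by
      rw [swap_apply_of_ne_of_ne] <;> simp only [ne_eq, Fin.mk.injEq] <;> omega
    obtain ⟨t, ht, ht1, ht2, ht3⟩ := key hsw p (p + (d + 1)) (by omega) (by omega)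
      (by omega) (by omega) (by
        simp only [Function.comp_apply, swap_apply_left, hp, hc])
    refine ⟨t, ht, ht1, by omega, ?_⟩
    simp only [Function.comp_apply, hp] at ht3
    rwa [swap_apply_of_ne_of_ne] at ht3 <;> simp only [ne_eq, Fin.mk.injEq] <;> omega

theorem exists_content_between' (hs : 1 < s) {ε : ℤ} (hε : ε = 1 ∨ ε = -1)
    (h : contentSpace n s c ≠ ⊥) {p r : Fin n} (hpr : p < r) (hc : c p = c r) :
    ∃ t, p < t ∧ t < r ∧ c t = c p + ε := by
  obtain ⟨p, hp⟩ := p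
  obtain ⟨r, hr⟩ := r
  rw [Fin.mk_lt_mk] at hpr
  obtain ⟨d, rfl⟩ : ∃ d, r = p + d + 1 := ⟨r - p - 1, by omega⟩
  obtain ⟨t, ht, h1, h2, h3⟩ := exists_content_between hs hε d h p hr hc.symm
  exact ⟨⟨t, ht⟩, h1, h2, h3⟩

/-- The contents occurring before a given position form an interval containing zero. -/
theorem exists_le_content_eq (hs : 1 < s) (h : contentSpace n s c ≠ ⊥) (k : Fin n) {x : ℤ}
    (h0 : 0 ≤ x) (hx : x ≤ c k) : ∃ i ≤ k, c i = x := by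
  induction k using WellFoundedLT.induction with
  | ind k ih =>
    rcases hx.eq_or_lt with rfl | hx
    · exact ⟨k, le_rfl, rfl⟩
    rcases Nat.eq_zero_or_pos (k : ℕ) with hk | hk
    · have h1 := content_zero hs h k.pos
      rw [show (⟨0, k.pos⟩ : Fin n) = k from Fin.ext hk.symm] at h1
      omega
    · obtain ⟨i, hi, h1⟩ := exists_lt_adjacent_content hs h hk
      obtain ⟨j, hj, h2⟩ := ih i hi (by omega)
      exact ⟨j, hj.trans hi.le, h2⟩

/-- The positions at which a nonnegative content occurs for the first time. -/
def firstOcc (c : Fin n → ℤ) : Finset (Fin n) :=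
  Finset.univ.filter fun k => 0 ≤ c k ∧ ∀ i < k, c i ≠ c k

theorem mem_firstOcc {k : Fin n} : k ∈ firstOcc c ↔ 0 ≤ c k ∧ ∀ i < k, c i ≠ c k := by
  simp [firstOcc]

theorem exists_firstOcc {x : ℤ} (h0 : 0 ≤ x) {k : Fin n} (hk : c k = x) :
    ∃ i ≤ k, i ∈ firstOcc c ∧ c i = x := by
  induction k using WellFoundedLT.induction with
  | ind k ih =>
    by_cases h : k ∈ firstOcc c
    · exact ⟨k, le_rfl, h, hk⟩
    · rw [mem_firstOcc] at h
      push Not at h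
      obtain ⟨i, hi, h1⟩ := h (by omega)
      obtain ⟨j, hj, h2⟩ := ih i hi (h1.trans hk)
      exact ⟨j, hj.trans hi.le, h2⟩

theorem firstOcc_injOn {i j : Fin n} (hi : i ∈ firstOcc c) (hj : j ∈ firstOcc c)
    (h : c i = c j) : i = j := by
  rcases lt_trichotomy i j with h1 | h1 | h1
  · exact absurd h ((mem_firstOcc.mp hj).2 i h1)
  · exact h1
  · exact absurd h.symm ((mem_firstOcc.mp hi).2 j h1)

theorem far_of_firstOcc (hs : 1 < s) (h : contentSpace n s c ≠ ⊥) {a b : Fin n} (hba : b < a)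
    (ha : a ∈ firstOcc c) (hb : b ∉ firstOcc c) : c a ≠ c b + 1 ∧ c b ≠ c a + 1 := by
  have ha' := mem_firstOcc.mp ha
  refine ⟨fun e => ?_, fun e => ?_⟩
  · have hb' := mt mem_firstOcc.mpr hb
    rcases ha'.1.eq_or_lt with h0 | h0
    · refine ha'.2 ⟨0, a.pos⟩ ?_ ((content_zero hs h a.pos).trans h0)
      rw [Fin.lt_def] at hba ⊢
      exact Nat.zero_le _ |>.trans_lt hba
    · push Not at hb'
      obtain ⟨i, hi, h1⟩ := hb' (by omega)
      obtain ⟨t, -, ht, h2⟩ := exists_content_between' hs (Or.inl rfl) h hi h1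
      exact ha'.2 t (ht.trans hba) (by omega)
  · obtain ⟨i, hi, h1⟩ := exists_le_content_eq hs h b ha'.1 (by omega)
    exact ha'.2 i (hi.trans_lt hba) h1

/-- Straightening a word by a permutation that only exchanges far contents does not decrease
the dimension of the content space. -/
theorem finrank_contentSpace_le_comp (hs : 1 < s) (ρ : Perm (Fin n))
    (hρ : ∀ a b, a < b → ρ b < ρ a → c (ρ a) ≠ c (ρ b) + 1 ∧ c (ρ b) ≠ c (ρ a) + 1) :
    Module.finrank ℝ (contentSpace n s c) ≤ Module.finrank ℝ (contentSpace n s (c ∘ ρ)) := by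
  induction hN : inversions n ρ using Nat.strong_induction_on generalizing ρ with
  | _ N ih =>
  by_cases hmono : ∃ a b, a < b ∧ ρ b < ρ a
  · obtain ⟨a, b, hab, hba⟩ := hmono
    obtain ⟨k, hk, -, hd⟩ := exists_descent hab b.2 hba
    set σ : Perm (Fin n) := swap ⟨k, by omega⟩ ⟨k + 1, hk⟩ with hσ
    have h1 := inversions_mul_swap_of_gt ρ hk hd
    rw [← hσ] at h1
    refine (ih _ (by omega) (ρ * σ) ?_ rfl).trans ?_
    · intro a b hab hlt
      refine hρ _ _ (swap_next_lt_swap_next hk hab ?_) hlt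
      rintro ⟨e1, e2⟩
      simp only [e1, e2, hσ, Perm.mul_apply, swap_apply_left, swap_apply_right] at hlt
      exact hd.not_gt hlt
    · have h2 := hρ _ _ (Fin.mk_lt_mk.mpr (Nat.lt_succ_self k)) hd
      have h3 : c ∘ ρ = (c ∘ (ρ * σ)) ∘ σ := by
        ext i
        simp [hσ]
      rw [h3]
      refine finrank_contentSpace_le_swap hs hk ?_ ?_
      · simpa [hσ] using h2.1
      · simpa [hσ] using h2.2
  · push Not at hmono
    have : ρ = 1 := by
      have h1 : Monotone ρ := fun a b hab => by
        rcases hab.eq_or_lt with rfl | hab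
        exacts [le_rfl, hmono a b hab]
      have h2 : StrictMono ρ := h1.strictMono_of_injective ρ.injective
      ext i
      have h3 : h2.orderIsoOfSurjective ρ ρ.surjective = OrderIso.refl _ := Subsingleton.elim _ _
      exact congrArg Fin.val (congrArg (fun f : Fin n ≃o Fin n => f i) h3)
    rw [this]
    exact le_rfl

/-- After straightening, the first occurrences carry the contents `0, 1, 2, …`. -/
theorem content_shuffle (hs : 1 < s) (h : contentSpace n s c ≠ ⊥) {ρ : Perm (Fin n)}
    (h1 : ∀ a, ρ a ∈ firstOcc c ↔ (a : ℕ) < (firstOcc c).card)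
    (h2 : ∀ a b, a < b → ρ b < ρ a → ρ a ∈ firstOcc c ∧ ρ b ∉ firstOcc c) (k : Fin n)
    (hk : (k : ℕ) < (firstOcc c).card) : c (ρ k) = k := by
  induction k using WellFoundedLT.induction with
  | ind k ih =>
  have hmem := (h1 k).mpr hk
  have h0 := (mem_firstOcc.mp hmem).1
  rcases lt_trichotomy (c (ρ k)) k with hlt | heq | hgt
  · have h3 := ih ⟨(c (ρ k)).toNat, by omega⟩ (by rw [Fin.lt_def]; simp only; omega)
      (by simp only; omega)
    have h4 := ρ.injective (firstOcc_injOn ((h1 _).mpr (by simp only; omega)) hmem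
      (h3.trans (Int.toNat_of_nonneg h0)))
    rw [← h4] at hlt
    simp only at hlt
    rw [h4] at hlt
    omega
  · exact heq
  · obtain ⟨i, hi, h3⟩ := exists_le_content_eq hs h (ρ k) (Int.natCast_nonneg k) hgt.le
    obtain ⟨j, hj, h4, h5⟩ := exists_firstOcc (Int.natCast_nonneg k) h3
    obtain ⟨l, rfl⟩ := ρ.surjective j
    have h6 := (h1 l).mp h4
    rcases lt_trichotomy l k with hl | rfl | hl
    · have := ih l hl h6
      rw [Fin.lt_def] at hl
      omega
    · omega
    · have h7 : ρ l ≠ ρ k := fun e => hl.ne' (ρ.injective e)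
      exact absurd h4 (h2 k l hl (lt_of_le_of_ne (hj.trans hi) h7)).2

end ContentWords

section ContentSums

variable {n : ℕ} {s : ℝ} {c : Fin n → ℤ}

theorem content_lt_card_firstOcc (hs : 1 < s) (h : contentSpace n s c ≠ ⊥) (i : Fin n) :
    c i < (firstOcc c).card := by
  rcases lt_or_ge (c i) 0 with h0 | h0
  · exact h0.trans_le (Int.natCast_nonneg _)
  have hsub : Finset.Icc 0 (c i) ⊆ (firstOcc c).image c := by
    intro x hx
    rw [Finset.mem_Icc] at hx
    obtain ⟨j, hj, h1⟩ := exists_le_content_eq hs h i hx.1 hx.2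
    obtain ⟨k, hk, h2, h3⟩ := exists_firstOcc hx.1 h1
    exact Finset.mem_image.mpr ⟨k, h2, h3⟩
  have h1 := (Finset.card_le_card hsub).trans Finset.card_image_le
  rw [Int.card_Icc] at h1
  omega

theorem card_firstOcc_pos (hs : 1 < s) (h : contentSpace n s c ≠ ⊥) (hn : 0 < n) :
    0 < (firstOcc c).card := by
  have h1 := content_lt_card_firstOcc hs h ⟨0, hn⟩
  rw [content_zero hs h hn] at h1
  exact_mod_cast h1

theorem sum_firstOcc (hs : 1 < s) (h : contentSpace n s c ≠ ⊥) :
    ∑ i ∈ firstOcc c, (s ^ 2) ^ c i = ∑ k ∈ Finset.range (firstOcc c).card, (s ^ 2) ^ k := by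
  have hmaps : Set.MapsTo (fun i => (c i).toNat) (firstOcc c) (Finset.range (firstOcc c).card) := by
    intro i hi
    have := content_lt_card_firstOcc hs h i
    have := (mem_firstOcc.mp hi).1
    simp only [Finset.coe_range, Set.mem_Iio]
    omega
  have hinj : Set.InjOn (fun i => (c i).toNat) (firstOcc c) := by
    intro i hi j hj hij
    have h1 := (mem_firstOcc.mp hi).1
    have h2 := (mem_firstOcc.mp hj).1
    simp only at hij
    exact firstOcc_injOn hi hj (by omega)
  refine Finset.sum_nbij _ hmaps hinj
    (Finset.surjOn_of_injOn_of_card_le _ hmaps hinj (by simp)) ?_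
  intro i hi
  rw [← zpow_natCast _ (c i).toNat, Int.toNat_of_nonneg (mem_firstOcc.mp hi).1]

/-- A repeated content has occurred before. -/
theorem exists_lt_of_notMem_firstOcc {i : Fin n} (h0 : 0 ≤ c i) (hi : i ∉ firstOcc c) :
    ∃ j < i, c j = c i := by
  rw [mem_firstOcc] at hi
  push Not at hi
  exact hi h0

theorem notMem_firstOcc_of_lt {i j : Fin n} (hij : i < j) (hc : c i = c j) : j ∉ firstOcc c :=
  fun hj => (mem_firstOcc.mp hj).2 i hij hc

theorem content_add_two_le_card (hs : 1 < s) (h : contentSpace n s c ≠ ⊥) {i : Fin n}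
    (hi : i ∉ firstOcc c) : c i + 2 ≤ (firstOcc c).card := by
  have hm := card_firstOcc_pos hs h i.pos
  rcases lt_or_ge (c i) 0 with h0 | h0
  · omega
  obtain ⟨j, hj, h1⟩ := exists_lt_of_notMem_firstOcc h0 hi
  obtain ⟨t, -, -, h2⟩ := exists_content_between' hs (Or.inl rfl) h hj h1
  have := content_lt_card_firstOcc hs h t
  omega

theorem exists_prev_notMem_firstOcc (hs : 1 < s) (h : contentSpace n s c ≠ ⊥) {i : Fin n}
    (h0 : 0 ≤ c i) (hi : i ∉ firstOcc c) : ∃ j ∉ firstOcc c, c j = c i - 1 := by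
  obtain ⟨j, hj, h1⟩ := exists_lt_of_notMem_firstOcc h0 hi
  obtain ⟨t, ht, -, h2⟩ := exists_content_between' hs (Or.inr rfl) h hj h1
  refine ⟨t, fun hmem => ?_, by omega⟩
  obtain ⟨k, hk, h3⟩ := exists_le_content_eq hs h j (mem_firstOcc.mp hmem).1 (by omega)
  exact notMem_firstOcc_of_lt (hk.trans_lt ht) h3 hmem

theorem content_add_two_le_card_compl (hs : 1 < s) (h : contentSpace n s c ≠ ⊥) {i : Fin n}
    (hi : i ∉ firstOcc c) : c i + 2 ≤ (firstOcc c)ᶜ.card := by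
  have hpos : 0 < (firstOcc c)ᶜ.card := Finset.card_pos.mpr ⟨i, Finset.mem_compl.mpr hi⟩
  rcases lt_or_ge (c i) 0 with h0 | h0
  · omega
  have key : ∀ d : ℕ, (d : ℤ) ≤ c i + 1 → ∃ j ∉ firstOcc c, c j = c i - d := by
    intro d
    induction d with
    | zero => intro; exact ⟨i, hi, by simp⟩
    | succ d ih =>
      intro hd
      push_cast at hd
      obtain ⟨j, hj, h1⟩ := ih (by omega)
      obtain ⟨k, hk, h2⟩ := exists_prev_notMem_firstOcc hs h (by omega) hj
      exact ⟨k, hk, by push_cast; omega⟩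
  have hsub : Finset.Icc (-1) (c i) ⊆ (firstOcc c)ᶜ.image c := by
    intro x hx
    rw [Finset.mem_Icc] at hx
    obtain ⟨j, hj, h1⟩ := key (c i - x).toNat (by omega)
    exact Finset.mem_image.mpr ⟨j, Finset.mem_compl.mpr hj, by omega⟩
  have h1 := (Finset.card_le_card hsub).trans Finset.card_image_le
  rw [Int.card_Icc] at h1
  omega

theorem card_extras_le_succ (hs : 1 < s) (h : contentSpace n s c ≠ ⊥) (t : ℤ) :
    ((firstOcc c)ᶜ.filter fun i => c i = t).card ≤
      ((firstOcc c)ᶜ.filter fun i => c i = t + 1).card + 1 := by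
  refine Finset.card_le_of_interleaved ?_
  intro x hx y hy hxy _
  simp only [Finset.mem_filter, Finset.mem_compl] at hx hy ⊢
  obtain ⟨z, h1, h2, h3⟩ := exists_content_between' hs (Or.inl rfl) h hxy (hx.2.trans hy.2.symm)
  refine ⟨z, ⟨fun hz => ?_, by omega⟩, h1, h2⟩
  have hz0 := (mem_firstOcc.mp hz).1
  rcases lt_or_ge (c x) 0 with h0 | h0
  · refine notMem_firstOcc_of_lt (i := ⟨0, x.pos⟩) ?_ ?_ hz
    · rw [Fin.lt_def] at h1 ⊢
      exact (Nat.zero_le _).trans_lt h1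
    · rw [content_zero hs h]
      omega
  · obtain ⟨j, hj, h4⟩ := exists_lt_of_notMem_firstOcc h0 hx.1
    obtain ⟨u, -, hu, h5⟩ := exists_content_between' hs (Or.inl rfl) h hj h4
    exact notMem_firstOcc_of_lt (hu.trans h1) (by omega) hz

theorem card_extras_le (hs : 1 < s) (h : contentSpace n s c ≠ ⊥) (i : ℕ) :
    ((firstOcc c)ᶜ.filter fun k =>
      c k = (min (firstOcc c)ᶜ.card (firstOcc c).card : ℕ) - 1 - i).card ≤ i := by
  induction i with
  | zero =>
    rw [Nat.le_zero, Finset.card_eq_zero, Finset.filter_eq_empty_iff]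
    intro k hk
    have h1 := content_add_two_le_card hs h (Finset.mem_compl.mp hk)
    have h2 := content_add_two_le_card_compl hs h (Finset.mem_compl.mp hk)
    rw [Nat.cast_min, Nat.cast_zero]
    omega
  | succ i ih =>
    refine (card_extras_le_succ hs h _).trans (Nat.add_le_add_right ?_ 1)
    convert ih using 4
    push_cast
    ring_nf

theorem sum_extras_le (hs : 1 < s) (h : contentSpace n s c ≠ ⊥) :
    ∑ i ∈ (firstOcc c)ᶜ, (s ^ 2) ^ c i ≤
      (s ^ 2) ^ min (firstOcc c)ᶜ.card (firstOcc c).card / (s ^ 2 - 1) ^ 2 := by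
  set e := min (firstOcc c)ᶜ.card (firstOcc c).card with he
  have hq : 1 < s ^ 2 := by nlinarith
  set q := s ^ 2
  have hq0 : 0 < q := by linarith
  let g : Fin n → ℕ := fun i => ((e : ℤ) - 1 - c i).toNat
  have hg : ∀ i ∈ (firstOcc c)ᶜ, c i = e - 1 - g i := by
    intro k hk
    have h1 := content_add_two_le_card hs h (Finset.mem_compl.mp hk)
    have h2 := content_add_two_le_card_compl hs h (Finset.mem_compl.mp hk)
    have h3 : c k + 2 ≤ e := by rw [he, Nat.cast_min]; exact le_min h2 h1
    simp only [g]
    omega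
  obtain ⟨N, hN⟩ : ∃ N, ∀ i ∈ (firstOcc c)ᶜ, g i ∈ Finset.range N := by
    refine ⟨(Finset.univ.sup g) + 1, fun i _ => ?_⟩
    rw [Finset.mem_range, Nat.lt_succ_iff]
    exact Finset.le_sup (f := g) (Finset.mem_univ i)
  rw [← Finset.sum_fiberwise_of_maps_to hN]
  have hfib : ∀ k ∈ Finset.range N, ∑ i ∈ (firstOcc c)ᶜ with g i = k, q ^ c i ≤
      q ^ ((e : ℤ) - 1) * (k * (q⁻¹) ^ k) := by
    intro k _
    have h1 : ∀ i ∈ (firstOcc c)ᶜ.filter (fun i => g i = k),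
        q ^ c i ≤ q ^ ((e : ℤ) - 1) * (q⁻¹) ^ k := by
      intro i hi
      rw [Finset.mem_filter] at hi
      rw [hg i hi.1, hi.2, zpow_sub₀ hq0.ne', zpow_natCast, inv_pow, div_eq_mul_inv]
    refine (Finset.sum_le_card_nsmul _ _ _ h1).trans ?_
    rw [nsmul_eq_mul, mul_left_comm]
    refine mul_le_mul_of_nonneg_left (mul_le_mul_of_nonneg_right ?_ (by positivity))
      (by positivity)
    refine Nat.cast_le.mpr ((Finset.card_le_card ?_).trans (card_extras_le hs h k))
    intro i hi
    rw [Finset.mem_filter] at hi ⊢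
    exact ⟨hi.1, by rw [hg i hi.1, hi.2]⟩
  refine (Finset.sum_le_sum hfib).trans ?_
  rw [← Finset.mul_sum]
  have hsum : HasSum (fun k : ℕ => (k : ℝ) * q⁻¹ ^ k) (q⁻¹ / (1 - q⁻¹) ^ 2) := by
    refine hasSum_coe_mul_geometric_of_norm_lt_one ?_
    rw [Real.norm_of_nonneg (by positivity)]
    exact inv_lt_one_of_one_lt₀ hq
  have h1 := sum_le_hasSum (Finset.range N) (fun k _ => by positivity) hsum
  refine (mul_le_mul_of_nonneg_left h1 (by positivity)).trans (le_of_eq ?_)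
  have : q - 1 ≠ 0 := by linarith
  rw [zpow_sub_one₀ hq0.ne', zpow_natCast]
  field_simp

end ContentSums

section DimensionCount

open Equiv

variable {n : ℕ} {s : ℝ} {c : Fin n → ℤ}

theorem sum_finrank_eq_finrank_biSup {E ι : Type*} [AddCommGroup E] [Module ℝ E]
    [FiniteDimensional ℝ E] {V : ι → Submodule ℝ E} (hV : iSupIndep V) (S : Finset ι) :
    ∑ i ∈ S, Module.finrank ℝ (V i) = Module.finrank ℝ (⨆ i ∈ S, V i : Submodule ℝ E) := by
  classical
  induction S using Finset.induction_on with
  | empty =>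
    have : (⨆ i ∈ (∅ : Finset ι), V i) = ⊥ := by simp
    rw [this, finrank_bot, Finset.sum_empty]
  | insert a S ha ih =>
    rw [Finset.sum_insert ha, Finset.iSup_insert, ih]
    have hd := hV.disjoint_biSup (y := S) (x := a) (by simpa using ha)
    have h1 := Submodule.finrank_sup_add_finrank_inf_eq (V a) (⨆ i ∈ S, V i)
    simp only [Finset.mem_coe] at hd
    rw [hd.eq_bot, finrank_bot, add_zero] at h1
    exact h1.symm

theorem jmSpace_iSupIndep (n : ℕ) (s : ℝ) : iSupIndep (jmSpace n s) := by
  classical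
  exact (LinearMap.IsSymmetric.directSum_isInternal_of_pairwise_commute
    (T := fun k : Fin n => jmOp n s k) (fun k => jmOp_isSymmetric s k)
    fun i j _ => jmOp_commute s i j).submodule_iSupIndep

theorem contentSpace_iSupIndep (hs : 1 < s) : iSupIndep (contentSpace n s) := by
  have h1 : 1 < s ^ 2 := by nlinarith
  refine (jmSpace_iSupIndep n s).comp (f := fun (c : Fin n → ℤ) (k : Fin n) => (s ^ 2) ^ c k) ?_
  intro c c' h
  funext k
  exact zpow_right_injective₀ (by positivity) h1.ne' (congrFun h k)

/-- The vectors on which the first `m - 1` Hecke generators act by `q = s ^ 2`. -/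
noncomputable def trivialSpace (n : ℕ) (s : ℝ) (m : ℕ) :
    Submodule ℝ (EuclideanSpace ℝ (Perm (Fin n))) :=
  ⨅ (i : ℕ) (_ : i + 1 < m), Module.End.eigenspace (heckeGen n s i) (s ^ 2)

theorem mem_trivialSpace {m : ℕ} {v : EuclideanSpace ℝ (Perm (Fin n))} :
    v ∈ trivialSpace n s m ↔ ∀ i, i + 1 < m → heckeGen n s i v = (s ^ 2) • v := by
  simp [trivialSpace, Submodule.mem_iInf]

theorem perm_eq_one_of_strictMono {σ : Perm (Fin n)} (h : StrictMono σ) : σ = 1 := by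
  have h3 : h.orderIsoOfSurjective σ σ.surjective = OrderIso.refl _ := Subsingleton.elim _ _
  ext i
  exact congrArg Fin.val (congrArg (fun f : Fin n ≃o Fin n => f i) h3)

/-- A permutation increasing on `{0, …, m - 1}` is determined by its other values. -/
theorem perm_eq_of_increasing {m : ℕ} {p p' : Perm (Fin n)}
    (h : ∀ a b : Fin n, a < b → (b : ℕ) < m → p a < p b)
    (h' : ∀ a b : Fin n, a < b → (b : ℕ) < m → p' a < p' b)
    (heq : ∀ a : Fin n, m ≤ a → p a = p' a) : p = p' := by
  have hσ : ∀ a, p' ((p'⁻¹ * p) a) = p a := fun a => by simp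
  set σ := p'⁻¹ * p with hσdef
  have htail : ∀ a : Fin n, m ≤ a → σ a = a := fun a ha =>
    p'.injective ((hσ a).trans (heq a ha))
  have hhead : ∀ a : Fin n, (a : ℕ) < m → (σ a : ℕ) < m := by
    intro a ha
    by_contra hc
    have := σ.injective (htail (σ a) (not_lt.mp hc))
    rw [this] at hc
    exact hc ha
  have hmono : StrictMono σ := by
    intro a b hab
    rcases lt_or_ge (b : ℕ) m with hb | hb
    · by_contra hc
      have h1 := h a b hab hb
      have h2 : σ b ≠ σ a := fun e => hab.ne' (σ.injective e)
      have h3 := h' _ _ (lt_of_le_of_ne (not_lt.mp hc) h2)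
        (hhead a (lt_trans (Fin.lt_def.mp hab) hb))
      rw [hσ, hσ] at h3
      exact h1.not_gt h3
    · rw [htail b hb]
      rcases lt_or_ge (a : ℕ) m with ha | ha
      · exact Fin.lt_def.mpr ((hhead a ha).trans_le hb)
      · rwa [htail a ha]
  have := perm_eq_one_of_strictMono hmono
  rw [hσdef] at this
  exact (inv_mul_eq_one.mp this).symm

theorem apply_of_mem_trivialSpace {m : ℕ} {v : EuclideanSpace ℝ (Perm (Fin n))}
    (hv : v ∈ trivialSpace n s m) (p : Perm (Fin n)) {k : ℕ} (hk : k + 1 < n) (hm : k + 1 < m)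
    (hd : p ⟨k + 1, hk⟩ < p ⟨k, by omega⟩) :
    v p = s * v (p * swap ⟨k, by omega⟩ ⟨k + 1, hk⟩) := by
  have h := congrArg (fun f : EuclideanSpace ℝ (Perm (Fin n)) => f p) (mem_trivialSpace.mp hv k hm)
  simp only [heckeGen_of_lt s hk, heckeOp_apply, if_pos hd, PiLp.smul_apply, smul_eq_mul] at h
  linarith

theorem eq_zero_of_mem_trivialSpace {m : ℕ} {v : EuclideanSpace ℝ (Perm (Fin n))}
    (hv : v ∈ trivialSpace n s m)
    (h0 : ∀ p : Perm (Fin n), (∀ a b : Fin n, a < b → (b : ℕ) < m → p a < p b) → v p = 0) :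
    v = 0 := by
  suffices ∀ N, ∀ p : Perm (Fin n), inversions n p = N → v p = 0 by
    ext p
    exact this _ p rfl
  intro N
  induction N using Nat.strong_induction_on with
  | _ N ih =>
  intro p hp
  by_cases h : ∀ a b : Fin n, a < b → (b : ℕ) < m → p a < p b
  · exact h0 p h
  · push Not at h
    obtain ⟨a, b, hab, hb, hba⟩ := h
    obtain ⟨k, hk, hm, hd⟩ := exists_descent hab hb
      (lt_of_le_of_ne hba fun e => hab.ne' (p.injective e))
    have h1 := inversions_mul_swap_of_gt p hk hd
    rw [apply_of_mem_trivialSpace hv p hk hm hd, ih _ (by omega) _ rfl, mul_zero]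

theorem finrank_trivialSpace_le {m : ℕ} (hm : m ≤ n) :
    Module.finrank ℝ (trivialSpace n s m) ≤ n.descFactorial (n - m) := by
  classical
  let J := {p : Perm (Fin n) // ∀ a b : Fin n, a < b → (b : ℕ) < m → p a < p b}
  let res : trivialSpace n s m →ₗ[ℝ] (J → ℝ) :=
    { toFun := fun v p => (v : EuclideanSpace ℝ (Perm (Fin n))) p.1
      map_add' := fun _ _ => rfl
      map_smul' := fun _ _ => rfl }
  have hres : Function.Injective res := by
    rw [injective_iff_map_eq_zero]
    intro v hv
    exact Subtype.ext (eq_zero_of_mem_trivialSpace v.2 fun p hp => congrFun hv ⟨p, hp⟩)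
  refine (LinearMap.finrank_le_finrank_of_injective hres).trans ?_
  rw [Module.finrank_fintype_fun_eq_card]
  let tail : J → ({a : Fin n // m ≤ (a : ℕ)} ↪ Fin n) := fun p =>
    (Function.Embedding.subtype _).trans p.1.toEmbedding
  have htail : Function.Injective tail := by
    intro p p' h
    refine Subtype.ext (perm_eq_of_increasing p.2 p'.2 fun a ha => ?_)
    exact congrArg (fun f : {a : Fin n // m ≤ (a : ℕ)} ↪ Fin n => f ⟨a, ha⟩) h
  refine (Fintype.card_le_of_injective _ htail).trans (le_of_eq ?_)
  rw [Fintype.card_embedding_eq, Fintype.card_fin, Fintype.card_subtype]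
  congr 1
  have h1 : (Finset.univ.filter fun a : Fin n => m ≤ (a : ℕ)) =
      (Finset.univ.filter fun a : Fin n => (a : ℕ) < m)ᶜ := by
    ext a
    simp
  rw [h1, Finset.card_compl, Fin.card_filter_val_lt, Fintype.card_fin, min_eq_right hm]

theorem contentSpace_le_trivialSpace (hs : 1 < s) {m : ℕ} (hm : m ≤ n)
    (hc : ∀ k : Fin n, (k : ℕ) < m → c k = k) : contentSpace n s c ≤ trivialSpace n s m := by
  intro v hv
  rw [mem_trivialSpace]
  intro i hi
  refine heckeGen_apply_of_next_eq hs (hi.trans_le hm) ?_ hv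
  rw [zpow_eq_mul_zpow_iff hs, hc _ hi, hc _ (by simp only; omega)]
  push_cast
  rfl

/-- The total dimension of the content spaces whose words have a given set of first occurrences. -/
theorem sum_finrank_firstOcc_eq_le (hs : 1 < s) (S : Finset (Fin n → ℤ))
    (hS : ∀ c ∈ S, contentSpace n s c ≠ ⊥) (I : Finset (Fin n)) :
    ∑ c ∈ S with firstOcc c = I, Module.finrank ℝ (contentSpace n s c) ≤
      n.descFactorial (n - I.card) := by
  obtain ⟨ρ, h1, h2⟩ := exists_shuffle I
  have hI : I.card ≤ n := by simpa using Finset.card_le_univ I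
  refine le_trans ?_ (finrank_trivialSpace_le (s := s) hI)
  have hinj : Function.Injective fun c : Fin n → ℤ => c ∘ ρ :=
    fun c c' h => ρ.surjective.injective_comp_right h
  calc ∑ c ∈ S with firstOcc c = I, Module.finrank ℝ (contentSpace n s c)
      ≤ ∑ c ∈ S with firstOcc c = I, Module.finrank ℝ (contentSpace n s (c ∘ ρ)) := by
        refine Finset.sum_le_sum fun c hc => ?_
        rw [Finset.mem_filter] at hc
        refine finrank_contentSpace_le_comp hs ρ fun a b hab hlt => ?_
        obtain ⟨ha, hb⟩ := h2 a b hab hlt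
        rw [← hc.2] at ha hb
        exact far_of_firstOcc hs (hS c hc.1) hlt ha hb
    _ = Module.finrank ℝ (⨆ c ∈ S.filter fun c => firstOcc c = I, contentSpace n s (c ∘ ρ) :
          Submodule ℝ _) :=
        sum_finrank_eq_finrank_biSup ((contentSpace_iSupIndep hs).comp hinj) _
    _ ≤ Module.finrank ℝ (trivialSpace n s I.card) := by
        refine Submodule.finrank_mono (iSup₂_le fun c hc => ?_)
        rw [Finset.mem_filter] at hc
        refine contentSpace_le_trivialSpace hs hI fun k hk => ?_
        exact content_shuffle hs (hS c hc.1) (by rw [hc.2]; exact h1) (by rw [hc.2]; exact h2) k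
          (by rw [hc.2]; exact hk)

theorem sum_finrank_card_firstOcc_le (hs : 1 < s) (S : Finset (Fin n → ℤ))
    (hS : ∀ c ∈ S, contentSpace n s c ≠ ⊥) (m : ℕ) :
    ∑ c ∈ S with (firstOcc c).card = m, Module.finrank ℝ (contentSpace n s c) ≤
      n.choose m * n.descFactorial (n - m) := by
  have hmaps : ∀ c ∈ S.filter (fun c => (firstOcc c).card = m),
      firstOcc c ∈ Finset.powersetCard m Finset.univ := by
    intro c hc
    rw [Finset.mem_powersetCard]
    exact ⟨Finset.subset_univ _, (Finset.mem_filter.mp hc).2⟩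
  rw [← Finset.sum_fiberwise_of_maps_to hmaps]
  have hfib : ∀ I ∈ Finset.powersetCard m (Finset.univ : Finset (Fin n)),
      ∑ c ∈ S.filter (fun c => (firstOcc c).card = m) with firstOcc c = I,
        Module.finrank ℝ (contentSpace n s c) ≤ n.descFactorial (n - m) := by
    intro I hI
    rw [← (Finset.mem_powersetCard.mp hI).2]
    refine le_trans (Finset.sum_le_sum_of_subset ?_) (sum_finrank_firstOcc_eq_le hs S hS I)
    exact Finset.filter_subset_filter _ (Finset.filter_subset _ _)
  refine (Finset.sum_le_card_nsmul _ _ _ hfib).trans (le_of_eq ?_)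
  rw [Finset.card_powersetCard, Finset.card_univ, Fintype.card_fin, smul_eq_mul]

end DimensionCount

section EigenvalueBounds

/-- The eigenvalue of the lumped transvection chain attached to the content sum `D`. -/
noncomputable def chainEigenvalue (q : ℝ) (n : ℕ) (D : ℝ) : ℝ :=
  (q ^ (n - 1) * D - ∑ k ∈ Finset.range n, q ^ k) /
    ((q ^ (n - 1) - 1) * ∑ k ∈ Finset.range n, q ^ k)

theorem chainEigenvalue_geom {q : ℝ} (hq : 2 ≤ q) {n : ℕ} (hn : 2 ≤ n) :
    chainEigenvalue q n (∑ k ∈ Finset.range n, q ^ k) = 1 := by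
  have h1 : 1 < q ^ (n - 1) := one_lt_pow₀ (by linarith) (by omega)
  have h2 : 0 < ∑ k ∈ Finset.range n, q ^ k :=
    Finset.sum_pos (fun k _ => by positivity) ⟨0, by simp; omega⟩
  have h3 : q ^ (n - 1) - 1 ≠ 0 := by linarith
  unfold chainEigenvalue
  field_simp

theorem chainEigenvalue_eq {q : ℝ} (hq : 2 ≤ q) (n : ℕ) (D : ℝ) :
    chainEigenvalue q n D = (q ^ (n - 1) * ((q - 1) * D) - (q ^ n - 1)) /
      ((q ^ (n - 1) - 1) * (q ^ n - 1)) := by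
  have h1 : q - 1 ≠ 0 := by linarith
  have h2 : ∑ k ∈ Finset.range n, q ^ k = (q ^ n - 1) / (q - 1) := geom_sum_eq (by linarith) n
  rw [chainEigenvalue, h2, ← mul_div_mul_right _ _ h1]
  congr 1 <;> field_simp

theorem nat_mul_pow_le {q : ℝ} (hq : 2 ≤ q) {n m j : ℕ} (hmj : m + j = n) (hj : 1 ≤ j) :
    n * q ^ (j + min j m) ≤ 2 * j * q ^ n := by
  have hj' : (1 : ℝ) ≤ j := by exact_mod_cast hj
  rcases le_total j m with h | h
  · obtain ⟨d, rfl⟩ := Nat.exists_eq_add_of_le h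
    have h1 : 1 + (d : ℝ) ≤ q ^ d := by
      have := one_add_mul_le_pow (a := q - 1) (by linarith) d
      rw [add_sub_cancel] at this
      nlinarith [Nat.cast_nonneg (α := ℝ) d]
    rw [min_eq_left h, show n = j + j + d by omega, pow_add q (j + j) d]
    push_cast
    have h2 : (j + j + d : ℝ) ≤ 2 * j * q ^ d := by
      nlinarith [Nat.cast_nonneg (α := ℝ) d]
    calc (j + j + d : ℝ) * q ^ (j + j) ≤ 2 * j * q ^ d * q ^ (j + j) :=
          mul_le_mul_of_nonneg_right h2 (by positivity)
      _ = _ := by ring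
  · rw [min_eq_right h, show j + m = n by omega]
    refine mul_le_mul_of_nonneg_right ?_ (by positivity)
    exact_mod_cast (by omega : n ≤ 2 * j)

theorem chainEigenvalue_upper {q : ℝ} (hq : 2 ≤ q) {n m j : ℕ} (hn : 2 ≤ n) (hmj : m + j = n)
    (hj : 1 ≤ j) {D : ℝ}
    (hD : D ≤ ∑ k ∈ Finset.range m, q ^ k + q ^ min j m / (q - 1) ^ 2) :
    q ^ j * chainEigenvalue q n D ≤ 1 + 6 * j / n := by
  have hn0 : (0 : ℝ) < n := by exact_mod_cast (by omega : 0 < n)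
  have hq1 : 0 < q - 1 := by linarith
  rw [geom_sum_eq (by linarith)] at hD
  have hD2 : (q - 1) * D ≤ q ^ m - 1 + q ^ min j m := by
    have h1 := mul_le_mul_of_nonneg_left hD hq1.le
    have h2 : (q - 1) * ((q ^ m - 1) / (q - 1) + q ^ min j m / (q - 1) ^ 2) =
        q ^ m - 1 + q ^ min j m / (q - 1) := by field_simp
    rw [h2] at h1
    have h3 : q ^ min j m / (q - 1) ≤ q ^ min j m :=
      div_le_self (by positivity) (by linarith)
    linarith
  obtain ⟨N, rfl⟩ : ∃ N, n = N + 1 := ⟨n - 1, by omega⟩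
  rw [chainEigenvalue_eq hq, Nat.add_sub_cancel]
  set E := q ^ min j m with hE
  have ha : 2 ≤ q ^ N := hq.trans (le_self_pow₀ (by linarith) (by omega))
  have hb : q ^ (N + 1) = q ^ N * q := pow_succ q N
  have hb4 : 4 ≤ q ^ (N + 1) := by nlinarith
  have hJ : 1 ≤ q ^ j := one_le_pow₀ (by linarith)
  have hJ2 : 2 ≤ q ^ j := hq.trans (le_self_pow₀ (by linarith) (by omega))
  have hM : q ^ m * q ^ j = q ^ (N + 1) := by rw [← pow_add, hmj]
  have hJle : q ^ j ≤ q ^ (N + 1) := pow_le_pow_right₀ (by linarith) (by omega)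
  have hkey := nat_mul_pow_le hq hmj hj
  rw [pow_add, ← hE] at hkey
  have hden : 3 / 8 * (q ^ N * q ^ (N + 1)) ≤ (q ^ N - 1) * (q ^ (N + 1) - 1) := by nlinarith
  have hdenpos : 0 < (q ^ N - 1) * (q ^ (N + 1) - 1) := by nlinarith
  have hnum : q ^ j * (q ^ N * ((q - 1) * D) - (q ^ (N + 1) - 1)) ≤
      (q ^ N - 1) * (q ^ (N + 1) - 1) + q ^ N * (q ^ j * E) := by
    have h1 := mul_le_mul_of_nonneg_left hD2 (by positivity : 0 ≤ q ^ j * q ^ N)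
    have h2 : q ^ j * q ^ N * (q ^ m - 1 + E) =
        q ^ N * q ^ (N + 1) - q ^ j * q ^ N + q ^ N * (q ^ j * E) := by rw [← hM]; ring
    have h3 : q ^ (N + 1) + q ^ j ≤ q ^ j * q ^ (N + 1) := by nlinarith
    have h4 : q ^ N ≤ q ^ j * q ^ N := le_mul_of_one_le_left (by positivity) hJ
    nlinarith
  rw [← mul_div_assoc, div_le_iff₀ hdenpos]
  refine hnum.trans ?_
  rw [add_mul, one_mul]
  refine add_le_add le_rfl ?_
  have h5 : q ^ N * (q ^ j * E) ≤ q ^ N * (2 * j * q ^ (N + 1) / ((N + 1 : ℕ) : ℝ)) := by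
    refine mul_le_mul_of_nonneg_left ?_ (by positivity)
    rw [le_div_iff₀ hn0]
    linarith
  refine h5.trans ?_
  have h6 := mul_le_mul_of_nonneg_left hden (by positivity : 0 ≤ 6 * (j : ℝ) / ((N + 1 : ℕ) : ℝ))
  have h7 : q ^ N * (2 * j * q ^ (N + 1) / ((N + 1 : ℕ) : ℝ)) =
      8 / 9 * (6 * (j : ℝ) / ((N + 1 : ℕ) : ℝ) * (3 / 8 * (q ^ N * q ^ (N + 1)))) := by
    field_simp
    ring
  have h8 : 0 ≤ 6 * (j : ℝ) / ((N + 1 : ℕ) : ℝ) * (3 / 8 * (q ^ N * q ^ (N + 1))) := by positivity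
  rw [h7]
  linarith

theorem chainEigenvalue_lower {q : ℝ} (hq : 2 ≤ q) {n j : ℕ} (hn : 2 ≤ n) (hj : j < n) {D : ℝ}
    (hD : 0 ≤ D) : -(1 + 6 * j / n) ≤ q ^ j * chainEigenvalue q n D := by
  have hn0 : (0 : ℝ) < n := by exact_mod_cast (by omega : 0 < n)
  rw [chainEigenvalue_eq hq]
  obtain ⟨N, rfl⟩ : ∃ N, n = N + 1 := ⟨n - 1, by omega⟩
  rw [Nat.add_sub_cancel]
  have ha : 2 ≤ q ^ N := hq.trans (le_self_pow₀ (by linarith) (by omega))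
  have hb4 : 1 < q ^ (N + 1) := one_lt_pow₀ (by linarith) (by omega)
  have hbound : q ^ j ≤ (1 + 6 * j / ((N + 1 : ℕ) : ℝ)) * (q ^ N - 1) := by
    rcases Nat.lt_or_ge j N with h | h
    · have h1 : q ^ j * 2 ≤ q ^ N := by
        calc q ^ j * 2 ≤ q ^ j * q := mul_le_mul_of_nonneg_left hq (by positivity)
          _ = q ^ (j + 1) := (pow_succ q j).symm
          _ ≤ q ^ N := pow_le_pow_right₀ (by linarith) h
      have h2 : q ^ N - 1 ≤ (1 + 6 * j / ((N + 1 : ℕ) : ℝ)) * (q ^ N - 1) :=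
        le_mul_of_one_le_left (by linarith) (by
          have : 0 ≤ 6 * (j : ℝ) / ((N + 1 : ℕ) : ℝ) := by positivity
          linarith)
      have h3 : 1 ≤ q ^ j := one_le_pow₀ (by linarith)
      linarith
    · have hjN : j = N := by omega
      rw [hjN]
      have h2 : 1 ≤ 6 * (N : ℝ) / ((N + 1 : ℕ) : ℝ) := by
        rw [le_div_iff₀ hn0]
        push_cast
        have : (1 : ℝ) ≤ N := by exact_mod_cast (by omega : 1 ≤ N)
        linarith
      nlinarith
  have hdenpos : 0 < (q ^ N - 1) * (q ^ (N + 1) - 1) := by nlinarith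
  rw [← mul_div_assoc, le_div_iff₀ hdenpos]
  have h3 := mul_le_mul_of_nonneg_right hbound (by linarith : 0 ≤ q ^ (N + 1) - 1)
  have h4 : 0 ≤ q ^ j * (q ^ N * ((q - 1) * D)) := by
    have : 0 ≤ q - 1 := by linarith
    positivity
  nlinarith

theorem abs_chainEigenvalue_le {q : ℝ} (hq : 2 ≤ q) {n m j : ℕ} (hn : 2 ≤ n) (hmj : m + j = n)
    (hj : 1 ≤ j) (hm : 1 ≤ m) {D : ℝ} (hD0 : 0 ≤ D)
    (hD : D ≤ ∑ k ∈ Finset.range m, q ^ k + q ^ min j m / (q - 1) ^ 2) :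
    |chainEigenvalue q n D| ≤ Real.exp (-(j * (Real.log q - 6 / n))) := by
  have hqj : 0 < q ^ j := by positivity
  have h1 : |q ^ j * chainEigenvalue q n D| ≤ 1 + 6 * j / n :=
    abs_le.mpr ⟨chainEigenvalue_lower hq hn (by omega) hD0, chainEigenvalue_upper hq hn hmj hj hD⟩
  rw [abs_mul, abs_of_pos hqj] at h1
  have h2 : Real.exp (-(j * (Real.log q - 6 / n))) = Real.exp (6 * j / n) / q ^ j := by
    rw [← Real.exp_log hqj, Real.log_pow, ← Real.exp_sub]
    congr 1
    ring
  rw [h2, le_div_iff₀ hqj, mul_comm]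
  have := Real.add_one_le_exp (6 * j / n : ℝ)
  linarith

theorem chainEigenvalue_pow_le {q : ℝ} (hq : 2 ≤ q) {n m j : ℕ} (hn : 2 ≤ n) (hmj : m + j = n)
    (hj : 1 ≤ j) (hm : 1 ≤ m) {D : ℝ} (hD0 : 0 ≤ D)
    (hD : D ≤ ∑ k ∈ Finset.range m, q ^ k + q ^ min j m / (q - 1) ^ 2)
    (hlog : Real.log q > 6 / n) {c : ℝ} {ℓ : ℕ}
    (hℓ : (ℓ : ℝ) ≥ (Real.log n + c) / (Real.log q - 6 / n)) :
    chainEigenvalue q n D ^ (2 * ℓ) ≤ Real.exp (-2 * c) ^ j / (n : ℝ) ^ (2 * j) := by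
  have hn0 : (0 : ℝ) < n := by exact_mod_cast (by omega : 0 < n)
  have h1 := abs_chainEigenvalue_le hq hn hmj hj hm hD0 hD
  rw [← (even_two_mul ℓ).pow_abs]
  refine (pow_le_pow_left₀ (abs_nonneg _) h1 _).trans ?_
  rw [ge_iff_le, div_le_iff₀ (by linarith)] at hℓ
  have h2 : (n : ℝ) ^ (2 * j) = Real.exp (2 * j * Real.log n) := by
    rw [← Real.rpow_natCast, Real.rpow_def_of_pos hn0]
    push_cast
    ring_nf
  rw [h2, ← Real.exp_nat_mul, ← Real.exp_nat_mul, ← Real.exp_sub, Real.exp_le_exp]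
  push_cast
  have h3 := mul_le_mul_of_nonneg_left hℓ (by positivity : (0 : ℝ) ≤ 2 * j)
  nlinarith

theorem choose_mul_descFactorial_le {n m j : ℕ} (hmj : m + j = n) :
    (n.choose m * n.descFactorial j : ℝ) ≤ (n : ℝ) ^ (2 * j) / j.factorial := by
  have h1 : n.choose m = n.choose j := by
    rw [← hmj]; exact Nat.choose_symm_add
  rw [h1, two_mul, pow_add, mul_div_right_comm]
  refine mul_le_mul (Nat.choose_le_pow_div _ _) ?_ (by positivity) (by positivity)
  exact_mod_cast Nat.descFactorial_le_pow n j

end EigenvalueBounds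

section Biinvariant

open Equiv Matrix

variable {n : ℕ} {F : Type*} [Field F]

theorem mul_mem_borelSubgroup {a b : Matrix (Fin n) (Fin n) F} (ha : a ∈ borelSubgroup n F)
    (hb : b ∈ borelSubgroup n F) : a * b ∈ borelSubgroup n F :=
  ⟨ha.1.mul hb.1, by rw [det_mul]; exact ha.2.mul hb.2⟩

theorem one_mem_borelSubgroup : (1 : Matrix (Fin n) (Fin n) F) ∈ borelSubgroup n F :=
  ⟨blockTriangular_one, by simp⟩

theorem inv_mem_borelSubgroup {b : Matrix (Fin n) (Fin n) F} (hb : b ∈ borelSubgroup n F) :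
    b⁻¹ ∈ borelSubgroup n F := by
  obtain ⟨h1, h2⟩ := hb
  have := b.invertibleOfIsUnitDet h2
  exact ⟨blockTriangular_inv_of_blockTriangular h1, by
    rw [det_nonsing_inv]; exact h2.ringInverse⟩

theorem transvection_mem_borelSubgroup {i j : Fin n} (hij : i < j) (t : F) :
    transvection i j t ∈ borelSubgroup n F :=
  ⟨blockTriangular_transvection hij.le t, by rw [det_transvection_of_ne _ _ hij.ne]; exact isUnit_one⟩

theorem diagonal_mem_borelSubgroup {d : Fin n → F} (hd : ∀ i, d i ≠ 0) :
    diagonal d ∈ borelSubgroup n F :=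
  ⟨blockTriangular_diagonal d, by
    rw [det_diagonal, isUnit_iff_ne_zero]
    exact Finset.prod_ne_zero_iff.mpr fun i _ => hd i⟩

theorem diag_ne_zero_of_mem_borelSubgroup {b : Matrix (Fin n) (Fin n) F}
    (hb : b ∈ borelSubgroup n F) (i : Fin n) : b i i ≠ 0 := by
  have h := hb.2
  rw [det_of_isUpperTriangular hb.1, isUnit_iff_ne_zero] at h
  exact Finset.prod_ne_zero_iff.mp h i (Finset.mem_univ i)

theorem permMatrix_mul_apply (σ : Perm (Fin n)) (M : Matrix (Fin n) (Fin n) F) (a b : Fin n) :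
    (σ.permMatrix F * M) a b = M (σ a) b := by
  rw [Perm.permMatrix, PEquiv.toMatrix_toPEquiv_mul]
  rfl

theorem mul_permMatrix_apply (σ : Perm (Fin n)) (M : Matrix (Fin n) (Fin n) F) (a b : Fin n) :
    (M * σ.permMatrix F) a b = M a (σ.symm b) := by
  rw [Perm.permMatrix, PEquiv.mul_toMatrix_toPEquiv]
  rfl

theorem permMatrix_swap_mul_self (i j : Fin n) :
    (swap i j).permMatrix F * (swap i j).permMatrix F = 1 := by
  rw [← permMatrix_mul, Equiv.swap_mul_self, permMatrix_one]

theorem swap_lt_swap {i j : Fin n} (hij : (j : ℕ) = i + 1) {a b : Fin n} (hab : a < b)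
    (h : ¬(a = i ∧ b = j)) : swap i j a < swap i j b := by
  obtain ⟨i, hi⟩ := i
  obtain ⟨j, hj⟩ := j
  obtain rfl : j = i + 1 := hij
  exact swap_next_lt_swap_next hj hab h

theorem swap_conj_mem_borelSubgroup {i j : Fin n} (hij : (j : ℕ) = i + 1)
    {c : Matrix (Fin n) (Fin n) F} (hc : c ∈ borelSubgroup n F) (h0 : c i j = 0) :
    (swap i j).permMatrix F * c * (swap i j).permMatrix F ∈ borelSubgroup n F := by
  refine ⟨fun a b hab => ?_, ?_⟩
  · rw [mul_permMatrix_apply, permMatrix_mul_apply, symm_swap]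
    by_cases h : b = i ∧ a = j
    · rw [h.1, h.2, swap_apply_left, swap_apply_right, h0]
    · exact hc.1 (swap_lt_swap hij hab h)
  · have h1 := congrArg det (permMatrix_swap_mul_self (F := F) i j)
    rw [det_mul, det_one] at h1
    rw [det_mul, det_mul, mul_right_comm, h1, one_mul]
    exact hc.2

/-- A function on matrices invariant under both translation actions of the Borel subgroup. -/
structure IsBiinvariant (h : Matrix (Fin n) (Fin n) F → ℝ) : Prop where
  left : ∀ b ∈ borelSubgroup n F, ∀ g, h (b * g) = h g
  right : ∀ b ∈ borelSubgroup n F, ∀ g, h (g * b) = h g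

/-- Convolution with the double coset of the transposition of `i` and `j`. -/
def cosetOp [Fintype F] (i j : Fin n) (h : Matrix (Fin n) (Fin n) F → ℝ) :
    Matrix (Fin n) (Fin n) F → ℝ :=
  fun g => ∑ t : F, h ((swap i j).permMatrix F * transvection i j t * g)

theorem exists_swap_transvection_mul {i j : Fin n} (hij : (j : ℕ) = i + 1)
    {b : Matrix (Fin n) (Fin n) F} (hb : b ∈ borelSubgroup n F) (t : F) :
    ∃ b' ∈ borelSubgroup n F, (swap i j).permMatrix F * transvection i j t * b =
      b' * ((swap i j).permMatrix F * transvection i j ((b i j + t * b j j) / b i i)) := by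
  have hlt : i < j := by rw [Fin.lt_def]; omega
  set u := (b i j + t * b j j) / b i i with hu
  set c := transvection i j t * b * transvection i j (-u) with hc
  have hcb : c ∈ borelSubgroup n F := mul_mem_borelSubgroup
    (mul_mem_borelSubgroup (transvection_mem_borelSubgroup hlt t) hb)
    (transvection_mem_borelSubgroup hlt _)
  have hc0 : c i j = 0 := by
    have hbi := diag_ne_zero_of_mem_borelSubgroup hb i
    have hji : b j i = 0 := hb.1 hlt
    rw [hc, mul_transvection_apply_same, transvection_mul_apply_same, transvection_mul_apply_same,
      hji, hu]
    field_simp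
    ring
  refine ⟨_, swap_conj_mem_borelSubgroup hij hcb hc0, ?_⟩
  have h1 : transvection i j (-u) * transvection i j u = (1 : Matrix (Fin n) (Fin n) F) := by
    rw [transvection_mul_transvection_same _ _ hlt.ne, neg_add_cancel, transvection_zero]
  have h2 := permMatrix_swap_mul_self (F := F) i j
  set w := (swap i j).permMatrix F
  calc w * transvection i j t * b = w * (transvection i j t * b) := by rw [mul_assoc]
    _ = w * (transvection i j t * b * (transvection i j (-u) * transvection i j u)) := by
      rw [h1, mul_one]
    _ = w * c * transvection i j u := by rw [hc]; simp only [mul_assoc]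
    _ = w * c * (w * w) * transvection i j u := by rw [h2, mul_one]
    _ = _ := by simp only [mul_assoc]

theorem IsBiinvariant.cosetOp [Fintype F] {h : Matrix (Fin n) (Fin n) F → ℝ} (hh : IsBiinvariant h)
    {i j : Fin n} (hij : (j : ℕ) = i + 1) : IsBiinvariant (cosetOp i j h) := by
  refine ⟨fun b hb g => ?_, fun b hb g => ?_⟩
  · have hbi := diag_ne_zero_of_mem_borelSubgroup hb i
    have hbj := diag_ne_zero_of_mem_borelSubgroup hb j
    have hinj : Function.Injective fun t : F => (b i j + t * b j j) / b i i := by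
      intro t t' htt
      have h1 : (b i j + t * b j j) / b i i = (b i j + t' * b j j) / b i i := htt
      rw [div_left_inj' hbi, add_right_inj] at h1
      exact mul_right_cancel₀ hbj h1
    unfold TransvectionChain.cosetOp
    rw [← (Finite.injective_iff_bijective.mp hinj).sum_comp
      fun t => h ((swap i j).permMatrix F * transvection i j t * g)]
    refine Finset.sum_congr rfl fun t _ => ?_
    obtain ⟨b', hb', heq⟩ := exists_swap_transvection_mul hij hb t
    rw [← mul_assoc, heq, mul_assoc b', hh.left b' hb']
  · refine Finset.sum_congr rfl fun t _ => ?_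
    rw [← mul_assoc, hh.right b hb]

theorem swap_mul_transvection {i j : Fin n} (hij : i ≠ j) {t : F} (ht : t ≠ 0) :
    (swap i j).permMatrix F * transvection i j t = transvection i j t⁻¹ *
      (diagonal (Function.update (Function.update 1 i (-t⁻¹)) j t) * transvection j i t⁻¹) := by
  ext a b
  rw [permMatrix_mul_apply]
  by_cases hai : a = i
  · subst hai
    rw [swap_apply_left, transvection_mul_apply_same, diagonal_mul, diagonal_mul,
      Function.update_of_ne hij, Function.update_self, Function.update_self,
      transvection, transvection]
    simp only [Matrix.add_apply, one_apply, single_apply, hij.symm, hij]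
    by_cases hbj : j = b
    · subst hbj; simp [hij, ht]
    · by_cases hba : a = b
      · subst hba; simp [hij.symm, ht]
      · simp [hbj, hba]
  · by_cases haj : a = j
    · subst haj
      rw [swap_apply_right, transvection_mul_apply_of_ne _ _ _ _ hij.symm, diagonal_mul,
        Function.update_self, transvection, transvection]
      simp only [Matrix.add_apply, one_apply, single_apply, mul_add]
      by_cases hbj : a = b
      · subst hbj; simp [hij]
      · by_cases hba : i = b
        · subst hba; simp [hij.symm, ht]
        · simp [hbj, hba]
    · rw [swap_apply_of_ne_of_ne hai haj, transvection_mul_apply_of_ne _ _ _ _ hai, diagonal_mul,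
        Function.update_of_ne haj, Function.update_of_ne hai, transvection, transvection]
      simp [Ne.symm hai, Ne.symm haj]

theorem transvection_mul_permMatrix (σ : Perm (Fin n)) (i j : Fin n) (t : F) :
    transvection i j t * σ.permMatrix F = σ.permMatrix F * transvection (σ i) (σ j) t := by
  ext a b
  rw [mul_permMatrix_apply, permMatrix_mul_apply, transvection, transvection]
  simp only [Matrix.add_apply, one_apply, single_apply, EmbeddingLike.apply_eq_iff_eq,
    Equiv.eq_symm_apply]

/-- The weighted restriction to permutation matrices of a function on matrices. -/
noncomputable def weightedRestrict (s : ℝ) (h : Matrix (Fin n) (Fin n) F → ℝ) :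
    EuclideanSpace ℝ (Perm (Fin n)) :=
  WithLp.toLp 2 fun σ => s ^ inversions n σ * h (σ.permMatrix F)

theorem weightedRestrict_cosetOp [Fintype F] {s : ℝ} (hs : s ^ 2 = Fintype.card F)
    {h : Matrix (Fin n) (Fin n) F → ℝ} (hh : IsBiinvariant h) {k : ℕ} (hk : k + 1 < n) :
    weightedRestrict s (cosetOp ⟨k, Nat.lt_of_succ_lt hk⟩ ⟨k + 1, hk⟩ h) =
      heckeGen n s k (weightedRestrict s h) := by
  classical
  ext σ
  rw [heckeGen_of_lt s hk, heckeOp_apply]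
  set i : Fin n := ⟨k, Nat.lt_of_succ_lt hk⟩ with hi
  set j : Fin n := ⟨k + 1, hk⟩ with hj
  have hij : i ≠ j := by simp [hi, hj]
  change s ^ inversions n σ * cosetOp i j h (σ.permMatrix F) =
    s * (s ^ inversions n (σ * swap i j) * h ((σ * swap i j).permMatrix F)) +
      if σ j < σ i then (s ^ 2 - 1) * (s ^ inversions n σ * h (σ.permMatrix F)) else 0
  rcases lt_or_gt_of_ne fun he => hij (σ.injective he) with hlt | hgt
  · rw [if_neg hlt.not_gt, inversions_mul_swap_of_lt σ hk hlt]
    have h1 : ∀ t : F, h ((swap i j).permMatrix F * transvection i j t * σ.permMatrix F) =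
        h ((σ * swap i j).permMatrix F) := fun t => by
      rw [mul_assoc, transvection_mul_permMatrix, ← mul_assoc, ← permMatrix_mul,
        hh.right _ (transvection_mem_borelSubgroup hlt t)]
    simp only [cosetOp, h1, Finset.sum_const, Finset.card_univ, nsmul_eq_mul, ← hs]
    ring
  · rw [if_pos hgt, ← inversions_mul_swap_of_gt σ hk hgt]
    have h0 : h ((swap i j).permMatrix F * transvection i j 0 * σ.permMatrix F) =
        h ((σ * swap i j).permMatrix F) := by
      rw [transvection_zero, mul_one, ← permMatrix_mul]
    have h1 : ∀ t ∈ Finset.univ.erase (0 : F),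
        h ((swap i j).permMatrix F * transvection i j t * σ.permMatrix F) =
        h (σ.permMatrix F) := fun t ht => by
      have ht0 : t ≠ 0 := Finset.ne_of_mem_erase ht
      have hij' : i < j := by simp [hi, hj]
      rw [swap_mul_transvection hij ht0, mul_assoc, mul_assoc,
        hh.left _ (transvection_mem_borelSubgroup hij' _), hh.left _ (diagonal_mem_borelSubgroup ?_),
        transvection_mul_permMatrix, hh.right _ (transvection_mem_borelSubgroup hgt _)]
      intro a
      by_cases haj : a = j
      · rw [haj, Function.update_self]; exact ht0
      · rw [Function.update_of_ne haj]
        by_cases hai : a = i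
        · rw [hai, Function.update_self]; simpa using ht0
        · rw [Function.update_of_ne hai]; exact one_ne_zero
    have h2 : cosetOp i j h (σ.permMatrix F) =
        h ((σ * swap i j).permMatrix F) + (s ^ 2 - 1) * h (σ.permMatrix F) := by
      rw [cosetOp, ← Finset.add_sum_erase _ _ (Finset.mem_univ (0 : F)), h0,
        Finset.sum_congr rfl h1, Finset.sum_const, Finset.card_erase_of_mem (Finset.mem_univ _),
        Finset.card_univ, nsmul_eq_mul, Nat.cast_sub Fintype.card_pos, Nat.cast_one, hs]
    rw [h2]
    ring

end Biinvariant

section HookSum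

open Equiv Matrix

variable {n : ℕ} {F : Type*} [Field F]

/-- The elementary matrix with off-diagonal part `x` in row `k`. -/
def rowShear (k : Fin n) (x : Fin n → F) : Matrix (Fin n) (Fin n) F :=
  1 + vecMulVec (Pi.single k 1) x

/-- The elementary matrix with off-diagonal part `y` in column `k`. -/
def colShear (k : Fin n) (y : Fin n → F) : Matrix (Fin n) (Fin n) F :=
  1 + vecMulVec y (Pi.single k 1)

theorem single_eq_vecMulVec (i j : Fin n) (t : F) :
    Matrix.single i j t = vecMulVec (Pi.single i 1) (Pi.single j t) := by
  ext a b
  simp only [single_apply, vecMulVec_apply, Pi.single_apply, eq_comm (a := i), eq_comm (a := j)]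
  by_cases h1 : a = i <;> by_cases h2 : b = j <;> simp [h1, h2]

theorem permMatrix_swap_mulVec_single (i j : Fin n) :
    (swap i j).permMatrix F *ᵥ Pi.single i 1 = Pi.single j 1 := by
  ext a
  rw [permMatrix_mulVec]
  simp only [Function.comp_apply, Pi.single_apply, swap_apply_eq_iff, swap_apply_left]

theorem single_vecMul_permMatrix_swap (i j : Fin n) (t : F) :
    Pi.single i t ᵥ* (swap i j).permMatrix F = Pi.single j t := by
  ext a
  rw [vecMul_permMatrix]
  simp only [Function.comp_apply, Pi.single_apply, symm_swap, swap_apply_eq_iff, swap_apply_left]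

theorem permMatrix_swap_mulVec_of_eq_zero {i j : Fin n} {x : Fin n → F} (hi : x i = 0)
    (hj : x j = 0) : (swap i j).permMatrix F *ᵥ x = x := by
  ext a
  rw [permMatrix_mulVec, Function.comp_apply]
  by_cases h1 : a = i
  · rw [h1, swap_apply_left, hi, hj]
  · by_cases h2 : a = j
    · rw [h2, swap_apply_right, hi, hj]
    · rw [swap_apply_of_ne_of_ne h1 h2]

theorem vecMul_permMatrix_swap_of_eq_zero {i j : Fin n} {x : Fin n → F} (hi : x i = 0)
    (hj : x j = 0) : x ᵥ* (swap i j).permMatrix F = x := by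
  rw [vecMul_permMatrix, symm_swap, ← permMatrix_mulVec, permMatrix_swap_mulVec_of_eq_zero hi hj]

variable [Fintype F] [DecidableEq F]

/-- The vectors supported on the first `k` coordinates. -/
def initialVectors (n : ℕ) (F : Type*) [Field F] [Fintype F] [DecidableEq F] (k : ℕ) :
    Finset (Fin n → F) :=
  Finset.univ.filter fun x => ∀ i : Fin n, k ≤ i → x i = 0

/-- The vectors vanishing on the first `k` coordinates. -/
def finalVectors (n : ℕ) (F : Type*) [Field F] [Fintype F] [DecidableEq F] (k : ℕ) :
    Finset (Fin n → F) :=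
  Finset.univ.filter fun x => ∀ i : Fin n, (i : ℕ) < k → x i = 0

theorem mem_initialVectors {k : ℕ} {x : Fin n → F} :
    x ∈ initialVectors n F k ↔ ∀ i : Fin n, k ≤ i → x i = 0 := by
  simp [initialVectors]

theorem mem_finalVectors {k : ℕ} {x : Fin n → F} :
    x ∈ finalVectors n F k ↔ ∀ i : Fin n, (i : ℕ) < k → x i = 0 := by
  simp [finalVectors]

theorem initialVectors_zero : initialVectors n F 0 = {0} := by
  ext x
  simp [mem_initialVectors, funext_iff]

theorem card_filter_vectors (p : Fin n → Prop) [DecidablePred p] :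
    (Finset.univ.filter fun x : Fin n → F => ∀ i, ¬p i → x i = 0).card =
      Fintype.card F ^ (Finset.univ.filter p).card := by
  have h : (Finset.univ.filter fun x : Fin n → F => ∀ i, ¬p i → x i = 0) =
      Fintype.piFinset fun i => if p i then Finset.univ else {0} := by
    ext x
    simp only [Finset.mem_filter, Finset.mem_univ, true_and, Fintype.mem_piFinset]
    refine forall_congr' fun i => ?_
    by_cases hi : p i <;> simp [hi]
  rw [h, Fintype.card_piFinset]
  simp only [apply_ite Finset.card, Finset.card_univ, Finset.card_singleton]
  rw [Finset.prod_ite, Finset.prod_const, Finset.prod_const_one, mul_one]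

theorem card_initialVectors {k : ℕ} (hk : k ≤ n) :
    (initialVectors n F k).card = Fintype.card F ^ k := by
  have h := card_filter_vectors (F := F) fun i : Fin n => (i : ℕ) < k
  simp only [not_lt] at h
  rw [initialVectors, h, Fin.card_filter_val_lt, min_eq_right hk]

theorem card_finalVectors {k : ℕ} (hk : k ≤ n) :
    (finalVectors n F k).card = Fintype.card F ^ (n - k) := by
  have h := card_filter_vectors (F := F) fun i : Fin n => k ≤ (i : ℕ)
  simp only [not_le] at h
  rw [finalVectors, h]
  congr 1
  have h1 := Finset.card_filter_add_card_filter_not (s := (Finset.univ : Finset (Fin n)))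
    fun i : Fin n => (i : ℕ) < k
  simp only [not_lt, Fin.card_filter_val_lt, Finset.card_univ, Fintype.card_fin] at h1
  omega

theorem sum_initialVectors_succ {M : Type*} [AddCommMonoid M] (i : Fin n) (f : (Fin n → F) → M) :
    ∑ x ∈ initialVectors n F (i + 1), f x =
      ∑ a : F, ∑ x ∈ initialVectors n F i, f (x + Pi.single i a) := by
  rw [← Finset.sum_product']
  refine Finset.sum_nbij' (fun x => (x i, Function.update x i 0))
    (fun p => p.2 + Pi.single i p.1) ?_ ?_ ?_ ?_ ?_
  · intro x hx
    rw [mem_initialVectors] at hx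
    simp only [Finset.mem_product, Finset.mem_univ, true_and, mem_initialVectors]
    intro j hj
    by_cases hji : j = i
    · rw [hji, Function.update_self]
    · rw [Function.update_of_ne hji]
      exact hx j (lt_of_le_of_ne hj fun h => hji (Fin.ext h.symm))
  · rintro ⟨a, x⟩ hx
    simp only [Finset.mem_product, Finset.mem_univ, true_and, mem_initialVectors] at hx
    rw [mem_initialVectors]
    intro j hj
    have hji : j ≠ i := by rintro rfl; omega
    simp [hx j (by omega), hji]
  · intro x _
    ext j
    by_cases hji : j = i
    · subst hji; simp
    · simp [hji]
  · rintro ⟨a, x⟩ hx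
    simp only [Finset.mem_product, Finset.mem_univ, true_and, mem_initialVectors] at hx
    ext j
    · simp [hx i le_rfl]
    · by_cases hji : j = i
      · subst hji; simp [hx j le_rfl]
      · simp [hji]
  · intro x _
    congr 1
    ext j
    by_cases hji : j = i
    · subst hji; simp
    · simp [hji]

/-- The average of `h` over products of lower and upper elementary matrices meeting at `k`. -/
noncomputable def hookSum (k : Fin n) (h : Matrix (Fin n) (Fin n) F → ℝ) :
    Matrix (Fin n) (Fin n) F → ℝ :=
  fun g => ((Fintype.card F : ℝ) ^ (k : ℕ))⁻¹ * ∑ x ∈ initialVectors n F k,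
    ∑ y ∈ initialVectors n F k, h (rowShear k x * colShear k y * g)

theorem rowShear_succ {i j : Fin n} (hij : (j : ℕ) = i + 1) {x : Fin n → F}
    (hx : x ∈ initialVectors n F i) (a : F) : rowShear j (x + Pi.single i a) =
      (swap i j).permMatrix F * transvection i j a * rowShear i x * (swap i j).permMatrix F := by
  rw [mem_initialVectors] at hx
  have hi := hx i le_rfl
  have hj := hx j (by omega)
  have h2 := permMatrix_swap_mul_self (F := F) i j
  have h1 : transvection i j a * rowShear i x =
      1 + vecMulVec (Pi.single i 1) (x + Pi.single j a) := by
    have hne : j ≠ i := by rintro rfl; omega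
    rw [transvection, rowShear, single_eq_vecMulVec, add_mul, one_mul, mul_add, mul_one,
      vecMulVec_mul_vecMulVec, single_dotProduct, Pi.single_apply, if_neg hne, mul_zero, zero_smul,
      vecMulVec_zero, vecMulVec_add]
    abel
  rw [mul_assoc _ (transvection i j a), h1, mul_add, add_mul, mul_one, h2, mul_vecMulVec,
    vecMulVec_mul, permMatrix_swap_mulVec_single, add_vecMul,
    vecMul_permMatrix_swap_of_eq_zero hi hj, Equiv.swap_comm i j, single_vecMul_permMatrix_swap, rowShear]

theorem colShear_succ {i j : Fin n} (hij : (j : ℕ) = i + 1) {y : Fin n → F}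
    (hy : y ∈ initialVectors n F i) (b : F) : colShear j (y + Pi.single i b) =
      (swap i j).permMatrix F * colShear i y * ((swap i j).permMatrix F * transvection i j b) := by
  rw [mem_initialVectors] at hy
  have hi := hy i le_rfl
  have hj := hy j (by omega)
  have h2 := permMatrix_swap_mul_self (F := F) i j
  have hne : j ≠ i := by rintro rfl; omega
  rw [← mul_assoc, colShear, colShear, mul_add, add_mul, mul_one, h2, mul_vecMulVec, vecMulVec_mul,
    permMatrix_swap_mulVec_of_eq_zero hi hj, single_vecMul_permMatrix_swap, transvection, mul_add,
    mul_one, add_mul, one_mul, single_eq_vecMulVec, vecMulVec_mul_vecMulVec, single_dotProduct,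
    Pi.single_apply, if_neg hne, mul_zero, zero_smul, vecMulVec_zero, add_zero,
    add_vecMulVec]
  rw [show (Pi.single i b : Fin n → F) = b • Pi.single i 1 by simp [← Pi.single_smul], 
    show (Pi.single j b : Fin n → F) = b • Pi.single j 1 by simp [← Pi.single_smul],
    smul_vecMulVec, vecMulVec_smul]
  abel

theorem hookSum_succ {i j : Fin n} (hij : (j : ℕ) = i + 1) (h : Matrix (Fin n) (Fin n) F → ℝ) :
    hookSum j h =
      (Fintype.card F : ℝ)⁻¹ • cosetOp i j (hookSum i (cosetOp i j h)) := by
  ext g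
  have hmul : ∀ x ∈ initialVectors n F i, ∀ y ∈ initialVectors n F i, ∀ a b : F,
      rowShear j (x + Pi.single i a) * colShear j (y + Pi.single i b) * g =
      (swap i j).permMatrix F * transvection i j a * (rowShear i x * colShear i y *
        ((swap i j).permMatrix F * transvection i j b * g)) := by
    intro x hx y hy a b
    have h2 := permMatrix_swap_mul_self (F := F) i j
    rw [rowShear_succ hij hx, colShear_succ hij hy]
    set w := (swap i j).permMatrix F
    calc _ = w * transvection i j a * rowShear i x * (w * w) * colShear i y *
        (w * transvection i j b) * g := by simp only [mul_assoc]
      _ = _ := by rw [h2, mul_one]; simp only [mul_assoc]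
  simp only [Pi.smul_apply, smul_eq_mul, hookSum, cosetOp, hij, ← Finset.mul_sum,
    sum_initialVectors_succ i]
  rw [← mul_assoc, ← mul_inv, mul_comm (Fintype.card F : ℝ), ← pow_succ]
  congr 1
  calc _ = ∑ a : F, ∑ x ∈ initialVectors n F i, ∑ b : F, ∑ y ∈ initialVectors n F i,
        h ((swap i j).permMatrix F * transvection i j a * (rowShear i x * colShear i y *
        ((swap i j).permMatrix F * transvection i j b * g))) := by
        refine Finset.sum_congr rfl fun a _ => Finset.sum_congr rfl fun x hx =>
          Finset.sum_congr rfl fun b _ => Finset.sum_congr rfl fun y hy => ?_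
        rw [hmul x hx y hy]
    _ = _ := by
        rw [Finset.sum_comm, Finset.sum_comm (s := Finset.univ (α := F))]
        refine Finset.sum_congr rfl fun x _ => ?_
        rw [Finset.sum_comm]
        refine Finset.sum_congr rfl fun b _ => ?_
        rw [Finset.sum_comm]

end HookSum

section TransvectionSum

open Equiv Matrix

variable {n : ℕ} {F : Type*} [Field F]

theorem colShear_mul_rowShear_mul_colShear (k : Fin n) (y a : Fin n → F) :
    colShear k y * rowShear k a * colShear k (-y) =
      colShear k y * colShear k (-y) +
        vecMulVec (Pi.single k 1 + y) (a - (a ⬝ᵥ y) • Pi.single k 1) := by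
  rw [rowShear, mul_add, add_mul, mul_one, mul_vecMulVec, vecMulVec_mul]
  congr 2
  · rw [colShear, add_mulVec, one_mulVec, vecMulVec_mulVec, single_dotProduct, Pi.single_eq_same]
    simp
  · rw [colShear, vecMul_add, vecMul_one, vecMul_vecMulVec, dotProduct_neg, neg_smul, sub_eq_add_neg]

theorem colShear_mul_colShear_neg {k : Fin n} {y : Fin n → F} (hy : y k = 0) :
    colShear k y * colShear k (-y) = 1 := by
  rw [colShear, colShear, mul_add, mul_one, add_mul, one_mul, vecMulVec_mul_vecMulVec,
    single_dotProduct, Pi.neg_apply, hy, neg_zero, mul_zero, zero_smul, vecMulVec_zero,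
    neg_vecMulVec]
  abel

theorem rowShear_mul_rowShear {k : Fin n} {z : Fin n → F} (hz : z k = 0) (x : Fin n → F) :
    rowShear k z * rowShear k x = rowShear k (z + x) := by
  rw [rowShear, rowShear, rowShear, mul_add, mul_one, add_mul, one_mul, vecMulVec_mul_vecMulVec,
    dotProduct_single, hz, zero_mul, zero_smul, vecMulVec_zero, vecMulVec_add]
  abel

theorem rowShear_zero (k : Fin n) : rowShear k (0 : Fin n → F) = 1 := by
  rw [rowShear, vecMulVec_zero, add_zero]

theorem colShear_zero (k : Fin n) : colShear k (0 : Fin n → F) = 1 := by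
  rw [colShear, zero_vecMulVec, add_zero]

theorem conj_rowShear {k : Fin n} {y : Fin n → F} (hy : y k = 0) (a : Fin n → F) :
    colShear k y * rowShear k a * colShear k (-y) =
      1 + vecMulVec (Pi.single k 1 + y) (a - (a ⬝ᵥ y) • Pi.single k 1) := by
  rw [colShear_mul_rowShear_mul_colShear, colShear_mul_colShear_neg hy]

theorem isUnit_det_of_mul_eq_one {a b : Matrix (Fin n) (Fin n) F} (h : a * b = 1) :
    IsUnit a.det :=
  IsUnit.of_mul_eq_one b.det (by rw [← det_mul, h, det_one])

theorem IsBiinvariant.const_smul {h : Matrix (Fin n) (Fin n) F → ℝ} (hh : IsBiinvariant h) (r : ℝ) :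
    IsBiinvariant (r • h) :=
  ⟨fun b hb g => by simp [hh.left b hb], fun b hb g => by simp [hh.right b hb]⟩

theorem weightedRestrict_smul (s r : ℝ) (h : Matrix (Fin n) (Fin n) F → ℝ) :
    weightedRestrict s (r • h) = r • weightedRestrict s h := by
  ext σ
  change s ^ inversions n σ * (r * h _) = r * (s ^ inversions n σ * h _)
  ring

variable [Fintype F] [DecidableEq F]

theorem colShear_mem_borelSubgroup {k : Fin n} {y : Fin n → F} (hy : y ∈ initialVectors n F k) :
    colShear k y ∈ borelSubgroup n F := by
  rw [mem_initialVectors] at hy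
  refine ⟨fun i j hij => ?_, isUnit_det_of_mul_eq_one (colShear_mul_colShear_neg (hy k le_rfl))⟩
  have hij' : j < i := hij
  rw [colShear, Matrix.add_apply, one_apply_ne hij'.ne', vecMulVec_apply, zero_add]
  by_cases hjk : j = k
  · rw [hy i (by rw [← hjk]; exact hij'.le), zero_mul]
  · rw [Pi.single_eq_of_ne hjk, mul_zero]

theorem rowShear_mem_borelSubgroup {k : Fin n} {z : Fin n → F}
    (hz : z ∈ finalVectors n F (k + 1)) : rowShear k z ∈ borelSubgroup n F := by
  rw [mem_finalVectors] at hz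
  refine ⟨fun i j hij => ?_, isUnit_det_of_mul_eq_one (b := rowShear k (-z)) ?_⟩
  · have hij' : j < i := hij
    rw [rowShear, Matrix.add_apply, one_apply_ne hij'.ne', vecMulVec_apply, zero_add]
    by_cases hik : i = k
    · rw [hz j (by rw [← hik]; rw [Fin.lt_def] at hij'; omega), mul_zero]
    · rw [Pi.single_eq_of_ne hik, zero_mul]
  · rw [rowShear_mul_rowShear (hz k (by omega)), add_neg_cancel, rowShear_zero]

theorem hookSum_zero (hn : 0 < n) (h : Matrix (Fin n) (Fin n) F → ℝ) :
    hookSum ⟨0, hn⟩ h = h := by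
  ext g
  simp [hookSum, initialVectors_zero, rowShear_zero, colShear_zero]

theorem hookSum_spec {s : ℝ} (hs : s ^ 2 = Fintype.card F) {k : ℕ} (hk : k < n)
    {h : Matrix (Fin n) (Fin n) F → ℝ} (hh : IsBiinvariant h) :
    IsBiinvariant (hookSum ⟨k, hk⟩ h) ∧
      weightedRestrict s (hookSum ⟨k, hk⟩ h) = jmOp n s k (weightedRestrict s h) := by
  induction k generalizing h with
  | zero =>
    rw [hookSum_zero]
    exact ⟨hh, rfl⟩
  | succ k ih =>
    have hk' := Nat.lt_of_succ_lt hk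
    have hij : ((⟨k + 1, hk⟩ : Fin n) : ℕ) = (⟨k, hk'⟩ : Fin n) + 1 := rfl
    obtain ⟨h1, h2⟩ := ih hk' (hh.cosetOp hij)
    rw [hookSum_succ hij]
    refine ⟨(h1.cosetOp hij).const_smul _, ?_⟩
    rw [weightedRestrict_smul, weightedRestrict_cosetOp hs h1 hk, h2,
      weightedRestrict_cosetOp hs hh hk, jmOp_succ, hs]
    rfl

theorem hookSum_one (k : Fin n) (g : Matrix (Fin n) (Fin n) F) :
    hookSum k (fun _ => 1) g = (Fintype.card F : ℝ) ^ (k : ℕ) := by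
  have hq : (Fintype.card F : ℝ) ≠ 0 := by exact_mod_cast Fintype.card_ne_zero
  simp only [hookSum, Finset.sum_const, card_initialVectors k.isLt.le, nsmul_eq_mul, mul_one]
  push_cast
  field_simp

/-- The vectors with vanishing coordinate `k`. -/
def vanishingAt (F : Type*) [Field F] [Fintype F] [DecidableEq F] (k : Fin n) :
    Finset (Fin n → F) :=
  Finset.univ.filter fun a => a k = 0

theorem sum_vanishingAt {M : Type*} [AddCommMonoid M] (k : Fin n) (f : (Fin n → F) → M) :
    ∑ a ∈ vanishingAt F k, f a =
      ∑ z ∈ finalVectors n F (k + 1), ∑ x ∈ initialVectors n F k, f (z + x) := by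
  rw [← Finset.sum_product']
  refine Finset.sum_nbij'
    (fun a => (fun i => if k < i then a i else 0, fun i => if i < k then a i else 0))
    (fun p => p.1 + p.2) ?_ ?_ ?_ ?_ ?_
  · intro a _
    simp only [Finset.mem_product, mem_finalVectors, mem_initialVectors]
    refine ⟨fun i hi => if_neg ?_, fun i hi => if_neg ?_⟩
    · rw [Fin.lt_def]; omega
    · rw [Fin.lt_def]; omega
  · rintro ⟨z, x⟩ hzx
    simp only [Finset.mem_product, mem_finalVectors, mem_initialVectors] at hzx
    simp [vanishingAt, hzx.1 k (by omega), hzx.2 k le_rfl]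
  · intro a ha
    simp only [vanishingAt, Finset.mem_filter, Finset.mem_univ, true_and] at ha
    ext i
    rcases lt_trichotomy i k with h | h | h
    · simp [h, h.not_gt]
    · simp [h, ha]
    · simp [h, h.not_gt]
  · rintro ⟨z, x⟩ hzx
    simp only [Finset.mem_product, mem_finalVectors, mem_initialVectors] at hzx
    ext i
    · by_cases h : k < i
      · simp [h, hzx.2 i (by rw [Fin.lt_def] at h; omega)]
      · simp [h, hzx.1 i (by rw [Fin.lt_def] at h; omega)]
    · by_cases h : i < k
      · simp [h, hzx.1 i (by rw [Fin.lt_def] at h; omega)]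
      · simp [h, hzx.2 i (by rw [Fin.lt_def] at h; omega)]
  · intro a ha
    simp only [vanishingAt, Finset.mem_filter, Finset.mem_univ, true_and] at ha
    congr 1
    ext i
    rcases lt_trichotomy i k with h | h | h
    · simp [h, h.not_gt]
    · simp [h, ha]
    · simp [h, h.not_gt]

theorem sum_conj_rowShear_of_mem {h : Matrix (Fin n) (Fin n) F → ℝ} (hh : IsBiinvariant h)
    (k : Fin n) {y : Fin n → F} (hy : y ∈ initialVectors n F k) (g : Matrix (Fin n) (Fin n) F) :
    ∑ a ∈ vanishingAt F k, h (colShear k y * rowShear k a * colShear k (-y) * g) =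
      (Fintype.card F : ℝ) ^ (n - (k + 1)) *
        ∑ x ∈ initialVectors n F k, h (rowShear k x * colShear k (-y) * g) := by
  have h2 : ∀ z ∈ finalVectors n F (k + 1), ∑ x ∈ initialVectors n F k,
      h (colShear k y * rowShear k (z + x) * colShear k (-y) * g) =
      ∑ x ∈ initialVectors n F k, h (rowShear k x * colShear k (-y) * g) := by
    intro z hz
    refine Finset.sum_congr rfl fun x _ => ?_
    have hzk : z k = 0 := mem_finalVectors.mp hz k (Nat.lt_succ_self _)
    rw [← rowShear_mul_rowShear hzk, mul_assoc, mul_assoc, mul_assoc,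
      hh.left _ (colShear_mem_borelSubgroup hy), hh.left _ (rowShear_mem_borelSubgroup hz),
      mul_assoc]
  rw [sum_vanishingAt, Finset.sum_congr rfl h2, Finset.sum_const,
    card_finalVectors k.isLt, nsmul_eq_mul, Nat.cast_pow]

theorem neg_mem_initialVectors {k : ℕ} {y : Fin n → F} (hy : y ∈ initialVectors n F k) :
    -y ∈ initialVectors n F k := by
  rw [mem_initialVectors] at hy ⊢
  intro i hi
  rw [Pi.neg_apply, hy i hi, neg_zero]

theorem sum_conj_rowShear {h : Matrix (Fin n) (Fin n) F → ℝ} (hh : IsBiinvariant h) (k : Fin n)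
    (g : Matrix (Fin n) (Fin n) F) :
    ∑ y ∈ initialVectors n F k, ∑ a ∈ vanishingAt F k,
      h (colShear k y * rowShear k a * colShear k (-y) * g) =
        (Fintype.card F : ℝ) ^ (n - 1) * hookSum k h g := by
  have hq : (Fintype.card F : ℝ) ≠ 0 := by exact_mod_cast Fintype.card_ne_zero
  have hn : (Fintype.card F : ℝ) ^ (n - (k + 1)) =
      (Fintype.card F : ℝ) ^ (n - 1) * ((Fintype.card F : ℝ) ^ (k : ℕ))⁻¹ := by
    rw [eq_mul_inv_iff_mul_eq₀ (pow_ne_zero _ hq), ← pow_add]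
    congr 1
    omega
  have hneg : ∀ x, ∑ y ∈ initialVectors n F k, h (rowShear k x * colShear k (-y) * g) =
      ∑ y ∈ initialVectors n F k, h (rowShear k x * colShear k y * g) := fun x =>
    Finset.sum_nbij' (fun y => -y) (fun y => -y) (fun y hy => neg_mem_initialVectors hy)
      (fun y hy => neg_mem_initialVectors hy) (fun y _ => neg_neg y) (fun y _ => neg_neg y)
      fun y _ => rfl
  rw [Finset.sum_congr rfl fun y hy => sum_conj_rowShear_of_mem hh k hy g, ← Finset.mul_sum,
    Finset.sum_comm, Finset.sum_congr rfl fun x _ => hneg x, hn, mul_assoc]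
  rfl

end TransvectionSum

section TransvectionParametrization

open Equiv Matrix

variable {n : ℕ} {F : Type*} [Field F]

theorem exists_last_ne_zero {v : Fin n → F} (hv : v ≠ 0) :
    ∃ k, v k ≠ 0 ∧ ∀ i, k < i → v i = 0 := by
  classical
  obtain ⟨i, hi⟩ := Function.ne_iff.mp hv
  have hne : (Finset.univ.filter fun i => v i ≠ 0).Nonempty := ⟨i, by simpa using hi⟩
  refine ⟨_, (Finset.mem_filter.mp (Finset.max'_mem _ hne)).2, fun j hj => ?_⟩
  by_contra h
  exact (Finset.le_max' _ j (by simpa using h)).not_gt hj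

theorem vecMulVec_injective_of_normalized {v w a b : Fin n → F} {k l : Fin n} (hv : v k = 1)
    (hv' : ∀ i, k < i → v i = 0) (hw : w l = 1) (hw' : ∀ i, l < i → w i = 0) (ha : a ≠ 0)
    (hab : vecMulVec v a = vecMulVec w b) : k = l ∧ v = w ∧ a = b := by
  have h : ∀ i j, v i * a j = w i * b j := fun i j => by
    simpa [vecMulVec_apply] using congrFun (congrFun hab i) j
  obtain ⟨j, hj⟩ := Function.ne_iff.mp ha
  have hj' : a j ≠ 0 := hj
  have hkl : k = l := by
    rcases lt_trichotomy k l with hlt | heq | hgt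
    · have h1 := h l j
      have h2 := h k j
      rw [hv' l hlt, hw, zero_mul, one_mul] at h1
      rw [hv, ← h1, mul_zero, one_mul] at h2
      exact absurd h2 hj'
    · exact heq
    · have h2 := h k j
      rw [hv, hw' k hgt, zero_mul, one_mul] at h2
      exact absurd h2 hj'
  subst hkl
  have hab' : a = b := by
    ext i
    simpa [hv, hw] using h k i
  refine ⟨rfl, ?_, hab'⟩
  ext i
  have h3 := h i j
  rw [← hab'] at h3
  exact mul_right_cancel₀ hj' h3

variable [Fintype F] [DecidableEq F]

theorem mem_vanishingAt {k : Fin n} {a : Fin n → F} : a ∈ vanishingAt F k ↔ a k = 0 := by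
  simp [vanishingAt]

theorem conj_rowShear_mem_transvections {k : Fin n} {y a : Fin n → F}
    (hy : y ∈ initialVectors n F k) (ha : a ∈ (vanishingAt F k).erase 0) :
    colShear k y * rowShear k a * colShear k (-y) ∈ transvections n F := by
  rw [Finset.mem_erase, mem_vanishingAt] at ha
  have hyk := mem_initialVectors.mp hy k le_rfl
  refine ⟨_, _, ?_, ?_, ?_, conj_rowShear hyk a⟩
  · obtain ⟨i, hi⟩ := Function.ne_iff.mp ha.1
    refine Function.ne_iff.mpr ⟨i, ?_⟩
    have hik : i ≠ k := fun h => hi (by rw [h, ha.2]; rfl)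
    simpa [hik] using hi
  · refine Function.ne_iff.mpr ⟨k, ?_⟩
    simp [hyk]
  · change (a - (a ⬝ᵥ y) • Pi.single k 1) ⬝ᵥ (Pi.single k 1 + y) = 0
    simp [sub_dotProduct, hyk, ha.2]

theorem exists_conj_rowShear_eq {T : Matrix (Fin n) (Fin n) F} (hT : T ∈ transvections n F) :
    ∃ k : Fin n, ∃ y ∈ initialVectors n F k, ∃ a ∈ (vanishingAt F k).erase 0,
      colShear k y * rowShear k a * colShear k (-y) = T := by
  obtain ⟨a, v, ha, hv, hav, rfl⟩ := hT
  have hav' : a ⬝ᵥ v = 0 := hav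
  obtain ⟨k, hk, hk'⟩ := exists_last_ne_zero hv
  have hyk : ((v k)⁻¹ • v - Pi.single k 1 : Fin n → F) k = 0 := by simp [hk]
  have hsum : (v k • a - (v k * a k) • Pi.single k 1) ⬝ᵥ ((v k)⁻¹ • v - Pi.single k 1) =
      -(v k * a k) := by
    simp only [sub_dotProduct, dotProduct_sub, smul_dotProduct, dotProduct_smul, hav',
      single_dotProduct, dotProduct_single, Pi.sub_apply, Pi.smul_apply, Pi.single_eq_same,
      smul_eq_mul]
    field_simp
    ring
  have hrow : (v k • a - (v k * a k) • Pi.single k 1) -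
      (-(v k * a k)) • Pi.single k 1 = v k • a := by
    rw [neg_smul]; abel
  refine ⟨k, (v k)⁻¹ • v - Pi.single k 1, mem_initialVectors.mpr fun i hi => ?_,
    v k • a - (v k * a k) • Pi.single k 1, Finset.mem_erase.mpr ⟨fun h0 => ?_, ?_⟩, ?_⟩
  · by_cases hik : i = k
    · rw [hik, hyk]
    · have := hk' i (lt_of_le_of_ne hi (Ne.symm hik))
      simp [this, hik]
  · have h1 : v k * a k = 0 := by
      rw [h0, zero_dotProduct] at hsum
      exact neg_eq_zero.mp hsum.symm
    rw [h1, zero_smul, sub_zero, smul_eq_zero] at h0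
    exact h0.elim hk ha
  · rw [mem_vanishingAt]
    simp
  · rw [conj_rowShear hyk, hsum, hrow, add_sub_cancel, smul_vecMulVec, vecMulVec_smul, smul_smul,
      inv_mul_cancel₀ hk, one_smul]

theorem conj_rowShear_injective {k l : Fin n} {y z a b : Fin n → F}
    (hy : y ∈ initialVectors n F k) (hz : z ∈ initialVectors n F l)
    (ha : a ∈ (vanishingAt F k).erase 0) (hb : b ∈ (vanishingAt F l).erase 0)
    (h : colShear k y * rowShear k a * colShear k (-y) =
      colShear l z * rowShear l b * colShear l (-z)) : k = l ∧ y = z ∧ a = b := by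
  rw [mem_initialVectors] at hy hz
  rw [Finset.mem_erase, mem_vanishingAt] at ha hb
  rw [conj_rowShear (hy k le_rfl), conj_rowShear (hz l le_rfl), add_right_inj] at h
  have hne : a - (a ⬝ᵥ y) • Pi.single k 1 ≠ 0 := by
    obtain ⟨i, hi⟩ := Function.ne_iff.mp ha.1
    refine Function.ne_iff.mpr ⟨i, ?_⟩
    have hik : i ≠ k := fun h => hi (by rw [h, ha.2]; rfl)
    simpa [hik] using hi
  obtain ⟨h1, h2, h3⟩ := vecMulVec_injective_of_normalized (k := k) (l := l)
    (by simp [hy k le_rfl]) (fun i hi => by simp [hy i hi.le, hi.ne'])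
    (by simp [hz l le_rfl]) (fun i hi => by simp [hz i hi.le, hi.ne']) hne h
  subst h1
  refine ⟨rfl, add_left_cancel h2, ?_⟩
  ext i
  by_cases hik : i = k
  · rw [hik, ha.2, hb.2]
  · simpa [hik] using congrFun h3 i

theorem sum_transvections (f : Matrix (Fin n) (Fin n) F → ℝ) :
    ∑ T ∈ (Set.toFinite (transvections n F)).toFinset, f T =
      ∑ k : Fin n, ∑ y ∈ initialVectors n F k, ∑ a ∈ (vanishingAt F k).erase 0,
        f (colShear k y * rowShear k a * colShear k (-y)) := by
  simp_rw [← Finset.sum_product']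
  rw [Finset.sum_sigma']
  refine (Finset.sum_nbij (fun p : (_ : Fin n) × (Fin n → F) × (Fin n → F) => colShear p.1 p.2.1 * rowShear p.1 p.2.2 * colShear p.1 (-p.2.1))
    ?_ ?_ ?_ fun p _ => rfl).symm
  · rintro ⟨k, y, a⟩ h
    simp only [Finset.mem_sigma, Finset.mem_univ, true_and, Finset.mem_product] at h
    rw [Set.Finite.mem_toFinset]
    exact conj_rowShear_mem_transvections h.1 h.2
  · rintro ⟨k, y, a⟩ h ⟨l, z, b⟩ h' heq
    simp only [Finset.mem_coe, Finset.mem_sigma, Finset.mem_univ, true_and,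
      Finset.mem_product] at h h'
    obtain ⟨rfl, rfl, rfl⟩ := conj_rowShear_injective h.1 h'.1 h.2 h'.2 heq
    rfl
  · intro T hT
    rw [Finset.mem_coe, Set.Finite.mem_toFinset] at hT
    obtain ⟨k, y, hy, a, ha, rfl⟩ := exists_conj_rowShear_eq hT
    refine ⟨⟨k, y, a⟩, ?_, rfl⟩
    simp only [Finset.mem_coe, Finset.mem_sigma, Finset.mem_univ, true_and, Finset.mem_product]
    exact ⟨hy, ha⟩

theorem sum_transvections_mul {h : Matrix (Fin n) (Fin n) F → ℝ} (hh : IsBiinvariant h)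
    (g : Matrix (Fin n) (Fin n) F) :
    ∑ T ∈ (Set.toFinite (transvections n F)).toFinset, h (T * g) =
      (Fintype.card F : ℝ) ^ (n - 1) * ∑ k, hookSum k h g -
        (∑ k ∈ Finset.range n, (Fintype.card F : ℝ) ^ k) * h g := by
  rw [sum_transvections fun T => h (T * g), eq_sub_iff_add_eq, Finset.mul_sum, Finset.sum_mul,
    ← Fin.sum_univ_eq_sum_range fun k => (Fintype.card F : ℝ) ^ k * h g, ← Finset.sum_add_distrib]
  refine Finset.sum_congr rfl fun k _ => ?_
  rw [← sum_conj_rowShear hh, ← Nat.cast_pow, ← card_initialVectors (F := F) k.isLt.le,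
    ← nsmul_eq_mul, ← Finset.sum_const, ← Finset.sum_add_distrib]
  refine Finset.sum_congr rfl fun y hy => ?_
  have hyk := mem_initialVectors.mp hy k le_rfl
  rw [← Finset.sum_erase_add _ _ (mem_vanishingAt.mpr (Pi.zero_apply k)), rowShear_zero, mul_one,
    colShear_mul_colShear_neg hyk, one_mul]

end TransvectionParametrization

section ChainOperator

open Equiv Matrix

variable {n : ℕ} {F : Type*} [Field F]

theorem eq_of_permMatrix_mem_bruhatCell {σ τ : Perm (Fin n)}
    (h : σ.permMatrix F ∈ bruhatCell n F τ) : σ = τ := by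
  obtain ⟨b₁, hb₁, b₂, hb₂, heq⟩ := h
  have h1 : b₁⁻¹ * σ.permMatrix F = τ.permMatrix F * b₂ := by
    rw [heq, mul_assoc, nonsing_inv_mul_cancel_left _ _ hb₁.2]
  have hle : ∀ i, τ i ≤ σ i := fun i => by
    have h2 := congrFun (congrFun h1 i) (σ i)
    rw [mul_permMatrix_apply, permMatrix_mul_apply, symm_apply_apply] at h2
    by_contra! hlt
    exact diag_ne_zero_of_mem_borelSubgroup (inv_mem_borelSubgroup hb₁) i (h2.trans (hb₂.1 hlt))
  have hsum : ∑ i, (τ i : ℕ) = ∑ i, (σ i : ℕ) := by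
    rw [Equiv.sum_comp τ fun i : Fin n => (i : ℕ), Equiv.sum_comp σ fun i : Fin n => (i : ℕ)]
  have heq := (Finset.sum_eq_sum_iff_of_le fun i _ => Fin.le_def.mp (hle i)).mp hsum
  exact Equiv.ext fun i => (Fin.ext (heq i (Finset.mem_univ i))).symm

theorem mul_mem_bruhatCell_iff {b g : Matrix (Fin n) (Fin n) F} (hb : b ∈ borelSubgroup n F)
    {τ : Perm (Fin n)} : b * g ∈ bruhatCell n F τ ↔ g ∈ bruhatCell n F τ := by
  constructor
  · rintro ⟨b₁, hb₁, b₂, hb₂, heq⟩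
    refine ⟨b⁻¹ * b₁, mul_mem_borelSubgroup (inv_mem_borelSubgroup hb) hb₁, b₂, hb₂, ?_⟩
    rw [mul_assoc, mul_assoc, ← mul_assoc b₁, ← heq, nonsing_inv_mul_cancel_left _ _ hb.2]
  · rintro ⟨b₁, hb₁, b₂, hb₂, rfl⟩
    exact ⟨b * b₁, mul_mem_borelSubgroup hb hb₁, b₂, hb₂, by simp only [mul_assoc]⟩

theorem mul_mem_bruhatCell_iff' {b g : Matrix (Fin n) (Fin n) F} (hb : b ∈ borelSubgroup n F)
    {τ : Perm (Fin n)} : g * b ∈ bruhatCell n F τ ↔ g ∈ bruhatCell n F τ := by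
  constructor
  · rintro ⟨b₁, hb₁, b₂, hb₂, heq⟩
    refine ⟨b₁, hb₁, b₂ * b⁻¹, mul_mem_borelSubgroup hb₂ (inv_mem_borelSubgroup hb), ?_⟩
    rw [← mul_assoc, ← heq, mul_nonsing_inv_cancel_right _ _ hb.2]
  · rintro ⟨b₁, hb₁, b₂, hb₂, rfl⟩
    exact ⟨b₁, hb₁, b₂ * b, mul_mem_borelSubgroup hb₂ hb, by simp only [mul_assoc]⟩

open Classical in
/-- The extension of a function on permutations that is constant on Bruhat cells. -/
noncomputable def cellExtension (F : Type*) [Field F] (f : Perm (Fin n) → ℝ) :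
    Matrix (Fin n) (Fin n) F → ℝ :=
  fun g => ∑ τ : Perm (Fin n), if g ∈ bruhatCell n F τ then f τ else 0

theorem isBiinvariant_cellExtension (f : Perm (Fin n) → ℝ) :
    IsBiinvariant (cellExtension F f) := by
  classical
  exact ⟨fun _ hb _ => Finset.sum_congr rfl fun _ _ => if_congr (mul_mem_bruhatCell_iff hb) rfl rfl,
    fun _ hb _ => Finset.sum_congr rfl fun _ _ => if_congr (mul_mem_bruhatCell_iff' hb) rfl rfl⟩

theorem permMatrix_mem_bruhatCell (σ : Perm (Fin n)) : σ.permMatrix F ∈ bruhatCell n F σ :=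
  ⟨1, one_mem_borelSubgroup, 1, one_mem_borelSubgroup, by rw [one_mul, mul_one]⟩

theorem cellExtension_permMatrix (f : Perm (Fin n) → ℝ) (σ : Perm (Fin n)) :
    cellExtension F f (σ.permMatrix F) = f σ := by
  rw [cellExtension, Finset.sum_eq_single σ, if_pos (permMatrix_mem_bruhatCell σ)]
  · intro τ _ hτ
    exact if_neg fun h => hτ (eq_of_permMatrix_mem_bruhatCell h).symm
  · exact fun h => absurd (Finset.mem_univ σ) h

theorem isBiinvariant_one : IsBiinvariant fun _ : Matrix (Fin n) (Fin n) F => (1 : ℝ) :=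
  ⟨fun _ _ _ => rfl, fun _ _ _ => rfl⟩

variable [Fintype F]

theorem card_transvections :
    (Nat.card (transvections n F) : ℝ) = ((Fintype.card F : ℝ) ^ (n - 1) - 1) *
      ∑ k ∈ Finset.range n, (Fintype.card F : ℝ) ^ k := by
  classical
  have h := sum_transvections_mul (n := n) (F := F) isBiinvariant_one 1
  simp only [Finset.sum_const, nsmul_eq_mul, mul_one, hookSum_one,
    Fin.sum_univ_eq_sum_range fun k => (Fintype.card F : ℝ) ^ k] at h
  rw [← Set.ncard_eq_toFinset_card] at h
  rw [sub_mul, one_mul, ← h]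
  rfl

/-- The symmetric operator conjugate to the lumped transvection chain over a field with `s ^ 2`
elements. -/
noncomputable def chainOp (n : ℕ) (s : ℝ) : Module.End ℝ (EuclideanSpace ℝ (Perm (Fin n))) :=
  (((s ^ 2) ^ (n - 1) - 1) * ∑ k ∈ Finset.range n, (s ^ 2) ^ k)⁻¹ •
    ((s ^ 2) ^ (n - 1) • ∑ k : Fin n, jmOp n s k - (∑ k ∈ Finset.range n, (s ^ 2) ^ k) • 1)

theorem chainOp_weightedRestrict {s : ℝ} (hs : s ^ 2 = Fintype.card F)
    {h : Matrix (Fin n) (Fin n) F → ℝ} (hh : IsBiinvariant h) (σ : Perm (Fin n)) :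
    chainOp n s (weightedRestrict s h) σ = s ^ inversions n σ *
      ((∑ T ∈ (Set.toFinite (transvections n F)).toFinset, h (T * σ.permMatrix F)) /
        Nat.card (transvections n F)) := by
  classical
  have h1 : ∀ k : Fin n, jmOp n s k (weightedRestrict s h) σ =
      s ^ inversions n σ * hookSum k h (σ.permMatrix F) := fun k => by
    rw [← (hookSum_spec hs k.isLt hh).2]
    rfl
  have h2 : weightedRestrict s h σ = s ^ inversions n σ * h (σ.permMatrix F) := rfl
  rw [sum_transvections_mul hh, card_transvections, chainOp]
  simp only [LinearMap.smul_apply, LinearMap.sub_apply, LinearMap.sum_apply, Module.End.one_apply,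
    PiLp.smul_apply, PiLp.sub_apply, WithLp.ofLp_sum, Finset.sum_apply, h1, h2, smul_eq_mul, hs,
    ← Finset.mul_sum]
  ring

theorem sum_transChain_mul (f : Perm (Fin n) → ℝ) (σ : Perm (Fin n)) :
    ∑ τ, transChain n F σ τ * f τ =
      (∑ T ∈ (Set.toFinite (transvections n F)).toFinset, cellExtension F f (T * σ.permMatrix F)) /
        Nat.card (transvections n F) := by
  classical
  simp only [cellExtension]
  rw [Finset.sum_comm, Finset.sum_div]
  refine Finset.sum_congr rfl fun τ _ => ?_
  rw [transChain, of_apply, div_mul_eq_mul_div, ← Finset.sum_filter, Finset.sum_const,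
    nsmul_eq_mul, ← Set.ncard_coe_finset, ← Nat.card_coe_set_eq, Finset.coe_filter]
  simp only [Set.Finite.mem_toFinset]

theorem chainOp_apply {s : ℝ} (hs : s ^ 2 = Fintype.card F) (f : Perm (Fin n) → ℝ)
    (σ : Perm (Fin n)) :
    chainOp n s (WithLp.toLp 2 fun τ => s ^ inversions n τ * f τ) σ =
      s ^ inversions n σ * ∑ τ, transChain n F σ τ * f τ := by
  rw [sum_transChain_mul, ← chainOp_weightedRestrict hs (isBiinvariant_cellExtension f),
    weightedRestrict]
  simp only [cellExtension_permMatrix]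

theorem chainOp_weight {s : ℝ} (hs : s ^ 2 = Fintype.card F) (hn : 2 ≤ n) :
    chainOp n s (WithLp.toLp 2 fun τ => s ^ inversions n τ) =
      WithLp.toLp 2 fun τ => s ^ inversions n τ := by
  have hq : (2 : ℝ) ≤ Fintype.card F := by exact_mod_cast Fintype.one_lt_card (α := F)
  have hcard : (Nat.card (transvections n F) : ℝ) ≠ 0 := by
    rw [card_transvections]
    have h1 : 1 < (Fintype.card F : ℝ) ^ (n - 1) := one_lt_pow₀ (by linarith) (by omega)
    have h2 : 0 < ∑ k ∈ Finset.range n, (Fintype.card F : ℝ) ^ k :=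
      Finset.sum_pos (fun k _ => by positivity) ⟨0, Finset.mem_range.mpr (by omega)⟩
    exact (mul_pos (by linarith) h2).ne'
  ext σ
  have h := chainOp_weightedRestrict hs (isBiinvariant_one (F := F)) σ
  simp only [weightedRestrict, mul_one, Finset.sum_const, nsmul_eq_mul,
    ← Set.ncard_eq_toFinset_card] at h
  rw [h, ← Nat.card_coe_set_eq, div_self hcard, mul_one]

theorem chainOp_isSymmetric (n : ℕ) (s : ℝ) : (chainOp n s).IsSymmetric := by
  refine LinearMap.IsSymmetric.smul (by simp) (LinearMap.IsSymmetric.sub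
    (LinearMap.IsSymmetric.smul (by simp) ?_) (LinearMap.IsSymmetric.smul (by simp) .one))
  refine Finset.sum_induction _ LinearMap.IsSymmetric (fun _ _ => .add) .zero fun k _ =>
    jmOp_isSymmetric s k

end ChainOperator

section Inversions

open Equiv

variable {n : ℕ}

/-- The permutation sending `0` to `i` and following `σ` on the remaining points. -/
def insertZero (i : Fin (n + 1)) (σ : Perm (Fin n)) : Perm (Fin (n + 1)) :=
  i.cycleRange.symm * Perm.decomposeFin.symm (0, σ)

theorem insertZero_zero (i : Fin (n + 1)) (σ : Perm (Fin n)) : insertZero i σ 0 = i := by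
  simp [insertZero]

theorem insertZero_succ (i : Fin (n + 1)) (σ : Perm (Fin n)) (k : Fin n) :
    insertZero i σ k.succ = i.succAbove (σ k) := by
  simp [insertZero]

theorem insertZero_bijective :
    Function.Bijective fun p : Fin (n + 1) × Perm (Fin n) => insertZero p.1 p.2 := by
  rw [Fintype.bijective_iff_injective_and_card]
  constructor
  · rintro ⟨i, σ⟩ ⟨j, τ⟩ h
    have h' : insertZero i σ = insertZero j τ := h
    obtain rfl : i = j := by rw [← insertZero_zero i σ, h', insertZero_zero]
    have h2 : σ = τ := Equiv.ext fun k => i.succAbove_right_injective (by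
      rw [← insertZero_succ, h', insertZero_succ])
    rw [h2]
  · simp [Fintype.card_perm, Nat.factorial_succ]

theorem inversions_eq_sum (ω : Perm (Fin n)) :
    inversions n ω = ∑ a, ∑ b, if a < b ∧ ω b < ω a then 1 else 0 := by
  rw [inversions, Finset.card_filter, Fintype.sum_prod_type]

theorem inversions_insertZero (i : Fin (n + 1)) (σ : Perm (Fin n)) :
    inversions (n + 1) (insertZero i σ) = i + inversions n σ := by
  have h : (∑ k : Fin n, if (σ k).castSucc < i then 1 else 0) = (i : ℕ) := by
    rw [Equiv.sum_comp σ fun k : Fin n => if k.castSucc < i then 1 else 0, ← Finset.card_filter]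
    simp only [Fin.lt_def, Fin.val_castSucc]
    rw [Fin.card_filter_val_lt, min_eq_right (by omega)]
  rw [inversions_eq_sum, inversions_eq_sum, Fin.sum_univ_succ, Fin.sum_univ_succ]
  simp only [Fin.sum_univ_succ (n := n), insertZero_zero, insertZero_succ,
    Fin.succAbove_lt_iff_castSucc_lt, Fin.succ_pos, Fin.not_lt_zero, false_and, if_false, true_and,
    lt_irrefl, zero_add, Fin.succ_lt_succ_iff, Fin.succAbove_lt_succAbove_iff, h]

theorem sum_pow_inversions (q n : ℕ) :
    ∑ σ : Perm (Fin n), q ^ inversions n σ = qFactorial q n := by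
  induction n with
  | zero => simp [qFactorial, inversions]
  | succ n ih =>
    rw [← insertZero_bijective.sum_comp fun σ => q ^ inversions (n + 1) σ, Fintype.sum_prod_type]
    simp only [inversions_insertZero, pow_add, ← Finset.mul_sum, ih]
    rw [← Finset.sum_mul, Fin.sum_univ_eq_sum_range fun k => q ^ k, qFactorial, qFactorial,
      Finset.prod_range_succ, mul_comm]

theorem sum_mallows {q : ℕ} (hq : 0 < q) (n : ℕ) : ∑ σ, mallows q n σ = 1 := by
  have h : (qFactorial q n : ℝ) ≠ 0 := by
    rw [← sum_pow_inversions]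
    exact_mod_cast (Finset.sum_pos (fun σ _ => by positivity) Finset.univ_nonempty).ne'
  simp only [mallows]
  rw [← Finset.sum_div, div_eq_one_iff_eq h, ← sum_pow_inversions]
  push_cast
  rfl

end Inversions

section SpectralSum

open Equiv

variable {n : ℕ}

theorem jmOp_sum_apply_of_mem {s : ℝ} {w : Fin n → ℝ} {v : EuclideanSpace ℝ (Perm (Fin n))}
    (hv : v ∈ jmSpace n s w) : (∑ k : Fin n, jmOp n s k) v = (∑ k, w k) • v := by
  rw [LinearMap.sum_apply, Finset.sum_smul]
  exact Finset.sum_congr rfl fun k _ => mem_jmSpace.mp hv k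

theorem chainOp_apply_of_mem {s : ℝ} {w : Fin n → ℝ} {v : EuclideanSpace ℝ (Perm (Fin n))}
    (hv : v ∈ jmSpace n s w) :
    chainOp n s v = chainEigenvalue (s ^ 2) n (∑ k, w k) • v := by
  rw [chainOp, LinearMap.smul_apply, LinearMap.sub_apply, LinearMap.smul_apply,
    LinearMap.smul_apply, jmOp_sum_apply_of_mem hv, Module.End.one_apply, smul_smul, ← sub_smul,
    smul_smul, chainEigenvalue, div_eq_inv_mul]

theorem chainOp_pow_apply_of_mem {s : ℝ} {w : Fin n → ℝ} {v : EuclideanSpace ℝ (Perm (Fin n))}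
    (hv : v ∈ jmSpace n s w) (N : ℕ) :
    (chainOp n s ^ N) v = chainEigenvalue (s ^ 2) n (∑ k, w k) ^ N • v := by
  induction N with
  | zero => simp
  | succ N ih =>
    rw [pow_succ', Module.End.mul_apply, ih, map_smul, chainOp_apply_of_mem hv, smul_smul, ← pow_succ]

theorem trace_chainOp_pow {s : ℝ} (hs : 1 < s) (N : ℕ) :
    ∃ S : Finset (Fin n → ℤ), (∀ c ∈ S, contentSpace n s c ≠ ⊥) ∧
      LinearMap.trace ℝ _ (chainOp n s ^ N) = ∑ c ∈ S,
        Module.finrank ℝ (contentSpace n s c) *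
          chainEigenvalue (s ^ 2) n (∑ k, (s ^ 2) ^ c k) ^ N := by
  classical
  have hint := LinearMap.IsSymmetric.directSum_isInternal_of_pairwise_commute
    (T := fun k : Fin n => jmOp n s k) (fun k => jmOp_isSymmetric s k)
    fun i j _ => jmOp_commute s i j
  have hfin : {w | jmSpace n s w ≠ ⊥}.Finite :=
    WellFoundedGT.finite_ne_bot_of_iSupIndep (jmSpace_iSupIndep n s)
  have hfin' : {c | contentSpace n s c ≠ ⊥}.Finite :=
    WellFoundedGT.finite_ne_bot_of_iSupIndep (contentSpace_iSupIndep hs)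
  have hmaps : ∀ w, Set.MapsTo (chainOp n s ^ N) (jmSpace n s w) (jmSpace n s w) := fun w v hv => by
    rw [SetLike.mem_coe, chainOp_pow_apply_of_mem hv]
    exact Submodule.smul_mem _ _ hv
  have htr : ∀ w, LinearMap.trace ℝ _ ((chainOp n s ^ N).restrict (hmaps w)) =
      Module.finrank ℝ (jmSpace n s w) * chainEigenvalue (s ^ 2) n (∑ k, w k) ^ N := fun w => by
    have : (chainOp n s ^ N).restrict (hmaps w) =
        chainEigenvalue (s ^ 2) n (∑ k, w k) ^ N • LinearMap.id := by
      ext1 v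
      exact Subtype.ext (chainOp_pow_apply_of_mem v.2 N)
    rw [this, map_smul, LinearMap.trace_id, smul_eq_mul, mul_comm]
  refine ⟨hfin'.toFinset, fun c hc => hfin'.mem_toFinset.mp hc, ?_⟩
  rw [LinearMap.trace_eq_sum_trace_restrict' hint hfin hmaps]
  refine (Finset.sum_nbij (fun c k => (s ^ 2) ^ c k) ?_ ?_ ?_ ?_).symm
  · intro c hc
    exact hfin.mem_toFinset.mpr (hfin'.mem_toFinset.mp hc)
  · intro c _ c' _ h
    funext k
    exact zpow_right_injective₀ (by positivity) (by nlinarith : s ^ 2 ≠ 1) (congrFun h k)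
  · intro w hw
    obtain ⟨c, rfl⟩ := exists_eq_zpow_of_jmSpace_ne_bot hs (hfin.mem_toFinset.mp hw)
    exact ⟨c, hfin'.mem_toFinset.mpr (hfin.mem_toFinset.mp hw), rfl⟩
  · intro c _
    exact (htr _).symm

theorem finrank_mul_chainEigenvalue_le {s : ℝ} (hs : 1 < s) (hq : 2 ≤ s ^ 2) (hn : 2 ≤ n)
    (hlog : Real.log (s ^ 2) > 6 / n) {b : ℝ} {ℓ : ℕ}
    (hℓ : (ℓ : ℝ) ≥ (Real.log n + b) / (Real.log (s ^ 2) - 6 / n))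
    {S : Finset (Fin n → ℤ)} (hS : ∀ c ∈ S, contentSpace n s c ≠ ⊥) {m j : ℕ} (hm : 1 ≤ m)
    (hmj : m + j = n) :
    ∑ c ∈ S with (firstOcc c).card = m, (Module.finrank ℝ (contentSpace n s c) : ℝ) *
        chainEigenvalue (s ^ 2) n (∑ k, (s ^ 2) ^ c k) ^ (2 * ℓ) ≤
      Real.exp (-2 * b) ^ j / j.factorial := by
  have hval : ∀ c ∈ S.filter (fun c => (firstOcc c).card = m),
      chainEigenvalue (s ^ 2) n (∑ k, (s ^ 2) ^ c k) ^ (2 * ℓ) ≤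
        Real.exp (-2 * b) ^ j / (n : ℝ) ^ (2 * j) := by
    intro c hc
    obtain ⟨hcS, hcm⟩ := Finset.mem_filter.mp hc
    have h := hS c hcS
    have hsum : ∑ k, (s ^ 2) ^ c k =
        ∑ k ∈ Finset.range m, (s ^ 2) ^ k + ∑ i ∈ (firstOcc c)ᶜ, (s ^ 2) ^ c i := by
      rw [← Finset.sum_add_sum_compl (firstOcc c), sum_firstOcc hs h, hcm]
    have hcard : (firstOcc c)ᶜ.card = j := by
      rw [Finset.card_compl, Fintype.card_fin]
      omega
    rcases Nat.eq_zero_or_pos j with rfl | hj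
    · have hmn : m = n := by omega
      rw [hsum, Finset.card_eq_zero.mp hcard, Finset.sum_empty, add_zero, hmn,
        chainEigenvalue_geom hq hn]
      simp
    · refine chainEigenvalue_pow_le hq hn hmj hj hm (Finset.sum_nonneg fun k _ => by positivity)
        ?_ hlog hℓ
      have := sum_extras_le hs h
      rw [hcm, hcard] at this
      rw [hsum]
      linarith
  have hdim := sum_finrank_card_firstOcc_le hs S hS m
  rw [show n - m = j by omega] at hdim
  have hn0 : (0 : ℝ) < n := by exact_mod_cast (by omega : 0 < n)
  calc _ ≤ ∑ c ∈ S with (firstOcc c).card = m, (Module.finrank ℝ (contentSpace n s c) : ℝ) *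
        (Real.exp (-2 * b) ^ j / (n : ℝ) ^ (2 * j)) :=
        Finset.sum_le_sum fun c hc => mul_le_mul_of_nonneg_left (hval c hc) (by positivity)
    _ ≤ (n : ℝ) ^ (2 * j) / j.factorial * (Real.exp (-2 * b) ^ j / (n : ℝ) ^ (2 * j)) := by
        rw [← Finset.sum_mul]
        refine mul_le_mul_of_nonneg_right ?_ (by positivity)
        refine le_trans ?_ (choose_mul_descFactorial_le hmj)
        exact_mod_cast hdim
    _ = _ := by
        field_simp

theorem trace_chainOp_pow_le {s : ℝ} (hs : 1 < s) (hq : 2 ≤ s ^ 2) (hn : 2 ≤ n)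
    (hlog : Real.log (s ^ 2) > 6 / n) {b : ℝ} {ℓ : ℕ}
    (hℓ : (ℓ : ℝ) ≥ (Real.log n + b) / (Real.log (s ^ 2) - 6 / n)) :
    LinearMap.trace ℝ _ (chainOp n s ^ (2 * ℓ)) ≤ Real.exp (Real.exp (-2 * b)) := by
  obtain ⟨S, hS, htr⟩ := trace_chainOp_pow (n := n) hs (2 * ℓ)
  have hmaps : ∀ c ∈ S, n - (firstOcc c).card ∈ Finset.range n := fun c hc => by
    have := card_firstOcc_pos hs (hS c hc) (by omega)
    exact Finset.mem_range.mpr (by omega)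
  rw [htr, ← Finset.sum_fiberwise_of_maps_to hmaps]
  refine le_trans (Finset.sum_le_sum fun j hj => ?_)
    (Real.sum_le_exp_of_nonneg (Real.exp_nonneg _) n)
  have hj := Finset.mem_range.mp hj
  refine le_trans (le_of_eq ?_) (finrank_mul_chainEigenvalue_le hs hq hn hlog hℓ hS
    (m := n - j) (j := j) (by omega) (by omega))
  refine Finset.sum_congr (Finset.filter_congr fun c _ => ?_) fun _ _ => rfl
  have := (Finset.card_le_univ (firstOcc c)).trans_eq (Fintype.card_fin n)
  omega

variable {F : Type*} [Field F] [Fintype F]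

theorem chainOp_pow_apply {s : ℝ} (hs : s ^ 2 = Fintype.card F) (N : ℕ) (f : Perm (Fin n) → ℝ) :
    (chainOp n s ^ N) (WithLp.toLp 2 fun τ => s ^ inversions n τ * f τ) =
      WithLp.toLp 2 fun σ => s ^ inversions n σ * ((transChain n F ^ N).mulVec f) σ := by
  induction N with
  | zero => simp
  | succ N ih =>
    rw [pow_succ', Module.End.mul_apply, ih, pow_succ', ← Matrix.mulVec_mulVec]
    ext σ
    exact chainOp_apply hs _ σ

theorem transChain_pow_mulVec_one (hn : 2 ≤ n) (N : ℕ) : (transChain n F ^ N).mulVec 1 = 1 := by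
  have hq : (0 : ℝ) < Fintype.card F := by exact_mod_cast Fintype.card_pos
  have hs : √(Fintype.card F : ℝ) ^ 2 = Fintype.card F := Real.sq_sqrt hq.le
  have h1 : (transChain n F).mulVec 1 = 1 := by
    funext σ
    have h := chainOp_apply hs (fun _ => 1) σ
    simp only [mul_one] at h
    rw [chainOp_weight hs hn] at h
    have hpos : 0 < √(Fintype.card F : ℝ) ^ inversions n σ := pow_pos (Real.sqrt_pos.mpr hq) _
    have := mul_left_cancel₀ hpos.ne' ((mul_one _).trans h)
    simp only [Matrix.mulVec, dotProduct, Pi.one_apply, mul_one]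
    exact this.symm
  induction N with
  | zero => simp
  | succ N ih => rw [pow_succ, ← Matrix.mulVec_mulVec, h1, ih]

theorem mallows_pos (σ : Perm (Fin n)) : 0 < mallows (Fintype.card F) n σ := by
  have hq : 0 < Fintype.card F := Fintype.card_pos
  refine div_pos (by positivity) (Nat.cast_pos.mpr ?_)
  refine Finset.prod_pos fun k _ => Finset.sum_pos (fun i _ => by positivity) ⟨0, by simp⟩

theorem trace_eq_sum_transChain_pow {s : ℝ} (hs : s ^ 2 = Fintype.card F) (ℓ : ℕ) :
    LinearMap.trace ℝ _ (chainOp n s ^ (2 * ℓ)) = ∑ x, ∑ y,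
      mallows (Fintype.card F) n y * (transChain n F ^ ℓ) y x ^ 2 /
        mallows (Fintype.card F) n x := by
  have hq : (0 : ℝ) < Fintype.card F := by exact_mod_cast Fintype.card_pos
  have hs0 : s ≠ 0 := by
    rintro rfl
    rw [zero_pow two_ne_zero] at hs
    exact hq.ne hs
  have hsymm : (chainOp n s ^ ℓ).IsSymmetric := (chainOp_isSymmetric n s).pow ℓ
  rw [LinearMap.trace_eq_sum_inner _ (EuclideanSpace.basisFun (Perm (Fin n)) ℝ)]
  refine Finset.sum_congr rfl fun x _ => ?_
  have hbasis : EuclideanSpace.basisFun (Perm (Fin n)) ℝ x =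
      WithLp.toLp 2 fun τ => s ^ inversions n τ *
        (Pi.single x (s ^ inversions n x)⁻¹ : Perm (Fin n) → ℝ) τ := by
    ext τ
    by_cases h : τ = x
    · subst h
      simp [hs0]
    · simp [h]
  rw [two_mul, pow_add, Module.End.mul_apply, ← hsymm, real_inner_self_eq_norm_sq, hbasis,
    chainOp_pow_apply hs, EuclideanSpace.norm_sq_eq]
  refine Finset.sum_congr rfl fun y _ => ?_
  have hfac : (qFactorial (Fintype.card F) n : ℝ) ≠ 0 := by
    intro h
    have := mallows_pos (F := F) x
    rw [mallows, h, div_zero] at this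
    exact lt_irrefl _ this
  rw [mallows, mallows, ← hs, Matrix.mulVec_single, Real.norm_eq_abs, sq_abs]
  simp only [Pi.smul_apply, Matrix.col_apply, MulOpposite.smul_eq_mul_unop, MulOpposite.unop_op]
  field_simp
  ring

theorem sum_mallows_mul_chiSq (hn : 2 ≤ n) {s : ℝ} (hs : s ^ 2 = Fintype.card F) (ℓ : ℕ) :
    ∑ x, mallows (Fintype.card F) n x * chiSq n F ℓ x =
      LinearMap.trace ℝ _ (chainOp n s ^ (2 * ℓ)) - 1 := by
  have hmass := sum_mallows (q := Fintype.card F) Fintype.card_pos n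
  have hrow : ∀ x, ∑ y, (transChain n F ^ ℓ) x y = 1 := fun x => by
    have := congrFun (transChain_pow_mulVec_one (F := F) hn ℓ) x
    simpa [Matrix.mulVec, dotProduct] using this
  have hchi : ∀ x, mallows (Fintype.card F) n x * chiSq n F ℓ x =
      ∑ y, mallows (Fintype.card F) n x * (transChain n F ^ ℓ) x y ^ 2 /
        mallows (Fintype.card F) n y - mallows (Fintype.card F) n x := fun x => by
    have : chiSq n F ℓ x = ∑ y, (transChain n F ^ ℓ) x y ^ 2 / mallows (Fintype.card F) n y
        - 2 * ∑ y, (transChain n F ^ ℓ) x y + ∑ y, mallows (Fintype.card F) n y := by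
      rw [chiSq, Finset.mul_sum, ← Finset.sum_sub_distrib, ← Finset.sum_add_distrib]
      refine Finset.sum_congr rfl fun y _ => ?_
      have := (mallows_pos (F := F) y).ne'
      field_simp
      ring
    rw [this, hrow, hmass]
    simp only [mul_div_assoc, ← Finset.mul_sum]
    ring
  rw [Finset.sum_congr rfl fun x _ => hchi x, Finset.sum_sub_distrib, hmass,
    trace_eq_sum_transChain_pow hs, Finset.sum_comm]

end SpectralSum

end TransvectionChain

/-- If `log q > 6/n`, `c > 0` and `ℓ ≥ (log n + c)/(log q − 6/n)`, then
the lumped transvection chain on `S_n` satisfies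
`∑_x π_q(x) χ²_x(ℓ) ≤ (e^{e^{−c}} − 1) + e^{−2c}`. -/
theorem average_chiSq_upper_bound
    (F : Type*) [Field F] [Fintype F] (n : ℕ) (hn : 2 ≤ n)
    (hlog : Real.log (Fintype.card F) > 6 / n)
    (c : ℝ) (hc : 0 < c) (ℓ : ℕ)
    (hℓ : (ℓ : ℝ) ≥ (Real.log n + c) / (Real.log (Fintype.card F) - 6 / n)) :
    ∑ x : Equiv.Perm (Fin n), mallows (Fintype.card F) n x * chiSq n F ℓ x
      ≤ (Real.exp (Real.exp (-c)) - 1) + Real.exp (-2 * c) := by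
  have hq : (2 : ℝ) ≤ Fintype.card F := by exact_mod_cast Fintype.one_lt_card (α := F)
  have hs : √(Fintype.card F : ℝ) ^ 2 = Fintype.card F := Real.sq_sqrt (by linarith)
  have hs1 : 1 < √(Fintype.card F : ℝ) := by
    rw [Real.lt_sqrt zero_le_one]
    linarith
  rw [TransvectionChain.sum_mallows_mul_chiSq hn hs]
  rw [← hs] at hq hlog hℓ
  have htrace := TransvectionChain.trace_chainOp_pow_le hs1 hq hn hlog hℓ
  have hexp : Real.exp (Real.exp (-2 * c)) ≤ Real.exp (Real.exp (-c)) :=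
    Real.exp_le_exp.mpr (Real.exp_le_exp.mpr (by linarith))
  have := Real.exp_pos (-2 * c)
  linarith
end
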